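/- arXiv:1112.2334 — 9 statements merged into one kernel-verified Lean document; each statement's English description precedes it below -/
import Mathlib

section
/- Let d ≥ 2, k ≥ 1 and ℓ : Fin k → ℝ with ℓ i > 0 for all i, and let φ be the work map of the open k-chain. If u ∈ (S^{d-1})^k is not aligned, then φ is a submersion at u: the image of the manifold derivative (mfderiv) of φ at u is the whole tangent space EuclideanSpace ℝ (Fin d). -/
open scoped Manifold BigOperators
open Metric

theorem aux_single {k : ℕ} {E F : Type*} [NormedAddCommGroup E] [NormedSpace ℝ E]
    [NormedAddCommGroup F] [NormedSpace ℝ F] (ℓ : Fin k → ℝ) (hℓ : ∀ i, 0 < ℓ i)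
    (A : Fin k → E →L[ℝ] F) (i : Fin k) (x : E) :
    (∑ j, ℓ j • (A j).comp (ContinuousLinearMap.proj (R := ℝ) (φ := fun _ : Fin k => E) j))
      (Pi.single i ((ℓ i)⁻¹ • x)) = A i x := by
  simp only [sum_apply, smul_apply, ContinuousLinearMap.comp_apply, ContinuousLinearMap.proj_apply]
  rw [Finset.sum_eq_single i]
  · rw [Pi.single_eq_same, map_smul, smul_smul, mul_inv_cancel₀ (hℓ i).ne', one_smul]
  · intro j _ hj
    rw [Pi.single_eq_of_ne hj, map_zero, smul_zero]
  · simp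

theorem stmt_1 (d k : ℕ) (hd : 2 ≤ d) (hk : 1 ≤ k)
    [Fact (Module.finrank ℝ (EuclideanSpace ℝ (Fin d)) = (d - 1) + 1)]
    (ℓ : Fin k → ℝ) (hℓ : ∀ i, 0 < ℓ i)
    (u : Fin k → (sphere (0 : EuclideanSpace ℝ (Fin d)) 1))
    (hu : ¬ ∃ w : EuclideanSpace ℝ (Fin d), ‖w‖ = 1 ∧
      ∀ i, (u i : EuclideanSpace ℝ (Fin d)) = w ∨ (u i : EuclideanSpace ℝ (Fin d)) = -w) :
    Function.Surjective
      (mfderiv (ModelWithCorners.pi (fun _ : Fin k => (𝓡 (d - 1))))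
        (𝓘(ℝ, EuclideanSpace ℝ (Fin d)))
        (fun v : Fin k → (sphere (0 : EuclideanSpace ℝ (Fin d)) 1) =>
          ∑ i, ℓ i • (v i : EuclideanSpace ℝ (Fin d))) u) := by
  classical
  let A : ∀ i, TangentSpace (𝓡 (d - 1)) (u i) →L[ℝ] EuclideanSpace ℝ (Fin d) := fun i =>
    mfderiv (𝓡 (d - 1)) 𝓘(ℝ, EuclideanSpace ℝ (Fin d))
      ((↑) : sphere (0 : EuclideanSpace ℝ (Fin d)) 1 → EuclideanSpace ℝ (Fin d)) (u i)
  have hA : ∀ i, HasMFDerivAt (𝓡 (d - 1)) 𝓘(ℝ, EuclideanSpace ℝ (Fin d))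
      ((↑) : sphere (0 : EuclideanSpace ℝ (Fin d)) 1 → EuclideanSpace ℝ (Fin d)) (u i) (A i) :=
    fun i => (((contMDiff_coe_sphere (n := d - 1) (m := 1)) (u i)).mdifferentiableAt
      (by norm_num)).hasMFDerivAt
  let B : (Fin k → EuclideanSpace ℝ (Fin (d - 1))) →L[ℝ] EuclideanSpace ℝ (Fin d) :=
    ∑ i, ℓ i • (show EuclideanSpace ℝ (Fin (d - 1)) →L[ℝ] EuclideanSpace ℝ (Fin d) from A i).comp
      (ContinuousLinearMap.proj i)
  have hB : HasMFDerivAt (ModelWithCorners.pi (fun _ : Fin k => (𝓡 (d - 1))))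
        (𝓘(ℝ, EuclideanSpace ℝ (Fin d)))
        (fun v : Fin k → (sphere (0 : EuclideanSpace ℝ (Fin d)) 1) =>
          ∑ i, ℓ i • (v i : EuclideanSpace ℝ (Fin d))) u B := by
    refine ⟨(continuous_finsetSum _ fun i _ => (continuous_subtype_val.comp (continuous_apply i)).const_smul (ℓ i)).continuousAt, ?_⟩
    have key : ∀ i, HasFDerivAt (fun x : Fin k → EuclideanSpace ℝ (Fin (d - 1)) =>
        (((extChartAt (𝓡 (d - 1)) (u i)).symm (x i) : sphere (0 : EuclideanSpace ℝ (Fin d)) 1) :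
          EuclideanSpace ℝ (Fin d)))
        ((show EuclideanSpace ℝ (Fin (d - 1)) →L[ℝ] EuclideanSpace ℝ (Fin d) from A i).comp
          (ContinuousLinearMap.proj i))
        (fun j => extChartAt (𝓡 (d - 1)) (u j) (u j)) := by
      intro i
      have h := (hA i).2
      rw [ModelWithCorners.range_eq_univ] at h
      replace h : HasFDerivAt (fun y : EuclideanSpace ℝ (Fin (d - 1)) =>
        (((extChartAt (𝓡 (d - 1)) (u i)).symm y : sphere (0 : EuclideanSpace ℝ (Fin d)) 1) :
          EuclideanSpace ℝ (Fin d))) (show EuclideanSpace ℝ (Fin (d - 1)) →L[ℝ] EuclideanSpace ℝ (Fin d) from A i)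
          (extChartAt (𝓡 (d - 1)) (u i) (u i)) := hasFDerivWithinAt_univ.1 h
      exact HasFDerivAt.comp (g := fun y : EuclideanSpace ℝ (Fin (d - 1)) =>
        (((extChartAt (𝓡 (d - 1)) (u i)).symm y : sphere (0 : EuclideanSpace ℝ (Fin d)) 1) :
          EuclideanSpace ℝ (Fin d))) (fun j => extChartAt (𝓡 (d - 1)) (u j) (u j)) h
        (ContinuousLinearMap.proj (R := ℝ) (φ := fun _ : Fin k => EuclideanSpace ℝ (Fin (d - 1))) i).hasFDerivAt
    have h2 := HasFDerivAt.fun_sum (u := Finset.univ) (fun i _ => (key i).const_smul (ℓ i))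
    exact h2.hasFDerivWithinAt
  rw [hB.mfderiv]
  change Function.Surjective B
  rw [← ContinuousLinearMap.coe_coe, ← LinearMap.range_eq_top, ← Submodule.orthogonal_eq_bot_iff,
    Submodule.eq_bot_iff]
  intro z hz
  by_contra hz0
  have hzn : ‖z‖ ≠ 0 := norm_ne_zero_iff.mpr hz0
  apply hu
  refine ⟨‖z‖⁻¹ • z, by rw [norm_smul, norm_inv, norm_norm, inv_mul_cancel₀ hzn], fun i => ?_⟩
  have hr : (ℝ ∙ (u i : EuclideanSpace ℝ (Fin d)))ᗮ ≤ LinearMap.range B.toLinearMap := by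
    rw [← range_mfderiv_coe_sphere (n := d - 1) (u i)]
    rintro _ ⟨x, rfl⟩
    refine ⟨Pi.single i ((ℓ i)⁻¹ • (show EuclideanSpace ℝ (Fin (d - 1)) from x)), ?_⟩
    have : B (Pi.single i ((ℓ i)⁻¹ • (show EuclideanSpace ℝ (Fin (d - 1)) from x))) = A i x := by
      exact aux_single ℓ hℓ (fun i => A i) i x
    exact this
  have hz' := Submodule.orthogonal_le hr hz
  rw [Submodule.orthogonal_orthogonal, Submodule.mem_span_singleton] at hz'
  obtain ⟨c, rfl⟩ := hz'
  have hui : ‖(u i : EuclideanSpace ℝ (Fin d))‖ = 1 := by simp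
  have hc : c ≠ 0 := by rintro rfl; simp at hz0
  rw [norm_smul, hui, mul_one, smul_smul, Real.norm_eq_abs]
  rcases lt_or_gt_of_ne hc with h | h
  · right
    rw [abs_of_neg h, inv_neg, neg_mul, inv_mul_cancel₀ hc]; simp
  · left
    rw [abs_of_pos h, inv_mul_cancel₀ hc, one_smul]
end

section
/- Let d ≥ 2, k ≥ 1 and ℓ : Fin k → ℝ with ℓ i > 0 for all i, and let φ be the work map of the open k-chain. If u ∈ (S^{d-1})^k is aligned with common unit direction w (so u i = w or u i = −w for every i), then the image of the manifold derivative (mfderiv) of φ at u equals the orthogonal complement {x ∈ EuclideanSpace ℝ (Fin d) : ⟪x, w⟫ = 0} of w; in particular this image is a linear subspace of dimension d − 1. -/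
open scoped Manifold BigOperators RealInnerProductSpace
open Metric


theorem hasMFDerivAt_work {d k : ℕ}
    [Fact (Module.finrank ℝ (EuclideanSpace ℝ (Fin d)) = (d - 1) + 1)]
    (ℓ : Fin k → ℝ)
    (u : Fin k → (sphere (0 : EuclideanSpace ℝ (Fin d)) 1))
    (D : Fin k → (EuclideanSpace ℝ (Fin (d - 1)) →L[ℝ] EuclideanSpace ℝ (Fin d)))
    (hD : ∀ i, HasMFDerivAt (𝓡 (d - 1)) 𝓘(ℝ, EuclideanSpace ℝ (Fin d))
      (fun x : sphere (0 : EuclideanSpace ℝ (Fin d)) 1 => (x : EuclideanSpace ℝ (Fin d)))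
      (u i) (D i)) :
    HasMFDerivAt (ModelWithCorners.pi (fun _ : Fin k => (𝓡 (d - 1))))
        (𝓘(ℝ, EuclideanSpace ℝ (Fin d)))
        (fun v : Fin k → (sphere (0 : EuclideanSpace ℝ (Fin d)) 1) =>
          ∑ i, ℓ i • (v i : EuclideanSpace ℝ (Fin d))) u
      (∑ i, ℓ i • (D i).comp (ContinuousLinearMap.proj
        (φ := fun _ : Fin k => EuclideanSpace ℝ (Fin (d - 1))) i)) := by
  refine ⟨(continuous_finset_sum _ fun i _ => (continuous_subtype_val.comp
    (continuous_apply i)).const_smul (ℓ i)).continuousAt, ?_⟩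
  have key : ∀ i : Fin k, HasFDerivWithinAt
      (fun x : Fin k → EuclideanSpace ℝ (Fin (d - 1)) =>
        (((extChartAt (𝓡 (d - 1)) (u i)).symm (x i) :
          sphere (0 : EuclideanSpace ℝ (Fin d)) 1) : EuclideanSpace ℝ (Fin d)))
      ((D i).comp (ContinuousLinearMap.proj
        (φ := fun _ : Fin k => EuclideanSpace ℝ (Fin (d - 1))) i))
      (Set.range (ModelWithCorners.pi (fun _ : Fin k => (𝓡 (d - 1)))))
      (fun j => extChartAt (𝓡 (d - 1)) (u j) (u j)) := by
    intro i
    have h := (hD i).2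
    have h2 := (ContinuousLinearMap.proj (R := ℝ)
        (φ := fun _ : Fin k => EuclideanSpace ℝ (Fin (d - 1))) i).hasFDerivWithinAt
        (s := Set.range (ModelWithCorners.pi (fun _ : Fin k => (𝓡 (d - 1)))))
        (x := fun j => extChartAt (𝓡 (d - 1)) (u j) (u j))
    refine HasFDerivWithinAt.comp (t := Set.range (𝓡 (d - 1)))
      (g := fun y : EuclideanSpace ℝ (Fin (d - 1)) => (((extChartAt (𝓡 (d - 1)) (u i)).symm y :
          sphere (0 : EuclideanSpace ℝ (Fin d)) 1) : EuclideanSpace ℝ (Fin d)))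
       _ h h2 ?_
    intro x _
    simp
  have hs := HasFDerivWithinAt.fun_sum (u := Finset.univ)
    (fun i _ => (key i).const_smul (ℓ i))
  have e1 : writtenInExtChartAt (ModelWithCorners.pi (fun _ : Fin k => (𝓡 (d - 1))))
      (𝓘(ℝ, EuclideanSpace ℝ (Fin d))) u
      (fun v : Fin k → (sphere (0 : EuclideanSpace ℝ (Fin d)) 1) =>
        ∑ i, ℓ i • (v i : EuclideanSpace ℝ (Fin d))) =
      (fun x : Fin k → EuclideanSpace ℝ (Fin (d - 1)) => ∑ i, ℓ i •
        (((extChartAt (𝓡 (d - 1)) (u i)).symm (x i) :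
          sphere (0 : EuclideanSpace ℝ (Fin d)) 1) : EuclideanSpace ℝ (Fin d))) := by
    rfl
  have e2 : (extChartAt (ModelWithCorners.pi (fun _ : Fin k => (𝓡 (d - 1)))) u) u =
      (fun j => extChartAt (𝓡 (d - 1)) (u j) (u j)) := by
    rfl
  rw [e1, e2]
  exact hs

theorem stmt_2 (d k : ℕ) (hd : 2 ≤ d) (hk : 1 ≤ k)
    [Fact (Module.finrank ℝ (EuclideanSpace ℝ (Fin d)) = (d - 1) + 1)]
    (ℓ : Fin k → ℝ) (hℓ : ∀ i, 0 < ℓ i)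
    (u : Fin k → (sphere (0 : EuclideanSpace ℝ (Fin d)) 1))
    (w : EuclideanSpace ℝ (Fin d)) (hw : ‖w‖ = 1)
    (hu : ∀ i, (u i : EuclideanSpace ℝ (Fin d)) = w ∨
      (u i : EuclideanSpace ℝ (Fin d)) = -w) :
    Set.range
      (mfderiv (ModelWithCorners.pi (fun _ : Fin k => (𝓡 (d - 1))))
        (𝓘(ℝ, EuclideanSpace ℝ (Fin d)))
        (fun v : Fin k → (sphere (0 : EuclideanSpace ℝ (Fin d)) 1) =>
          ∑ i, ℓ i • (v i : EuclideanSpace ℝ (Fin d))) u) =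
      {x : EuclideanSpace ℝ (Fin d) | ⟪x, w⟫ = 0} ∧
    Module.finrank ℝ
      (LinearMap.range
        (mfderiv (ModelWithCorners.pi (fun _ : Fin k => (𝓡 (d - 1))))
          (𝓘(ℝ, EuclideanSpace ℝ (Fin d)))
          (fun v : Fin k → (sphere (0 : EuclideanSpace ℝ (Fin d)) 1) =>
            ∑ i, ℓ i • (v i : EuclideanSpace ℝ (Fin d))) u).toLinearMap) = d - 1 := by
  classical
  have hc : ∀ v : sphere (0 : EuclideanSpace ℝ (Fin d)) 1,
      MDifferentiableAt (𝓡 (d - 1)) 𝓘(ℝ, EuclideanSpace ℝ (Fin d))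
      (fun x : sphere (0 : EuclideanSpace ℝ (Fin d)) 1 => (x : EuclideanSpace ℝ (Fin d))) v :=
    fun v => (contMDiff_coe_sphere (m := 1) v).mdifferentiableAt one_ne_zero
  have hr : ∀ v : sphere (0 : EuclideanSpace ℝ (Fin d)) 1, ∃ D : EuclideanSpace ℝ (Fin (d - 1)) →L[ℝ]
      EuclideanSpace ℝ (Fin d), HasMFDerivAt (𝓡 (d - 1)) 𝓘(ℝ, EuclideanSpace ℝ (Fin d))
      (fun x : sphere (0 : EuclideanSpace ℝ (Fin d)) 1 => (x : EuclideanSpace ℝ (Fin d)))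
      v D ∧ D.range = (ℝ ∙ (v : EuclideanSpace ℝ (Fin d)))ᗮ :=
    fun v => ⟨_, (hc v).hasMFDerivAt, range_mfderiv_coe_sphere v⟩
  choose D hD hDr using fun i => hr (u i)
  have hspan : ∀ i, (ℝ ∙ (u i : EuclideanSpace ℝ (Fin d))) = ℝ ∙ w := by
    intro i
    rcases hu i with h | h
    · rw [h]
    · rw [h, ← Set.neg_singleton, Submodule.span_neg]
  have hmain : (∑ i, ℓ i • (D i).comp (ContinuousLinearMap.proj
        (φ := fun _ : Fin k => EuclideanSpace ℝ (Fin (d - 1))) i)).range = (ℝ ∙ w)ᗮ := by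
    apply le_antisymm
    · rintro _ ⟨x, rfl⟩
      simp only [ContinuousLinearMap.coe_coe, ContinuousLinearMap.sum_apply,
        ContinuousLinearMap.smul_apply, ContinuousLinearMap.comp_apply]
      refine Submodule.sum_mem _ fun i _ => Submodule.smul_mem _ _ ?_
      rw [← hspan i, ← hDr i]
      exact ⟨_, rfl⟩
    · intro y hy
      let i0 : Fin k := ⟨0, hk⟩
      rw [← hspan i0, ← hDr i0] at hy
      obtain ⟨z, rfl⟩ := hy
      refine ⟨Pi.single i0 ((ℓ i0)⁻¹ • z), ?_⟩
      simp only [ContinuousLinearMap.coe_coe, ContinuousLinearMap.sum_apply,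
        ContinuousLinearMap.smul_apply, ContinuousLinearMap.comp_apply,
        ContinuousLinearMap.proj_apply]
      rw [Finset.sum_eq_single i0]
      · simp [smul_smul, (hℓ i0).ne']
      · intro j _ hj
        simp [Pi.single_eq_of_ne hj]
      · simp
  rw [(hasMFDerivAt_work ℓ u D hD).mfderiv]
  constructor
  · refine Set.ext fun (x : EuclideanSpace ℝ (Fin d)) => ?_
    have : x ∈ (∑ i, ℓ i • (D i).comp (ContinuousLinearMap.proj
        (φ := fun _ : Fin k => EuclideanSpace ℝ (Fin (d - 1))) i)).range ↔ x ∈ (ℝ ∙ w)ᗮ := by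
      rw [hmain]
    rw [Submodule.mem_orthogonal_singleton_iff_inner_left] at this
    exact this
  · have hw0 : w ≠ 0 := by
      rintro rfl
      simp at hw
    have h1 : Module.finrank ℝ (ℝ ∙ w)ᗮ = d - 1 := Submodule.finrank_orthogonal_span_singleton hw0
    rw [← hmain] at h1
    exact h1
end

section
/- Let d ≥ 2, k ≥ 1 and ℓ : Fin k → ℝ with ℓ i > 0 for all i, let φ be the work map of the open k-chain, and define F : (S^{d-1})^k → ℝ by F(u) = ‖φ(u)‖². For every u with φ(u) ≠ 0, the manifold derivative (mfderiv) of F at u is the zero map if and only if u is aligned. -/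
open scoped Manifold BigOperators
open Metric

noncomputable def DD {d : ℕ} [Fact (Module.finrank ℝ (EuclideanSpace ℝ (Fin d)) = (d - 1) + 1)]
    (x : sphere (0 : EuclideanSpace ℝ (Fin d)) 1) :
    EuclideanSpace ℝ (Fin (d-1)) →L[ℝ] EuclideanSpace ℝ (Fin d) :=
  mfderiv (𝓡 (d-1)) 𝓘(ℝ, EuclideanSpace ℝ (Fin d))
    (Subtype.val : sphere (0 : EuclideanSpace ℝ (Fin d)) 1 → _) x

noncomputable def GG {d k : ℕ}
    [Fact (Module.finrank ℝ (EuclideanSpace ℝ (Fin d)) = (d - 1) + 1)]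
    (ℓ : Fin k → ℝ) (u : Fin k → (sphere (0 : EuclideanSpace ℝ (Fin d)) 1)) :
    (Fin k → EuclideanSpace ℝ (Fin (d-1))) →L[ℝ] ℝ :=
  (2 • (innerSL ℝ (∑ i, ℓ i • (u i : EuclideanSpace ℝ (Fin d))))).comp
    (∑ i, ℓ i • ((DD (u i)).comp
      (ContinuousLinearMap.proj (R := ℝ) (φ := fun _ : Fin k => EuclideanSpace ℝ (Fin (d-1))) i)))

theorem GG_apply {d k : ℕ}
    [Fact (Module.finrank ℝ (EuclideanSpace ℝ (Fin d)) = (d - 1) + 1)]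
    (ℓ : Fin k → ℝ) (u : Fin k → (sphere (0 : EuclideanSpace ℝ (Fin d)) 1))
    (x : Fin k → EuclideanSpace ℝ (Fin (d-1))) :
    GG ℓ u x = 2 * inner ℝ (∑ i, ℓ i • (u i : EuclideanSpace ℝ (Fin d)))
      (∑ j, ℓ j • DD (u j) (x j)) := by
  simp [GG, inner_sum, sum_inner, inner_smul_left, inner_smul_right]

theorem key (d k : ℕ) 
    [Fact (Module.finrank ℝ (EuclideanSpace ℝ (Fin d)) = (d - 1) + 1)]
    (ℓ : Fin k → ℝ) 
    (u : Fin k → (sphere (0 : EuclideanSpace ℝ (Fin d)) 1)) :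
    HasMFDerivAt (ModelWithCorners.pi (fun _ : Fin k => (𝓡 (d - 1)))) (𝓘(ℝ, ℝ))
        (fun v : Fin k → (sphere (0 : EuclideanSpace ℝ (Fin d)) 1) =>
          ‖∑ i, ℓ i • (v i : EuclideanSpace ℝ (Fin d))‖ ^ 2) u
     (GG ℓ u) := by
  refine ⟨?_, ?_⟩
  · apply Continuous.continuousAt
    fun_prop
  have h : ∀ i, HasFDerivAt (fun z : EuclideanSpace ℝ (Fin (d-1)) => (((extChartAt (𝓡 (d-1)) (u i)).symm z : sphere (0 : EuclideanSpace ℝ (Fin d)) 1) : EuclideanSpace ℝ (Fin d)))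
      (DD (u i)) (extChartAt (𝓡 (d-1)) (u i) (u i)) := by
    intro i
    have := ((contMDiff_coe_sphere (n := d-1) (m := 1)).mdifferentiable (by simp) (u i)).hasMFDerivAt.2
    rw [ModelWithCorners.range_eq_univ] at this
    exact hasFDerivWithinAt_univ.1 this
  apply HasFDerivAt.hasFDerivWithinAt
  have h2 : HasFDerivAt (fun z : Fin k → EuclideanSpace ℝ (Fin (d-1)) => ∑ i, ℓ i • (((extChartAt (𝓡 (d-1)) (u i)).symm (z i) : sphere (0 : EuclideanSpace ℝ (Fin d)) 1) : EuclideanSpace ℝ (Fin d)))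
     (∑ i, ℓ i • ((DD (u i)).comp
          (ContinuousLinearMap.proj (R := ℝ) (φ := fun _ : Fin k => EuclideanSpace ℝ (Fin (d-1))) i))) (fun i => extChartAt (𝓡 (d-1)) (u i) (u i)) := by
    apply HasFDerivAt.fun_sum
    intro i _
    apply HasFDerivAt.fun_const_smul
    exact HasFDerivAt.comp (g := fun z : EuclideanSpace ℝ (Fin (d-1)) => (((extChartAt (𝓡 (d-1)) (u i)).symm z : sphere (0 : EuclideanSpace ℝ (Fin d)) 1) : EuclideanSpace ℝ (Fin d))) (f := fun z : Fin k → EuclideanSpace ℝ (Fin (d-1)) => z i) _ (h i) (hasFDerivAt_apply i _)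
  have h3 := h2.norm_sq
  have e : (∑ i, ℓ i • (((extChartAt (𝓡 (d-1)) (u i)).symm (extChartAt (𝓡 (d-1)) (u i) (u i)) : sphere (0 : EuclideanSpace ℝ (Fin d)) 1) : EuclideanSpace ℝ (Fin d))) = ∑ i, ℓ i • (u i : EuclideanSpace ℝ (Fin d)) := by
    refine Finset.sum_congr rfl fun i _ => ?_
    rw [extChartAt_to_inv]
  rw [e] at h3
  exact h3

theorem stmt_3 (d k : ℕ) (hd : 2 ≤ d) (hk : 1 ≤ k)
    [Fact (Module.finrank ℝ (EuclideanSpace ℝ (Fin d)) = (d - 1) + 1)]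
    (ℓ : Fin k → ℝ) (hℓ : ∀ i, 0 < ℓ i)
    (u : Fin k → (sphere (0 : EuclideanSpace ℝ (Fin d)) 1))
    (hne : (∑ i, ℓ i • (u i : EuclideanSpace ℝ (Fin d))) ≠ 0) :
    mfderiv (ModelWithCorners.pi (fun _ : Fin k => (𝓡 (d - 1)))) (𝓘(ℝ, ℝ))
        (fun v : Fin k → (sphere (0 : EuclideanSpace ℝ (Fin d)) 1) =>
          ‖∑ i, ℓ i • (v i : EuclideanSpace ℝ (Fin d))‖ ^ 2) u = 0 ↔
      ∃ w : EuclideanSpace ℝ (Fin d), ‖w‖ = 1 ∧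
        ∀ i, (u i : EuclideanSpace ℝ (Fin d)) = w ∨
          (u i : EuclideanSpace ℝ (Fin d)) = -w := by
  rw [(key d k ℓ u).mfderiv]
  change GG ℓ u = 0 ↔ _
  set φ := ∑ i, ℓ i • (u i : EuclideanSpace ℝ (Fin d)) with hφ
  let D := fun i => DD (u i)
  have hD : ∀ i, LinearMap.range (D i : EuclideanSpace ℝ (Fin (d-1)) →ₗ[ℝ] EuclideanSpace ℝ (Fin d)) = (ℝ ∙ (u i : EuclideanSpace ℝ (Fin d)))ᗮ := fun i => range_mfderiv_coe_sphere (n := d-1) (u i)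
  have hu : ∀ i, ‖(u i : EuclideanSpace ℝ (Fin d))‖ = 1 := fun i => by simp
  constructor
  · intro h
    have h1 : ∀ i, ∃ c : ℝ, c • (u i : EuclideanSpace ℝ (Fin d)) = φ := by
      intro i
      rw [← Submodule.mem_span_singleton, ← Submodule.orthogonal_orthogonal (ℝ ∙ (u i : EuclideanSpace ℝ (Fin d))), ← hD i, Submodule.mem_orthogonal']
      rintro _ ⟨x, rfl⟩
      have h3 := GG_apply ℓ u (Pi.single i x)
      rw [h, ContinuousLinearMap.zero_apply, ← hφ] at h3
      replace h3 := h3.symm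
      rw [Finset.sum_eq_single i] at h3
      · simpa [inner_smul_right, (hℓ i).ne'] using h3
      · intro j _ hj
        simp [hj]
      · simp
    have hn : ‖φ‖ ≠ 0 := norm_ne_zero_iff.2 hne
    refine ⟨‖φ‖⁻¹ • φ, by simp [norm_smul, hn], fun i => ?_⟩
    obtain ⟨c, hc⟩ := h1 i
    have hcn : ‖φ‖ = |c| := by rw [← hc, norm_smul, hu, mul_one, Real.norm_eq_abs]
    have hc0 : c ≠ 0 := by rintro rfl; simp [hcn] at hn
    rw [hcn, ← hc, smul_smul]
    rcases abs_choice c with h | h <;> rw [h]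
    · left; simp [hc0]
    · right; simp [inv_neg, hc0]
  · rintro ⟨w, hw, hal⟩
    have h1 : ∃ c : ℝ, φ = c • w := by
      have : φ ∈ (ℝ ∙ w) := by
        refine Submodule.sum_mem _ fun i _ => Submodule.smul_mem _ _ ?_
        rcases hal i with h | h <;> rw [h]
        · exact Submodule.mem_span_singleton_self w
        · exact Submodule.neg_mem _ (Submodule.mem_span_singleton_self w)
      obtain ⟨c, hc⟩ := Submodule.mem_span_singleton.1 this
      exact ⟨c, hc.symm⟩
    obtain ⟨c, hc⟩ := h1
    have h2 : ∀ i x, inner ℝ φ (D i x) = 0 := by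
      intro i x
      have : D i x ∈ (ℝ ∙ (u i : EuclideanSpace ℝ (Fin d)))ᗮ := by rw [← hD i]; exact ⟨x, rfl⟩
      rw [Submodule.mem_orthogonal_singleton_iff_inner_right] at this
      rw [hc, inner_smul_left]
      rcases hal i with h | h <;> rw [h] at this
      · simp [this]
      · rw [inner_neg_left, neg_eq_zero] at this; simp [this]
    refine ContinuousLinearMap.ext fun (x : Fin k → EuclideanSpace ℝ (Fin (d-1))) => ?_
    have : 2 * inner ℝ φ (∑ j, ℓ j • D j (x j)) = 0 := by
      simp [inner_sum, inner_smul_right, h2]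
    rw [GG_apply]
    exact this
end

section
/- Let Γ be a linkage in ℝ^d with base vertex x*, and suppose (x*, v₁) ∈ E is an edge of length ℓ₁ > 0. Define p : C*(Γ) → S^{d-1} by p(q) = (ℓ₁)⁻¹ • (q v₁), where S^{d-1} is the unit sphere in EuclideanSpace ℝ (Fin d). Then p is a locally trivial fibration: for every θ₀ ∈ S^{d-1} there exist an open neighborhood U of θ₀ in S^{d-1} and a homeomorphism h from p⁻¹(U) onto U × p⁻¹({θ₀}) such that the first coordinate of h(q) equals p(q) for every q ∈ p⁻¹(U). -/
noncomputable def rfl5 {F : Type*} [NormedAddCommGroup F] [InnerProductSpace ℝ F] (u x : F) : F :=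
  (2 * inner ℝ u x / inner ℝ u u) • u - x

section
variable {F : Type*} [NormedAddCommGroup F] [InnerProductSpace ℝ F]

theorem rfl5_sub (u x y : F) : rfl5 u x - rfl5 u y = rfl5 u (x - y) := by
  simp only [rfl5, inner_sub_right]
  module

theorem rfl5_zero (u : F) : rfl5 u 0 = 0 := by
  simp [rfl5]

theorem rfl5_smul (u x : F) (c : ℝ) : c • rfl5 u x = rfl5 u (c • x) := by
  simp only [rfl5, inner_smul_right]
  module

theorem rfl5_norm (u x : F) (hu : u ≠ 0) : ‖rfl5 u x‖ = ‖x‖ := by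
  have h0 : inner ℝ u u ≠ 0 := by simpa using hu
  have : inner ℝ (rfl5 u x) (rfl5 u x) = inner ℝ x x := by
    simp only [rfl5, inner_sub_left, inner_sub_right, real_inner_smul_left, real_inner_smul_right,
      real_inner_comm u x]
    field_simp
    ring
  rw [real_inner_self_eq_norm_sq, real_inner_self_eq_norm_sq] at this
  exact (sq_eq_sq₀ (norm_nonneg _) (norm_nonneg _)).1 this

theorem rfl5_rfl5 (u x : F) (hu : u ≠ 0) : rfl5 u (rfl5 u x) = x := by
  have h0 : inner ℝ u u ≠ 0 := by simpa using hu
  have : 2 * inner ℝ u (rfl5 u x) / inner ℝ u u = 2 * inner ℝ u x / inner ℝ u u := by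
    simp only [rfl5, inner_sub_right, real_inner_smul_right]
    field_simp
    ring
  rw [rfl5, this, rfl5]
  abel

theorem rfl5_map (a b : F) (ha : ‖a‖ = 1) (hb : ‖b‖ = 1) (hu : a + b ≠ 0) :
    rfl5 (a + b) b = a := by
  have h0 : inner ℝ (a + b) (a + b) ≠ 0 := by simpa using hu
  have : 2 * inner ℝ (a + b) b / inner ℝ (a + b) (a + b) = 1 := by
    rw [div_eq_one_iff_eq h0]
    simp only [inner_add_left, inner_add_right, real_inner_self_eq_norm_sq, ha, hb,
      real_inner_comm a b]
    ring
  rw [rfl5, this]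
  module

theorem rfl5_cont {X : Type*} [TopologicalSpace X] (f g : X → F) (hf : Continuous f)
    (hg : Continuous g) (h : ∀ x, f x ≠ 0) : Continuous fun x => rfl5 (f x) (g x) := by
  unfold rfl5
  refine Continuous.sub (Continuous.smul (Continuous.div ?_ ?_ ?_) hf) hg
  · exact continuous_const.mul (hf.inner hg)
  · exact hf.inner hf
  · intro x
    simpa using h x

theorem rfl5_eval {V : Type} {P : (V → F) → Prop} {Q : {p : V → F // P p} → Prop} (v : V) :
    Continuous fun q : {q : {p : V → F // P p} // Q q} => q.1.1 v :=
  (continuous_apply v).comp (continuous_subtype_val.comp continuous_subtype_val)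

theorem rfl5_eval_smul {V : Type} {P : (V → F) → Prop} {Q : {p : V → F // P p} → Prop} (v : V)
    (c : ℝ) : Continuous fun q : {q : {p : V → F // P p} // Q q} => c • q.1.1 v := by
  have h : Continuous fun q : {q : {p : V → F // P p} // Q q} => q.1.1 v := rfl5_eval v
  exact Continuous.const_smul h c

theorem rfl5_eval_add {V : Type} {P : (V → F) → Prop} {Q : {p : V → F // P p} → Prop} (v : V)
    (c : ℝ) (b : F) : Continuous fun q : {q : {p : V → F // P p} // Q q} => c • q.1.1 v + b := by
  have h : Continuous fun q : {q : {p : V → F // P p} // Q q} => c • q.1.1 v := rfl5_eval_smul v c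
  exact Continuous.add h continuous_const

end

theorem stmt_5 (d : ℕ) (hd : 2 ≤ d) (V : Type) [Fintype V]
    (E : Set (V × V)) (ℓ : V × V → ℝ) (hℓ : ∀ e ∈ E, 0 < ℓ e)
    (xs v₁ : V) (hedge : (xs, v₁) ∈ E)
    (ℓ₁ : ℝ) (hℓ₁ : ℓ₁ = ℓ (xs, v₁)) (hℓ₁pos : 0 < ℓ₁)
    (θ₀ : EuclideanSpace ℝ (Fin d)) (hθ₀ : ‖θ₀‖ = 1) :
    ∃ U : Set (EuclideanSpace ℝ (Fin d)),
      U ⊆ {x | ‖x‖ = 1} ∧ θ₀ ∈ U ∧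
      (∃ W : Set (EuclideanSpace ℝ (Fin d)), IsOpen W ∧ U = W ∩ {x | ‖x‖ = 1}) ∧
      ∃ h : {q : {p : V → EuclideanSpace ℝ (Fin d) //
                    (∀ e ∈ E, ‖p e.1 - p e.2‖ = ℓ e) ∧ p xs = 0} //
                ℓ₁⁻¹ • (q : V → EuclideanSpace ℝ (Fin d)) v₁ ∈ U} ≃ₜ
            (↥U ×
              {q : {p : V → EuclideanSpace ℝ (Fin d) //
                      (∀ e ∈ E, ‖p e.1 - p e.2‖ = ℓ e) ∧ p xs = 0} //
                  ℓ₁⁻¹ • (q : V → EuclideanSpace ℝ (Fin d)) v₁ = θ₀}),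
        ∀ q, ((h q).1 : EuclideanSpace ℝ (Fin d)) =
          ℓ₁⁻¹ • ((q : {p : V → EuclideanSpace ℝ (Fin d) //
              (∀ e ∈ E, ‖p e.1 - p e.2‖ = ℓ e) ∧ p xs = 0}) :
            V → EuclideanSpace ℝ (Fin d)) v₁ := by
  have hmap' : ∀ a : EuclideanSpace ℝ (Fin d), ‖a‖ = 1 → a + θ₀ ≠ 0 →
      rfl5 (a + θ₀) a = θ₀ := by
    intro a ha hu
    have := rfl5_map θ₀ a hθ₀ ha (by rwa [add_comm])
    rwa [add_comm] at this
  refine ⟨{x | x + θ₀ ≠ 0} ∩ {x | ‖x‖ = 1}, Set.inter_subset_right, ⟨?_, hθ₀⟩,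
    ⟨{x | x + θ₀ ≠ 0}, ?_, rfl⟩, ?_⟩
  · intro h
    have h2 : (2 : ℝ) • θ₀ = 0 := by rw [two_smul]; exact h
    have h3 : θ₀ = 0 := by simpa using h2
    simp [h3] at hθ₀
  · exact isOpen_ne_fun (by fun_prop) continuous_const
  refine ⟨{
    toFun := fun q => (⟨ℓ₁⁻¹ • q.1.1 v₁, q.2⟩,
      ⟨⟨fun v => rfl5 (ℓ₁⁻¹ • q.1.1 v₁ + θ₀) (q.1.1 v), ?_, ?_⟩, ?_⟩)
    invFun := fun z => ⟨⟨fun v => rfl5 (z.1.1 + θ₀) (z.2.1.1 v), ?_, ?_⟩, ?_⟩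
    left_inv := ?_
    right_inv := ?_
    continuous_toFun := ?_
    continuous_invFun := ?_ }, ?_⟩
  · intro e he
    rw [rfl5_sub, rfl5_norm _ _ q.2.1]
    exact q.1.2.1 e he
  · simp only [q.1.2.2, rfl5_zero]
  · simp only [rfl5_smul]
    exact hmap' _ q.2.2 q.2.1
  · intro e he
    rw [rfl5_sub, rfl5_norm _ _ z.1.2.1]
    exact z.2.1.2.1 e he
  · simp only [z.2.1.2.2, rfl5_zero]
  · simp only [rfl5_smul, z.2.2]
    rw [rfl5_map _ _ z.1.2.2 hθ₀ z.1.2.1]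
    exact z.1.2
  · intro q
    apply Subtype.ext
    apply Subtype.ext
    funext v
    exact rfl5_rfl5 _ _ q.2.1
  · intro z
    have key : ℓ₁⁻¹ • rfl5 (z.1.1 + θ₀) (z.2.1.1 v₁) = z.1.1 := by
      rw [rfl5_smul, z.2.2, rfl5_map _ _ z.1.2.2 hθ₀ z.1.2.1]
    apply Prod.ext
    · apply Subtype.ext
      exact key
    · apply Subtype.ext
      apply Subtype.ext
      funext v
      simp only [key]
      exact rfl5_rfl5 _ _ z.1.2.1
  · refine Continuous.prodMk ?_ ?_
    · refine Continuous.subtype_mk ?_ _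
      exact rfl5_eval_smul (F := EuclideanSpace ℝ (Fin d)) v₁ ℓ₁⁻¹
    · refine Continuous.subtype_mk (Continuous.subtype_mk (continuous_pi fun v => ?_) _) _
      exact rfl5_cont _ _ (rfl5_eval_add v₁ ℓ₁⁻¹ θ₀)
        (rfl5_eval v)
        fun q => q.2.1
  · refine Continuous.subtype_mk (Continuous.subtype_mk (continuous_pi fun v => ?_) _) _
    exact rfl5_cont _ _ (by fun_prop) ((continuous_apply v).comp
      (continuous_subtype_val.comp (continuous_subtype_val.comp continuous_snd))) fun z => z.1.2.1
  · intro q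
    rfl
end

section
/- Let Γ be a linkage in ℝ^d with vertex set V, base vertex x₀ and a distinguished vertex x_k, and suppose Γ decomposes as Γ' together with an open k-chain: V = V' ∪ {y₁, …, y_{k−1}} with the yᵢ distinct vertices not in V', x₀, x_k ∈ V', E = E' ∪ {(y_{i−1}, y_i) : i = 1, …, k} where y₀ = x₀ and y_k = x_k, E' ⊆ V' × V', and the chain edges have lengths λ i > 0. Let Γ' = (V', E', ℓ restricted to E'). Then the map sending p ∈ C*(Γ) to the pair (p restricted to V', u) with u i = (λ i)⁻¹ • (p(y_i) − p(y_{i−1})) ∈ S^{d-1} is a homeomorphism from C*(Γ) (with base vertex x₀) onto the fiber product {(r, u) ∈ C*(Γ') × (S^{d-1})^k : r(x_k) = ∑ i, λ i • (u i)}. -/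
open scoped BigOperators

noncomputable def chainPos {k : ℕ} {M : Type} [AddCommGroup M] [Module ℝ M] (lam : Fin k → ℝ)
    (u : Fin k → M) (j : Fin (k + 1)) : M :=
  ∑ i : Fin k, if i.castSucc < j then lam i • u i else 0

section
variable {k : ℕ} {M : Type} [AddCommGroup M] [Module ℝ M] (lam : Fin k → ℝ) (u : Fin k → M)

theorem chainPos_zero : chainPos lam u 0 = 0 := by simp [chainPos]

theorem chainPos_last : chainPos lam u (Fin.last k) = ∑ i, lam i • u i := by
  simp [chainPos, Fin.castSucc_lt_last]

theorem chainPos_succ (i : Fin k) :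
    chainPos lam u i.succ = chainPos lam u i.castSucc + lam i • u i := by
  have h : lam i • u i = ∑ j : Fin k, if j = i then lam j • u j else 0 := by simp
  rw [h]
  unfold chainPos
  rw [← Finset.sum_add_distrib]
  refine Finset.sum_congr rfl fun j _ => ?_
  rcases lt_trichotomy j i with hj | hj | hj
  · have h1 : j.castSucc < i.succ := by
      simp only [Fin.lt_def, Fin.val_castSucc, Fin.val_succ] at *; omega
    simp [h1, hj, hj.ne]
  · subst hj; simp
  · have h1 : ¬ j.castSucc < i.succ := by
      simp only [Fin.lt_def, Fin.val_castSucc, Fin.val_succ] at *; omega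
    simp [h1, hj.ne', hj.le]

end

theorem stmt_7 (d k : ℕ) (hd : 2 ≤ d) (hk : 1 ≤ k)
    (V : Type) [Fintype V] (V' : Set V) (x₀ xk : V)
    (hx₀ : x₀ ∈ V') (hxk : xk ∈ V')
    (y : Fin (k + 1) → V) (hy0 : y 0 = x₀) (hyk : y (Fin.last k) = xk)
    (hyinj : ∀ i j : Fin (k + 1), i ≠ 0 → i ≠ Fin.last k →
      j ≠ 0 → j ≠ Fin.last k → y i = y j → i = j)
    (hynot : ∀ i : Fin (k + 1), i ≠ 0 → i ≠ Fin.last k → y i ∉ V')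
    (hcover : ∀ v : V, v ∈ V' ∨ ∃ i : Fin (k + 1), i ≠ 0 ∧ i ≠ Fin.last k ∧ y i = v)
    (E' : Set (V × V)) (hE' : ∀ e ∈ E', e.1 ∈ V' ∧ e.2 ∈ V')
    (E : Set (V × V))
    (hE : E = E' ∪ {e | ∃ i : Fin k, e = (y i.castSucc, y i.succ)})
    (ℓ : V × V → ℝ) (hℓ : ∀ e ∈ E, 0 < ℓ e)
    (lam : Fin k → ℝ) (hlam : ∀ i : Fin k, lam i = ℓ (y i.castSucc, y i.succ))
    (hlampos : ∀ i, 0 < lam i) :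
    ∃ h : {p : V → EuclideanSpace ℝ (Fin d) //
             (∀ e ∈ E, ‖p e.1 - p e.2‖ = ℓ e) ∧ p x₀ = 0} ≃ₜ
          {ru : {r : V' → EuclideanSpace ℝ (Fin d) //
                   (∀ (e : V × V) (he : e ∈ E'),
                     ‖r ⟨e.1, (hE' e he).1⟩ - r ⟨e.2, (hE' e he).2⟩‖ = ℓ e) ∧
                   r ⟨x₀, hx₀⟩ = 0} ×
                (Fin k → EuclideanSpace ℝ (Fin d)) //
            (∀ i, ‖ru.2 i‖ = 1) ∧
              (ru.1 : V' → EuclideanSpace ℝ (Fin d)) ⟨xk, hxk⟩ = ∑ i, lam i • ru.2 i},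
      ∀ p, (((h p).val.1 : V' → EuclideanSpace ℝ (Fin d)) =
              fun v : V' => (p : V → EuclideanSpace ℝ (Fin d)) v) ∧
           ((h p).val.2 =
              fun i : Fin k => (lam i)⁻¹ •
                ((p : V → EuclideanSpace ℝ (Fin d)) (y i.succ) -
                 (p : V → EuclideanSpace ℝ (Fin d)) (y i.castSucc))) := by
  classical
  have hcov : ∀ v : V, ∃ i : Fin (k + 1), v ∉ V' → i ≠ 0 ∧ i ≠ Fin.last k ∧ y i = v := by
    intro v
    rcases hcover v with h | ⟨i, h⟩
    · exact ⟨0, fun h' => absurd h h'⟩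
    · exact ⟨i, fun _ => h⟩
  choose c hc using hcov
  let G : (V' → EuclideanSpace ℝ (Fin d)) → (Fin k → EuclideanSpace ℝ (Fin d)) →
      V → EuclideanSpace ℝ (Fin d) := fun r u v =>
    if hv : v ∈ V' then r ⟨v, hv⟩ else chainPos lam u (c v)
  have G1 : ∀ r u v (hv : v ∈ V'), G r u v = r ⟨v, hv⟩ := fun r u v hv => by simp [G, hv]
  have G2 : ∀ r u, r ⟨x₀, hx₀⟩ = 0 → r ⟨xk, hxk⟩ = ∑ i, lam i • u i →
      ∀ j, G r u (y j) = chainPos lam u j := by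
    intro r u h0 h1 j
    by_cases hj0 : j = 0
    · subst hj0
      rw [hy0, G1 _ _ _ hx₀, h0, chainPos_zero]
    by_cases hjk : j = Fin.last k
    · subst hjk
      rw [hyk, G1 _ _ _ hxk, h1, chainPos_last]
    have hn := hynot j hj0 hjk
    obtain ⟨a1, a2, a3⟩ := hc (y j) hn
    have : c (y j) = j := hyinj _ _ a1 a2 hj0 hjk a3
    simp [G, hn, this]
  have F1 : ∀ p : V → EuclideanSpace ℝ (Fin d), p x₀ = 0 → ∀ j,
      chainPos lam (fun i : Fin k => (lam i)⁻¹ • (p (y i.succ) - p (y i.castSucc))) j = p (y j) := by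
    intro p h0 j
    induction j using Fin.induction with
    | zero => rw [chainPos_zero, hy0, h0]
    | succ i ih =>
      rw [chainPos_succ, ih, smul_inv_smul₀ (hlampos i).ne']
      abel
  refine ⟨{
    toFun := fun p => ⟨⟨⟨fun v => p.1 v, fun e he => p.2.1 e (hE ▸ Or.inl he), p.2.2⟩,
      fun i : Fin k => (lam i)⁻¹ • (p.1 (y i.succ) - p.1 (y i.castSucc))⟩, ?_, ?_⟩
    invFun := fun q => ⟨G q.1.1.1 q.1.2, ?_, ?_⟩
    left_inv := ?_
    right_inv := ?_
    continuous_toFun := ?_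
    continuous_invFun := ?_ }, ?_⟩
  · intro i
    have h := p.2.1 (y i.castSucc, y i.succ) (hE ▸ Or.inr ⟨i, rfl⟩)
    rw [← hlam i, norm_sub_rev] at h
    simp only at h ⊢
    rw [norm_smul, h, norm_inv, Real.norm_of_nonneg (hlampos i).le,
      inv_mul_cancel₀ (hlampos i).ne']
  · have := F1 p.1 p.2.2 (Fin.last k)
    rw [chainPos_last, hyk] at this
    exact this.symm
  · intro e he
    rw [hE] at he
    rcases he with he | ⟨i, rfl⟩
    · rw [G1 _ _ _ (hE' e he).1, G1 _ _ _ (hE' e he).2]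
      exact q.1.1.2.1 e he
    · simp only
      rw [G2 _ _ q.1.1.2.2 q.2.2, G2 _ _ q.1.1.2.2 q.2.2, chainPos_succ, norm_sub_rev,
        add_sub_cancel_left, norm_smul, q.2.1 i, mul_one, Real.norm_of_nonneg (hlampos i).le,
        hlam i]
  · rw [G1 _ _ _ hx₀]
    exact q.1.1.2.2
  · intro p
    apply Subtype.ext
    funext v
    by_cases hv : v ∈ V'
    · exact G1 _ _ _ hv
    · obtain ⟨-, -, a3⟩ := hc v hv
      have := F1 p.1 p.2.2 (c v)
      rw [a3] at this
      simp only [G, hv, dif_neg, not_false_eq_true]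
      exact this
  · intro q
    apply Subtype.ext
    apply Prod.ext
    · apply Subtype.ext
      funext v
      exact G1 _ _ _ v.2
    · funext i
      simp only
      rw [G2 _ _ q.1.1.2.2 q.2.2, G2 _ _ q.1.1.2.2 q.2.2, chainPos_succ,
        add_sub_cancel_left, inv_smul_smul₀ (hlampos i).ne']
  · apply Continuous.subtype_mk
    apply Continuous.prodMk
    · apply Continuous.subtype_mk
      exact continuous_pi fun v => (continuous_apply _).comp continuous_subtype_val
    · refine continuous_pi fun i => ?_
      have hh : ∀ w : V, Continuous fun a : {p : V → EuclideanSpace ℝ (Fin d) //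
             (∀ e ∈ E, ‖p e.1 - p e.2‖ = ℓ e) ∧ p x₀ = 0} => a.1 w :=
        fun w => (continuous_apply w).comp continuous_subtype_val
      exact ((hh (y i.succ)).sub (hh (y i.castSucc))).const_smul ((lam i)⁻¹)
  · apply Continuous.subtype_mk
    refine continuous_pi fun v => ?_
    by_cases hv : v ∈ V'
    · simp only [G, hv, dif_pos]
      exact (continuous_apply _).comp
        (continuous_subtype_val.comp (continuous_fst.comp continuous_subtype_val))
    · simp only [G, hv, dif_neg, not_false_eq_true, chainPos]
      refine continuous_finsetSum _ fun i _ => ?_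
      split_ifs
      · fun_prop
      · fun_prop
  · intro p
    exact ⟨rfl, rfl⟩
end

section
/- Let d ≥ 2, k ≥ 1 and ℓ : Fin k → ℝ with ℓ i > 0 for all i, with open-chain work map φ, and let e₁ be the first standard basis vector of EuclideanSpace ℝ (Fin d). Define the reduced configuration space of the associated prismatic closed (k+1)-chain as Ĉ = {u ∈ (S^{d-1})^k : φ(u) = t • e₁ for some t ≥ 0}. Let u⁰ ∈ (S^{d-1})^k with v := φ(u⁰) ≠ 0, let R be a linear isometry of EuclideanSpace ℝ (Fin d) with R v = ‖v‖ • e₁, and set û⁰ = (R (u⁰ i))_i ∈ Ĉ. Then there exist an open neighborhood W of u⁰ in (S^{d-1})^k, an open neighborhood U of û⁰ in Ĉ, and a homeomorphism h : W → U × ℝ^{d−1} such that h(u⁰) = (û⁰, 0) and ‖φ(w)‖ = ‖φ((h w).1)‖ for every w ∈ W. -/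
open scoped BigOperators

noncomputable section

abbrev EE (n : ℕ) := EuclideanSpace ℝ (Fin n)

def e1 (n : ℕ) : EE (n+1) := EuclideanSpace.single (0 : Fin (n+1)) (1 : ℝ)

def mm {n : ℕ} (x : EE n) : EE (n+1) := WithLp.toLp 2 (Fin.cons (1:ℝ) (fun i => x i))

def qq {n : ℕ} (p : EE (n+1)) : EE n := WithLp.toLp 2 (fun i => p i.succ / (‖p‖ + p 0))

def TT {n : ℕ} (m : EE n) : EE n ≃ₗᵢ[ℝ] EE n := (Submodule.span ℝ {m}).reflection

lemma TT_apply {n : ℕ} (m v : EE n) : TT m v = (2:ℝ) • (inner ℝ m v / ‖m‖^2) • m - v := by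
  have := Submodule.reflection_singleton_apply (𝕜 := ℝ) m v
  unfold TT
  rw [this]
  simp [two_smul]

lemma TT_TT {n : ℕ} (m v : EE n) : TT m (TT m v) = v := by
  simp [TT]

lemma norm_e1 (n : ℕ) : ‖e1 n‖ = 1 := by simp [e1]

lemma inner_e1 {n : ℕ} (p : EE (n+1)) : inner ℝ (e1 n) p = p 0 := by
  simp [e1, EuclideanSpace.inner_single_left]

lemma TT_e1 (n : ℕ) : TT (e1 n) (e1 n) = e1 n := by
  rw [TT_apply, real_inner_self_eq_norm_sq, norm_e1]
  simp [two_smul]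

lemma mm_zero' {n : ℕ} (x : EE n) : mm x 0 = 1 := by simp [mm]

lemma mm_ne {n : ℕ} (x : EE n) : mm x ≠ 0 := by
  intro h
  have := mm_zero' x
  rw [h] at this
  simp at this

lemma mm_zero (n : ℕ) : mm (0 : EE n) = e1 n := by
  ext i
  refine Fin.cases ?_ (fun i => ?_) i <;> simp [mm, e1]

lemma mm_qq {n : ℕ} (p : EE (n+1)) (hp : 0 < ‖p‖ + p 0) :
    mm (qq p) = (‖p‖ + p 0)⁻¹ • (p + ‖p‖ • e1 n) := by
  ext i
  refine Fin.cases ?_ (fun i => ?_) i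
  · simp [mm, e1]
    field_simp
    ring
  · simp [mm, e1, qq]
    field_simp

lemma TT_smul {n : ℕ} (m v : EE n) (c : ℝ) (hc : c ≠ 0) : TT (c • m) v = TT m v := by
  unfold TT
  simp only [Submodule.span_singleton_smul_eq (IsUnit.mk0 c hc)]

lemma TT_mm_qq {n : ℕ} (p : EE (n+1)) (hp : 0 < ‖p‖ + p 0) :
    TT (mm (qq p)) p = ‖p‖ • e1 n := by
  have hp0 : p ≠ 0 := by rintro rfl; simp at hp
  have hn : 0 < ‖p‖ := norm_pos_iff.2 hp0
  rw [mm_qq p hp, TT_smul _ _ _ (inv_ne_zero hp.ne'), TT_apply]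
  have h1 : inner ℝ (p + ‖p‖ • e1 n) p = ‖p‖ * (‖p‖ + p 0) := by
    rw [inner_add_left, inner_smul_left, inner_e1, real_inner_self_eq_norm_sq]
    simp; ring
  have h2 : ‖p + ‖p‖ • e1 n‖^2 = 2 * ‖p‖ * (‖p‖ + p 0) := by
    rw [norm_add_sq_real, inner_smul_right, real_inner_comm, inner_e1, norm_smul, norm_e1]
    simp; ring
  rw [h1, h2, smul_smul]
  have : (2:ℝ) * (‖p‖ * (‖p‖ + p 0) / (2 * ‖p‖ * (‖p‖ + p 0))) = 1 := by field_simp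
  rw [this]
  simp

lemma TT_mm_e1 {n : ℕ} (x : EE n) (t : ℝ) :
    TT (mm x) (t • e1 n) = (2 * t / ‖mm x‖^2) • mm x - t • e1 n := by
  rw [TT_apply, inner_smul_right, real_inner_comm, inner_e1, mm_zero', smul_smul]
  congr 2; ring

lemma norm_TT {n : ℕ} (m v : EE n) : ‖TT m v‖ = ‖v‖ := (TT m).norm_map v

lemma back_zero {n : ℕ} (x : EE n) (t : ℝ) (ht : 0 < t) :
    ‖TT (mm x) (t • e1 n)‖ + (TT (mm x) (t • e1 n)) 0 = 2 * t / ‖mm x‖^2 := by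
  rw [norm_TT, TT_mm_e1, norm_smul, norm_e1]
  simp [mm_zero', e1, abs_of_pos ht]

lemma back_pos {n : ℕ} (x : EE n) (t : ℝ) (ht : 0 < t) :
    0 < ‖TT (mm x) (t • e1 n)‖ + (TT (mm x) (t • e1 n)) 0 := by
  rw [back_zero x t ht]
  have := norm_pos_iff.2 (mm_ne x)
  positivity

lemma qq_back {n : ℕ} (x : EE n) (t : ℝ) (ht : 0 < t) :
    qq (TT (mm x) (t • e1 n)) = x := by
  have := norm_pos_iff.2 (mm_ne x)
  ext i
  simp only [qq]
  rw [back_zero x t ht, TT_mm_e1]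
  have h : mm x i.succ = x i := by simp [mm]
  simp [e1, h]
  field_simp

lemma continuous_mm {n : ℕ} : Continuous (mm (n := n)) := by
  unfold mm
  refine (PiLp.continuous_toLp 2 _).comp ?_
  refine continuous_pi fun i => ?_
  refine Fin.cases ?_ (fun i => ?_) i
  · simp only [Fin.cons_zero]; fun_prop
  · simp only [Fin.cons_succ]; fun_prop

lemma cont_TT {X : Type*} [TopologicalSpace X] {n : ℕ} (f g : X → EE n) (hf : Continuous f)
    (hg : Continuous g) (h0 : ∀ x, f x ≠ 0) : Continuous fun x => TT (f x) (g x) := by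
  simp only [TT_apply]
  have : ∀ x, ‖f x‖^2 ≠ 0 := fun x => pow_ne_zero _ (norm_ne_zero_iff.2 (h0 x))
  fun_prop (disch := assumption)

lemma cont_qq {X : Type*} [TopologicalSpace X] {n : ℕ} (f : X → EE (n+1)) (hf : Continuous f)
    (h0 : ∀ x, 0 < ‖f x‖ + f x 0) : Continuous fun x => qq (f x) := by
  unfold qq
  refine (PiLp.continuous_toLp 2 _).comp ?_
  refine continuous_pi fun i => ?_
  have : ∀ x, ‖f x‖ + f x 0 ≠ 0 := fun x => (h0 x).ne'
  fun_prop (disch := assumption)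

def ph {n k : ℕ} (ℓ : Fin k → ℝ) (u : Fin k → EE n) : EE n := ∑ i, ℓ i • u i

lemma ph_map {n k : ℕ} (ℓ : Fin k → ℝ) (u : Fin k → EE n) (T : EE n ≃ₗᵢ[ℝ] EE n) :
    ph ℓ (fun i => T (u i)) = T (ph ℓ u) := by
  simp [ph]

lemma cont_ph {n k : ℕ} (ℓ : Fin k → ℝ) : Continuous (ph (n := n) ℓ) := by
  unfold ph; fun_prop

def WW {n k : ℕ} (ℓ : Fin k → ℝ) (R : EE (n+1) ≃ₗᵢ[ℝ] EE (n+1)) : Set (Fin k → EE (n+1)) :=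
  {u | 0 < ‖R (ph ℓ u)‖ + R (ph ℓ u) 0} ∩ {u | ∀ i, ‖u i‖ = 1}

def UU {n k : ℕ} (ℓ : Fin k → ℝ) : Set (Fin k → EE (n+1)) :=
  {u | 0 < (ph ℓ u) 0} ∩ {u | (∀ i, ‖u i‖ = 1) ∧ ∃ t : ℝ, 0 ≤ t ∧ ph ℓ u = t • e1 n}

lemma UU_pos {n k : ℕ} {ℓ : Fin k → ℝ} {u : Fin k → EE (n+1)} (hu : u ∈ UU ℓ) :
    ∃ t : ℝ, 0 < t ∧ ph ℓ u = t • e1 n := by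
  obtain ⟨h, -, t, -, ht⟩ := hu
  refine ⟨t, ?_, ht⟩
  simpa [ht, e1] using h

lemma fwd_ph {n k : ℕ} (ℓ : Fin k → ℝ) (R : EE (n+1) ≃ₗᵢ[ℝ] EE (n+1))
    (w : Fin k → EE (n+1)) (hw : w ∈ WW ℓ R) :
    ph ℓ (fun i => TT (e1 n) (TT (mm (qq (R (ph ℓ w)))) (R (w i)))) = ‖R (ph ℓ w)‖ • e1 n := by
  rw [ph_map, ph_map, ph_map, TT_mm_qq _ hw.1, map_smul, TT_e1]

lemma bwd_ph {n k : ℕ} (ℓ : Fin k → ℝ) (R : EE (n+1) ≃ₗᵢ[ℝ] EE (n+1))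
    (u : Fin k → EE (n+1)) (x : EE n) (t : ℝ) (h : ph ℓ u = t • e1 n) :
    R (ph ℓ (fun i => R.symm (TT (mm x) (TT (e1 n) (u i))))) = TT (mm x) (t • e1 n) := by
  rw [ph_map, ph_map, ph_map, h, map_smul (TT (e1 n)), TT_e1, R.apply_symm_apply]

def HH {n k : ℕ} (ℓ : Fin k → ℝ) (R : EE (n+1) ≃ₗᵢ[ℝ] EE (n+1)) :
    ↥(WW ℓ R) ≃ₜ ↥(UU (n := n) ℓ) × EE n where
  toFun w := (⟨fun i => TT (e1 n) (TT (mm (qq (R (ph ℓ w.1)))) (R (w.1 i))), by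
    have h := fwd_ph ℓ R w.1 w.2
    have hp : 0 < ‖R (ph ℓ w.1)‖ := by
      rw [norm_pos_iff]
      intro h0
      have := w.2.1
      simp only [Set.mem_ofPred_eq, h0] at this
      simp at this
    refine ⟨?_, ?_, _, hp.le, h⟩
    · rw [Set.mem_ofPred_eq, h]
      simpa [e1] using hp
    · intro i
      rw [norm_TT, norm_TT, R.norm_map, w.2.2 i]⟩, qq (R (ph ℓ w.1)))
  invFun z := ⟨fun i => R.symm (TT (mm z.2) (TT (e1 n) (z.1.1 i))), by
    obtain ⟨t, ht, h⟩ := UU_pos z.1.2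
    refine ⟨?_, fun i => ?_⟩
    · rw [Set.mem_ofPred_eq, bwd_ph ℓ R _ _ t h]
      exact back_pos _ _ ht
    · rw [R.symm.norm_map, norm_TT, norm_TT, z.1.2.2.1 i]⟩
  left_inv w := by
    ext1
    funext i
    simp [TT_TT]
  right_inv z := by
    obtain ⟨t, ht, h⟩ := UU_pos z.1.2
    have hx : qq (R (ph ℓ (fun i => R.symm (TT (mm z.2) (TT (e1 n) (z.1.1 i)))))) = z.2 := by
      rw [bwd_ph ℓ R _ _ t h, qq_back _ _ ht]
    refine Prod.ext (Subtype.ext (funext fun i => ?_)) hx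
    dsimp only
    rw [hx, R.apply_symm_apply, TT_TT, TT_TT]
  continuous_toFun := by
    have hc : Continuous fun w : ↥(WW ℓ R) => R (ph ℓ w.1) :=
      R.continuous.comp ((cont_ph ℓ).comp continuous_subtype_val)
    have hq := cont_qq _ hc (fun w => w.2.1)
    refine Continuous.prodMk (Continuous.subtype_mk (continuous_pi fun i => ?_) _) hq
    refine (TT (e1 n)).continuous.comp (cont_TT _ _ (continuous_mm.comp hq) ?_ (fun _ => mm_ne _))
    exact R.continuous.comp ((continuous_apply i).comp continuous_subtype_val)
  continuous_invFun := by
    refine Continuous.subtype_mk (continuous_pi fun i => ?_) _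
    refine R.symm.continuous.comp
      (cont_TT _ _ (continuous_mm.comp continuous_snd) ?_ (fun _ => mm_ne _))
    exact (TT (e1 n)).continuous.comp
      ((continuous_apply i).comp (continuous_subtype_val.comp continuous_fst))

theorem stmt_8 (d k : ℕ) (hd : 2 ≤ d) [NeZero d] (hk : 1 ≤ k)
    (ℓ : Fin k → ℝ) (hℓ : ∀ i, 0 < ℓ i)
    (u0 : Fin k → EuclideanSpace ℝ (Fin d)) (hu0 : ∀ i, ‖u0 i‖ = 1)
    (hv : (∑ i, ℓ i • u0 i) ≠ 0)
    (R : EuclideanSpace ℝ (Fin d) ≃ₗᵢ[ℝ] EuclideanSpace ℝ (Fin d))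
    (hR : R (∑ i, ℓ i • u0 i) =
      ‖∑ i, ℓ i • u0 i‖ • (EuclideanSpace.single (0 : Fin d) (1 : ℝ))) :
    ∃ W : Set (Fin k → EuclideanSpace ℝ (Fin d)),
      W ⊆ {u | ∀ i, ‖u i‖ = 1} ∧
      (∃ O, IsOpen O ∧ W = O ∩ {u | ∀ i, ‖u i‖ = 1}) ∧
      ∃ U : Set (Fin k → EuclideanSpace ℝ (Fin d)),
        U ⊆ {u | (∀ i, ‖u i‖ = 1) ∧ ∃ t : ℝ, 0 ≤ t ∧
              ∑ i, ℓ i • u i = t • (EuclideanSpace.single (0 : Fin d) (1 : ℝ))} ∧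
        (∃ O', IsOpen O' ∧ U = O' ∩ {u | (∀ i, ‖u i‖ = 1) ∧ ∃ t : ℝ, 0 ≤ t ∧
              ∑ i, ℓ i • u i = t • (EuclideanSpace.single (0 : Fin d) (1 : ℝ))}) ∧
        ∃ (hWmem : u0 ∈ W) (hUmem : (fun i => R (u0 i)) ∈ U)
          (h : ↥W ≃ₜ ↥U × EuclideanSpace ℝ (Fin (d - 1))),
          h ⟨u0, hWmem⟩ = (⟨fun i => R (u0 i), hUmem⟩, 0) ∧
          ∀ w : ↥W, ‖∑ i, ℓ i • (w : Fin k → EuclideanSpace ℝ (Fin d)) i‖ =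
            ‖∑ i, ℓ i • ((h w).1 : Fin k → EuclideanSpace ℝ (Fin d)) i‖ := by
  obtain ⟨n, rfl⟩ : ∃ n, d = n + 1 := ⟨d - 1, by omega⟩
  change R (ph ℓ u0) = ‖ph ℓ u0‖ • e1 n at hR
  change ph ℓ u0 ≠ 0 at hv
  have hn : 0 < ‖ph ℓ u0‖ := norm_pos_iff.2 hv
  have hW : u0 ∈ WW ℓ R := by
    refine ⟨?_, hu0⟩
    rw [Set.mem_ofPred_eq, hR]
    simp [e1]
    positivity
  have hU : (fun i => R (u0 i)) ∈ UU (n := n) ℓ := by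
    have h : ph ℓ (fun i => R (u0 i)) = ‖ph ℓ u0‖ • e1 n := by rw [ph_map, hR]
    refine ⟨?_, fun i => by rw [R.norm_map, hu0 i], _, hn.le, h⟩
    rw [Set.mem_ofPred_eq, h]
    simpa [e1] using hn
  have hq : qq (R (ph ℓ u0)) = 0 := by
    rw [hR]; ext i; simp [qq, e1]
  refine ⟨WW ℓ R, fun u hu => hu.2, ⟨_, ?_, rfl⟩, UU ℓ, fun u hu => hu.2, ⟨_, ?_, rfl⟩,
    hW, hU, HH ℓ R, ?_, ?_⟩
  · have := R.continuous.comp (cont_ph (n := n+1) ℓ)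
    refine isOpen_lt continuous_const (this.norm.add ?_)
    exact (EuclideanSpace.proj (𝕜 := ℝ) (0 : Fin (n+1))).continuous.comp this
  · refine isOpen_lt continuous_const ?_
    exact (EuclideanSpace.proj (𝕜 := ℝ) (0 : Fin (n+1))).continuous.comp (cont_ph (n := n+1) ℓ)
  · refine Prod.ext (Subtype.ext (funext fun i => ?_)) hq
    change TT (e1 n) (TT (mm (qq (R (ph ℓ u0)))) (R (u0 i))) = R (u0 i)
    rw [hq, mm_zero, TT_TT]
  · intro w
    change ‖ph ℓ w.1‖ =
      ‖ph ℓ (fun i => TT (e1 n) (TT (mm (qq (R (ph ℓ w.1)))) (R (w.1 i))))‖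
    rw [fwd_ph ℓ R w.1 w.2, norm_smul, norm_e1, R.norm_map]
    simp
end
end

section
/- Let Γ be a linkage in ℝ^d (d ≥ 2) with base vertex x* and a distinguished vertex x_e ≠ x*, work map ψ : C*(Γ) → EuclideanSpace ℝ (Fin d) given by ψ(q) = q(x_e), reduced configuration space Ĉ(Γ) = {q ∈ C*(Γ) : q(x_e) = t • e₁ for some t > 0}, and reduced work map ψ̃(q) = ‖q(x_e)‖. Let V ∈ Ĉ(Γ) with ψ̃(V) = a₀ > 0, and assume there are N ≥ 1 and a smooth map g : ℝ^N → (EuclideanSpace ℝ (Fin d))^V with g(0) = V, g a homeomorphism onto an open neighborhood of V in Ĉ(Γ), whose Fréchet derivative is injective at every point, and such that 0 is a nondegenerate critical point of ψ̃ ∘ g (zero derivative, invertible Hessian). Then there exist n ≥ 1, lengths λ : Fin n → ℝ with λ i > 0, an aligned tuple u⁰ ∈ (S^{d-1})^n for the open n-chain with work map η satisfying η(u⁰) = a₀ • e₁, nonnegative integers s, s', open neighborhoods W of V in Ĉ(Γ) and W' of u⁰ in Ĉ' := {u ∈ (S^{d-1})^n : η(u) = t • e₁ for some t > 0}, homeomorphisms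 α : W → U × ℝ^s and β : W' → U' × ℝ^{s'} onto products with open factors U, U', with α(V) = (V̂, 0) and β(u⁰) = (û⁰, 0), and a homeomorphism f : U → U' with f(V̂) = û⁰, such that ψ̃ on W and the reduced work map u ↦ ‖η(u)‖ on W' factor through the projections to U and U' respectively, and the induced functions on U and U' correspond under f (i.e., for all w ∈ W, ψ̃(w) = ‖η(β⁻¹(f((α w).1), 0))‖). -/
open scoped BigOperators

/-- The first standard basis vector of `EuclideanSpace ℝ (Fin d)`. -/
noncomputable def firstBasis (d : ℕ) [NeZero d] : EuclideanSpace ℝ (Fin d) :=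
  EuclideanSpace.single 0 1

/-- The pointed configuration space of the linkage with vertices `V`, edges `E`,
lengths `ℓ` and base vertex `xs`. -/
def pointedConf (d : ℕ) (V : Type) (E : Set (V × V)) (ℓ : V × V → ℝ) (xs : V) :
    Set (V → EuclideanSpace ℝ (Fin d)) :=
  {q | (∀ e ∈ E, ‖q e.1 - q e.2‖ = ℓ e) ∧ q xs = 0}

/-- The reduced configuration space: pointed configurations whose end-effector `xe`
lies on the positive ray spanned by the first basis vector. -/
noncomputable def reducedConf (d : ℕ) [NeZero d] (V : Type) (E : Set (V × V))
    (ℓ : V × V → ℝ) (xs xe : V) : Set (V → EuclideanSpace ℝ (Fin d)) :=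
  {q | q ∈ pointedConf d V E ℓ xs ∧ ∃ t : ℝ, 0 < t ∧ q xe = t • firstBasis d}

/-- The reduced configuration space of an open `n`-chain with lengths `lam`:
tuples of unit direction vectors whose work-map value lies on the positive
ray spanned by the first basis vector. -/
noncomputable def chainReducedConf (d n : ℕ) [NeZero d] (lam : Fin n → ℝ) :
    Set (Fin n → EuclideanSpace ℝ (Fin d)) :=
  {u | (∀ i, ‖u i‖ = 1) ∧ ∃ t : ℝ, 0 < t ∧ ∑ i, lam i • u i = t • firstBasis d}

section
open Topology Filter

theorem aux_ii {E G : Type*} [NormedAddCommGroup E] [NormedSpace ℝ E]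
    [NormedAddCommGroup G] [NormedSpace ℝ G] (H : E → G) (hHc : Continuous H) (x : E) :
    IntervalIntegrable (fun t : ℝ => (1 - t) • H (t • x)) MeasureTheory.volume 0 1 := by
  apply Continuous.intervalIntegrable
  fun_prop

theorem aux_int {E G : Type*} [NormedAddCommGroup E] [NormedSpace ℝ E]
    [NormedAddCommGroup G] [NormedSpace ℝ G] [CompleteSpace G] (H : E → G)
    (hF2 : ContDiff ℝ 1 H) :
    ((2 : ℝ) • ∫ t in (0 : ℝ)..1, (1 - t) • H (t • (0 : E))) = H 0 ∧
    ∃ B' : E →L[ℝ] G,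
      HasStrictFDerivAt (fun x => (2 : ℝ) • ∫ t in (0 : ℝ)..1, (1 - t) • H (t • x)) B' 0 := by
  have hHc : Continuous H := hF2.continuous
  have hint : ∀ x, IntervalIntegrable (fun t : ℝ => (1 - t) • H (t • x)) MeasureTheory.volume 0 1 := by
    intro x
    apply Continuous.intervalIntegrable
    fun_prop
  constructor
  · simp only [smul_zero]
    rw [intervalIntegral.integral_smul_const, smul_smul]
    have : (2 : ℝ) * ∫ t in (0 : ℝ)..1, (1 - t) = 1 := by
      rw [intervalIntegral.integral_sub (by simp) (by simp)]; norm_num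
    rw [this, one_smul]
  have hs : HasStrictFDerivAt H (fderiv ℝ H 0) 0 :=
    (hF2.contDiffAt).hasStrictFDerivAt (by norm_num)
  set H' := fderiv ℝ H 0
  refine ⟨(2 : ℝ) • (∫ t in (0 : ℝ)..1, (1 - t) * t) • H', ?_⟩
  rw [hasStrictFDerivAt_iff_isLittleO, Asymptotics.isLittleO_iff] at *
  intro c hc
  have h1 := hs (c := c / 2) (by positivity)
  rw [Metric.eventually_nhds_iff] at h1 ⊢
  obtain ⟨ε, hε, h1⟩ := h1
  refine ⟨ε, hε, ?_⟩
  rintro ⟨x, y⟩ hxy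
  simp only [Prod.dist_eq, dist_zero_right, sup_lt_iff] at hxy
  have e : ((2 : ℝ) • ∫ t in (0 : ℝ)..1, (1 - t) • H (t • x)) -
      ((2 : ℝ) • ∫ t in (0 : ℝ)..1, (1 - t) • H (t • y)) -
      ((2 : ℝ) • (∫ t in (0 : ℝ)..1, (1 - t) * t) • H') (x - y) =
      (2 : ℝ) • ∫ t in (0 : ℝ)..1, (1 - t) • (H (t • x) - H (t • y) - H' (t • x - t • y)) := by
    have : ∀ t : ℝ, (1 - t) • (H (t • x) - H (t • y) - H' (t • x - t • y)) =
       (1 - t) • H (t • x) - (1 - t) • H (t • y) - ((1 - t) * t) • H' (x - y) := by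
      intro t
      rw [← smul_sub t x y, map_smul, smul_sub, smul_sub, smul_smul]
    simp_rw [this]
    rw [intervalIntegral.integral_sub ((hint x).sub (hint y)), intervalIntegral.integral_sub (hint x) (hint y),
      intervalIntegral.integral_smul_const]
    · simp [smul_sub]
    · apply Continuous.intervalIntegrable
      fun_prop
  simp only [e]
  rw [norm_smul]
  have hb : ‖∫ t in (0 : ℝ)..1, (1 - t) • (H (t • x) - H (t • y) - H' (t • x - t • y))‖ ≤
      (c / 2 * ‖x - y‖) * |1 - 0| := by
    apply intervalIntegral.norm_integral_le_of_norm_le_const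
    intro t ht
    rw [Set.uIoc_of_le zero_le_one] at ht
    have ht0 := ht.1
    have ht1 := ht.2
    have hn : ∀ z : E, ‖t • z‖ ≤ ‖z‖ := by
      intro z
      rw [norm_smul, Real.norm_eq_abs, abs_of_pos ht0]
      exact mul_le_of_le_one_left (norm_nonneg _) ht1
    have := @h1 (t • x, t • y) (by
      simp only [Prod.dist_eq, dist_zero_right, sup_lt_iff]
      exact ⟨(hn x).trans_lt hxy.1, (hn y).trans_lt hxy.2⟩)
    simp only at this
    rw [norm_smul]
    have h3 : ‖t • x - t • y‖ ≤ ‖x - y‖ := by rw [← smul_sub]; exact hn _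
    have h4 : ‖1 - t‖ ≤ 1 := by rw [Real.norm_eq_abs, abs_le]; constructor <;> linarith
    calc _ ≤ 1 * (c / 2 * ‖t • x - t • y‖) := by gcongr
      _ ≤ _ := by rw [one_mul]; gcongr
  simp only [sub_zero, abs_one, mul_one, Real.norm_ofNat] at hb ⊢
  linarith

theorem aux_taylor {E : Type*} [NormedAddCommGroup E] [NormedSpace ℝ E] (F : E → ℝ)
    (hF : ContDiff ℝ 3 F) (h0 : fderiv ℝ F 0 = 0) :
    ∃ B : E → E →L[ℝ] E →L[ℝ] ℝ, B 0 = fderiv ℝ (fderiv ℝ F) 0 ∧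
      (∃ B' : E →L[ℝ] (E →L[ℝ] E →L[ℝ] ℝ), HasStrictFDerivAt B B' 0) ∧ (∀ x y z, B x y z = B x z y) ∧
      ∀ x, F x = F 0 + (1 / 2) * B x x x := by
  have hF1 : ContDiff ℝ 2 (fderiv ℝ F) := hF.fderiv_right (by norm_num)
  have hF2 : ContDiff ℝ 1 (fderiv ℝ (fderiv ℝ F)) := hF1.fderiv_right (by norm_num)
  set H := fderiv ℝ (fderiv ℝ F) with hH
  have hHc : Continuous H := hF2.continuous
  have hsym : ∀ x y z, H x y z = H x z y := by
    intro x y z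
    have := (hF.contDiffAt (x := x)).isSymmSndFDerivAt (by simp; norm_num)
    exact this.eq y z
  have hint := fun x => aux_ii H hHc x
  refine ⟨fun x => (2 : ℝ) • ∫ t in (0 : ℝ)..1, (1 - t) • H (t • x), (aux_int H hF2).1, (aux_int H hF2).2, ?_, ?_⟩
  · intro x y z
    have key : ∀ y z, (∫ t in (0 : ℝ)..1, (1 - t) • H (t • x)) y z =
        ∫ t in (0 : ℝ)..1, (1 - t) * H (t • x) y z := by
      intro y z
      rw [ContinuousLinearMap.intervalIntegral_apply (hint x), ContinuousLinearMap.intervalIntegral_apply]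
      · simp
      · apply Continuous.intervalIntegrable
        fun_prop
    simp only [_root_.smul_apply, key]
    simp_rw [hsym _ y z]
  · intro x
    have key : (∫ t in (0 : ℝ)..1, (1 - t) • H (t • x)) x x =
        ∫ t in (0 : ℝ)..1, (1 - t) * H (t • x) x x := by
      rw [ContinuousLinearMap.intervalIntegral_apply (hint x), ContinuousLinearMap.intervalIntegral_apply]
      · simp
      · apply Continuous.intervalIntegrable
        fun_prop
    have hd1 : ∀ t : ℝ, HasDerivAt (fun t : ℝ => F (t • x)) (fderiv ℝ F (t • x) x) t := by
      intro t
      have h := ((hF.differentiable (by norm_num)) (t • x)).hasFDerivAt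
      have h' : HasDerivAt (fun t : ℝ => t • x) x t := by
        simpa using (hasDerivAt_id t).smul_const x
      exact h.comp_hasDerivAt t h'
    have hd2 : ∀ t : ℝ, HasDerivAt (fun t : ℝ => fderiv ℝ F (t • x) x) (H (t • x) x x) t := by
      intro t
      have h := ((hF1.differentiable (by norm_num)) (t • x)).hasFDerivAt
      have h' : HasDerivAt (fun t : ℝ => t • x) x t := by
        simpa using (hasDerivAt_id t).smul_const x
      have := h.comp_hasDerivAt t h'
      have h2 := this.clm_apply (hasDerivAt_const t x)
      simpa using h2
    have hft := intervalIntegral.integral_eq_sub_of_hasDerivAt (a := 0) (b := 1)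
      (f := fun t : ℝ => (1 - t) * fderiv ℝ F (t • x) x + F (t • x))
      (f' := fun t : ℝ => (1 - t) * H (t • x) x x) (by
        intro t _
        have := (((hasDerivAt_id t).const_sub 1).mul (hd2 t)).add (hd1 t)
        refine this.congr_deriv ?_
        simp) (by
        apply Continuous.intervalIntegrable
        fun_prop)
    simp only [_root_.smul_apply, key, hft]
    simp [h0]

theorem aux_sqrt (A : Type*) [NormedRing A] [NormedAlgebra ℝ A] [CompleteSpace A] :
    ∃ (r : A → A) (r' : A →L[ℝ] A), HasStrictFDerivAt r r' 1 ∧ r 1 = 1 ∧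
      (∀ᶠ C in 𝓝 (1 : A), r C * r C = C) ∧ ∀ᶠ R in 𝓝 (1 : A), r (R * R) = R := by
  let sq : A → A := fun R => R * R
  let two : A ≃L[ℝ] A :=
    ContinuousLinearEquiv.smulLeft (Units.mk0 (2 : ℝ) two_ne_zero)
  have hsq : HasStrictFDerivAt sq (two : A →L[ℝ] A) 1 := by
    have h := (hasStrictFDerivAt_id (𝕜 := ℝ) (1 : A)).mul' (hasStrictFDerivAt_id (𝕜 := ℝ) (1 : A))
    refine h.congr_fderiv ?_
    ext R
    simp [two, two_smul]
  have hsq1 : sq 1 = 1 := by simp [sq]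
  refine ⟨hsq.localInverse sq two 1, (two.symm : A →L[ℝ] A), ?_, ?_, ?_, hsq.eventually_left_inverse⟩
  · have := hsq.to_localInverse
    rwa [hsq1] at this
  · have := hsq.localInverse_apply_image
    rwa [hsq1] at this
  · have := hsq.eventually_right_inverse
    rwa [hsq1] at this

theorem aux_morse {E : Type*} [NormedAddCommGroup E] [NormedSpace ℝ E] [CompleteSpace E]
    (B : E → E →L[ℝ] E →L[ℝ] ℝ) (hs : ∃ B' : E →L[ℝ] (E →L[ℝ] E →L[ℝ] ℝ), HasStrictFDerivAt B B' 0)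
    (hsym : ∀ x y z, B x y z = B x z y) (B0 : E ≃L[ℝ] (E →L[ℝ] ℝ))
    (hB0 : ∀ x y, B 0 x y = B0 x y) :
    ∃ φ : OpenPartialHomeomorph E E, 0 ∈ φ.source ∧ φ 0 = 0 ∧
      ∀ x ∈ φ.source, B x x x = B0 (φ x) (φ x) := by
  obtain ⟨B', hs⟩ := hs
  have hsym0 : ∀ y z, B0 y z = B0 z y := by
    intro y z; rw [← hB0, ← hB0, hsym]
  obtain ⟨r, r', hr, hr1, hrr, hinj⟩ := aux_sqrt (E →L[ℝ] E)
  -- C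
  let C : E → (E →L[ℝ] E) := fun x => (B0.symm : (E →L[ℝ] ℝ) →L[ℝ] E) ∘L B x
  have hC0 : C 0 = 1 := by
    ext v
    simp only [C, ContinuousLinearMap.comp_apply, _root_.one_apply_eq_self]
    have : B 0 v = B0 v := by ext z; exact hB0 v z
    rw [this]; simp
  have hCs : ∃ C' : E →L[ℝ] (E →L[ℝ] E), HasStrictFDerivAt C C' 0 := ⟨_, (hasStrictFDerivAt_const _ _).clm_comp hs⟩
  obtain ⟨C', hC⟩ := hCs
  have hBC : ∀ x y, B0 (C x y) = B x y := by intro x y; simp [C]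
  have hRs : HasStrictFDerivAt (fun x => r (C x)) (r' ∘L C') 0 := by
    have : HasStrictFDerivAt r r' (C 0) := by rwa [hC0]
    exact this.comp 0 hC
  have hCt : Tendsto C (𝓝 0) (𝓝 1) := by rw [← hC0]; exact hC.continuousAt
  have hRt : Tendsto (fun x => r (C x)) (𝓝 0) (𝓝 1) := by
    have := hRs.continuousAt.tendsto; rwa [hC0, hr1] at this
  -- adjoint
  let T : (E →L[ℝ] E) → (E →L[ℝ] E) := fun R =>
    (B0.symm : (E →L[ℝ] ℝ) →L[ℝ] E) ∘L ((ContinuousLinearMap.compL ℝ E E ℝ).flip R) ∘L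
      (B0 : E →L[ℝ] (E →L[ℝ] ℝ))
  have hTc : Continuous T := by
    have : Continuous fun R => (ContinuousLinearMap.compL ℝ E E ℝ).flip R := ContinuousLinearMap.continuous _
    fun_prop
  have hT : ∀ R y z, B0 (T R y) z = B0 y (R z) := by intro R y z; simp [T]
  have hT1 : T 1 = 1 := by
    ext y
    apply B0.injective
    ext z
    rw [hT]; simp
  have hTt : Tendsto (fun x => T (r (C x))) (𝓝 0) (𝓝 1) := by
    have := (hTc.tendsto 1).comp hRt
    rwa [hT1] at this
  have hev : ∀ᶠ x in 𝓝 (0 : E), B x x x = B0 (r (C x) x) (r (C x) x) := by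
    filter_upwards [hCt.eventually hrr, hTt.eventually hinj] with x h1 h2
    have h3 : T (r (C x)) * T (r (C x)) = C x := by
      ext y
      apply B0.injective
      ext z
      rw [_root_.mul_apply_eq_comp, hT, hT, ← _root_.mul_apply_eq_comp, h1, hsym0, hBC, hBC, hsym]
    rw [h3] at h2
    conv_rhs => enter [1, 2, 1]; rw [h2]
    rw [hT, ← _root_.mul_apply_eq_comp, h1, hsym0, hBC]
  have hφ : HasStrictFDerivAt (fun x => r (C x) x) ((ContinuousLinearEquiv.refl ℝ E : E ≃L[ℝ] E) : E →L[ℝ] E) 0 := by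
    refine (hRs.clm_apply (hasStrictFDerivAt_id 0)).congr_fderiv ?_
    ext v
    simp [hC0, hr1]
  obtain ⟨S, hS, hSo, h0S⟩ := eventually_nhds_iff.1 hev
  refine ⟨(hφ.toOpenPartialHomeomorph _).restrOpen S hSo, ?_, ?_, ?_⟩
  · simp [h0S, hφ.mem_toOpenPartialHomeomorph_source]
  · simp
  · intro x hx
    simp at hx
    simpa using hS x hx.2


theorem aux_trans {E X : Type*} [NormedAddCommGroup E] [NormedSpace ℝ E] [CompleteSpace E]
    [FiniteDimensional ℝ E]
    [NormedAddCommGroup X] [NormedSpace ℝ X] [FiniteDimensional ℝ X]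
    (g : E → X) (hg : ContDiff ℝ 3 g) (hemb : IsEmbedding g) (C O : Set X) (hO : IsOpen O)
    (hr : Set.range g = O ∩ C) (A : X → X) (hA : Differentiable ℝ A) (hAC : ∀ q ∈ C, A q ∈ C)
    (x0 y0 : E) (h0 : A (g x0) = g y0) (hinj : Function.Injective (fderiv ℝ g y0)) :
    ∃ h : E → E, h x0 = y0 ∧ DifferentiableAt ℝ h x0 ∧ ∀ᶠ x in 𝓝 x0, g (h x) = A (g x) := by
  obtain ⟨π0, hπ0⟩ := LinearMap.exists_leftInverse_of_injective
    (fderiv ℝ g y0 : E →ₗ[ℝ] X) (LinearMap.ker_eq_bot.2 hinj)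
  let π : X →L[ℝ] E := LinearMap.toContinuousLinearMap π0
  have hgs : HasStrictFDerivAt g (fderiv ℝ g y0) y0 :=
    hg.contDiffAt.hasStrictFDerivAt (by norm_num)
  have hφ : HasStrictFDerivAt (fun y => π (g y))
      ((ContinuousLinearEquiv.refl ℝ E : E ≃L[ℝ] E) : E →L[ℝ] E) y0 := by
    refine (π.hasStrictFDerivAt.comp y0 hgs).congr_fderiv ?_
    ext v
    have := LinearMap.congr_fun hπ0 v
    simpa [π] using this
  let ψ := hφ.localInverse _ _ y0
  have hψ : HasStrictFDerivAt ψ _ (π (g y0)) := hφ.to_localInverse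
  have hl : ∀ᶠ y in 𝓝 y0, ψ (π (g y)) = y := hφ.eventually_left_inverse
  have hAg : ContinuousAt (fun x => A (g x)) x0 :=
    (hA.continuous.comp hg.continuous).continuousAt
  refine ⟨fun x => ψ (π (A (g x))), ?_, ?_, ?_⟩
  · simp only [h0]
    exact hl.self_of_nhds
  · have h1 : DifferentiableAt ℝ (fun x => π (A (g x))) x0 :=
      (π.differentiable.comp (hA.comp (hg.differentiable (by norm_num)))) x0
    have h2 : DifferentiableAt ℝ ψ (π (A (g x0))) := by
      rw [h0]; exact hψ.hasFDerivAt.differentiableAt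
    exact h2.comp x0 h1
  · rw [hemb.nhds_eq_comap, eventually_comap] at hl
    have hO' : ∀ᶠ z in 𝓝 (g y0), z ∈ O :=
      hO.mem_nhds ((hr ▸ Set.mem_range_self y0 : g y0 ∈ O ∩ C).1)
    have hAg : Tendsto (fun x => A (g x)) (𝓝 x0) (𝓝 (g y0)) := by rw [← h0]; exact hAg
    filter_upwards [hAg.eventually hl, hAg.eventually hO'] with x h1 h2
    have h3 : A (g x) ∈ Set.range g := by
      rw [hr]
      exact ⟨h2, hAC _ ((hr ▸ Set.mem_range_self x : g x ∈ O ∩ C).2)⟩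
    obtain ⟨y, hy⟩ := h3
    rw [← hy, h1 y hy]

theorem aux_rigid {E X : Type*} [NormedAddCommGroup E] [NormedSpace ℝ E] [CompleteSpace E]
    [FiniteDimensional ℝ E]
    [NormedAddCommGroup X] [NormedSpace ℝ X] [FiniteDimensional ℝ X]
    (g : E → X) (hg : ContDiff ℝ 3 g) (hemb : IsEmbedding g) (C O : Set X) (hO : IsOpen O)
    (hr : Set.range g = O ∩ C) (hinj : Function.Injective (fderiv ℝ g 0))
    (P : X → ℝ) (hF : ContDiff ℝ 3 (fun x => P (g x)))
    (hcrit : fderiv ℝ (fun x => P (g x)) 0 = 0)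
    (hhess : Function.Bijective (fderiv ℝ (fderiv ℝ (fun x => P (g x))) 0))
    (A Ai : ℝ → X → X) (hA : ∀ t, Differentiable ℝ (Ai t)) (hAC : ∀ t, ∀ q ∈ C, Ai t q ∈ C)
    (hAP : ∀ t, ∀ q ∈ C, P (Ai t q) = P q) (hA0 : ∀ t, A t (g 0) ∈ C)
    (hAi : ∀ t, Ai t (A t (g 0)) = g 0)
    (hlim : Tendsto (fun t => A t (g 0)) (𝓝 0) (𝓝 (g 0))) :
    ∀ᶠ t in 𝓝 (0 : ℝ), A t (g 0) = g 0 := by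
  set F := fun x => P (g x)
  have hgC : ∀ x, g x ∈ C := fun x => (hr ▸ Set.mem_range_self x : g x ∈ O ∩ C).2
  have hF1 : ContDiff ℝ 2 (fderiv ℝ F) := hF.fderiv_right (by norm_num)
  have hd : HasFDerivAt (fderiv ℝ F) (fderiv ℝ (fderiv ℝ F) 0) 0 :=
    (hF1.differentiable (by norm_num) 0).hasFDerivAt
  have hiso : ∀ᶠ x in 𝓝 (0 : E), fderiv ℝ F x = 0 → x = 0 := by
    let e : E ≃L[ℝ] (E →L[ℝ] ℝ) := ContinuousLinearEquiv.ofBijective (fderiv ℝ (fderiv ℝ F) 0)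
      (LinearMap.ker_eq_bot.2 hhess.1) (LinearMap.range_eq_top.2 hhess.2)
    have := hd.eventually_ne (c := 0) ⟨_, e.antilipschitz⟩
    rw [eventually_nhdsWithin_iff] at this
    filter_upwards [this] with x hx h
    by_contra hne
    exact hx hne h
  rw [hemb.nhds_eq_comap, eventually_comap] at hiso
  have hO' : ∀ᶠ z in 𝓝 (g 0), z ∈ O := hO.mem_nhds ((hr ▸ Set.mem_range_self 0 : g 0 ∈ O ∩ C).1)
  filter_upwards [hlim.eventually hiso, hlim.eventually hO'] with t h1 h2
  obtain ⟨x, hx⟩ : A t (g 0) ∈ Set.range g := by rw [hr]; exact ⟨h2, hA0 t⟩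
  have hx0 : x = 0 := by
    apply h1 x hx
    obtain ⟨k, hk0, hkd, hke⟩ := aux_trans g hg hemb C O hO hr (Ai t) (hA t) (hAC t) x 0
      (by rw [hx, hAi]) hinj
    have hFk : F =ᶠ[𝓝 x] F ∘ k := by
      filter_upwards [hke] with y hy
      simp only [F, Function.comp, hy]
      exact (hAP t _ (hgC y)).symm
    rw [hFk.fderiv_eq, fderiv_comp x (hF.differentiable (by norm_num) _) hkd, hk0, hcrit]
    simp
  rw [← hx, hx0]

theorem aux_tca {ι E G : Type*} [NormedAddCommGroup E] [NormedSpace ℝ E]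
    [NormedAddCommGroup G] [NormedSpace ℝ G] {l : Filter ι} {f : ι → E →L[ℝ] G} {x : ι → E}
    {a : E →L[ℝ] G} {b : E} (hf : Tendsto f l (𝓝 a)) (hx : Tendsto x l (𝓝 b)) :
    Tendsto (fun i => f i (x i)) l (𝓝 (a b)) :=
  ((isBoundedBilinearMap_apply (𝕜 := ℝ) (E := E) (F := G)).continuous.tendsto (a, b)).comp
    (hf.prodMk_nhds hx)

theorem aux_hess {E : Type*} [NormedAddCommGroup E] [NormedSpace ℝ E]
    (F : E → ℝ) (B : E → E →L[ℝ] E →L[ℝ] ℝ) (hB : ContinuousAt B 0)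
    (hF : ∀ x, F x = F 0 + (1 / 2) * B x x x) (h : E → E) (h0 : h 0 = 0)
    (hd : DifferentiableAt ℝ h 0) (hFh : ∀ᶠ x in 𝓝 0, F (h x) = F x) (v : E) :
    B 0 (fderiv ℝ h 0 v) (fderiv ℝ h 0 v) = B 0 v v := by
  have hc : Tendsto (fun t : ℝ => t • v) (𝓝 0) (𝓝 0) := by
    have : Continuous (fun t : ℝ => t • v) := by fun_prop
    simpa using this.tendsto 0
  have hder : HasDerivAt (fun t : ℝ => h (t • v)) (fderiv ℝ h 0 v) 0 := by
    have h' : HasDerivAt (fun t : ℝ => t • v) v 0 := by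
      simpa using (hasDerivAt_id (0 : ℝ)).smul_const v
    have hd' : HasFDerivAt h (fderiv ℝ h 0) ((0 : ℝ) • v) := by
      rw [zero_smul]; exact hd.hasFDerivAt
    exact hd'.comp_hasDerivAt 0 h'
  have hsl := hasDerivAt_iff_tendsto_slope.1 hder
  have hle : 𝓝[≠] (0 : ℝ) ≤ 𝓝 0 := nhdsWithin_le_nhds
  have hht : Tendsto (fun t : ℝ => h (t • v)) (𝓝[≠] 0) (𝓝 0) := by
    have := hder.continuousAt.tendsto
    simp only [zero_smul, h0] at this
    exact this.mono_left hle
  have hB1 : Tendsto (fun t : ℝ => B (h (t • v))) (𝓝[≠] 0) (𝓝 (B 0)) := hB.tendsto.comp hht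
  have hB2 : Tendsto (fun t : ℝ => B (t • v)) (𝓝[≠] 0) (𝓝 (B 0)) :=
    hB.tendsto.comp (hc.mono_left hle)
  have l1 := aux_tca (aux_tca hB1 hsl) hsl
  have l2 := aux_tca (aux_tca hB2 (tendsto_const_nhds (x := v))) (tendsto_const_nhds (x := v))
  refine tendsto_nhds_unique_of_eventuallyEq l1 l2 ?_
  filter_upwards [(hc.mono_left hle).eventually hFh, self_mem_nhdsWithin] with t ht hne
  rw [hF (h _), hF (t • v)] at ht
  have hne' : t ≠ 0 := hne
  have e1 : slope (fun t : ℝ => h (t • v)) 0 t = t⁻¹ • h (t • v) := by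
    simp [slope, h0]
  rw [e1]
  simp only [map_smul, _root_.smul_apply, smul_eq_mul] at ht ⊢
  field_simp
  linarith

theorem aux_diag0 {M : Type*} [AddCommGroup M] [Module ℝ M] [FiniteDimensional ℝ M]
    (b : M →ₗ[ℝ] M →ₗ[ℝ] ℝ) (hs : ∀ x y, b x y = b y x) (hn : ∀ x, (∀ y, b x y = 0) → x = 0) :
    ∃ (r : ℕ) (w : Fin r → ℝ) (J : M ≃ₗ[ℝ] (Fin r → ℝ)), (∀ i, w i = -1 ∨ w i = 1) ∧
      ∀ x, b x x = ∑ i, w i * (J x i) ^ 2 := by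
  have ha : QuadraticMap.associated (R := ℝ) (LinearMap.BilinMap.toQuadraticMap b) = b :=
    QuadraticMap.associated_left_inverse ℝ hs
  obtain ⟨w, hw, ⟨e⟩⟩ := QuadraticForm.equivalent_one_neg_one_weighted_sum_squared
    (LinearMap.BilinMap.toQuadraticMap b) (by rw [ha]; exact hn)
  refine ⟨_, w, e.toLinearEquiv, hw, fun x => ?_⟩
  have := e.map_app x
  rw [QuadraticMap.weightedSumSquares_apply, LinearMap.BilinMap.toQuadraticMap_apply] at this
  rw [← this]
  simp [sq]

theorem aux_split {E M0 K : Type*} [AddCommGroup E] [Module ℝ E] [FiniteDimensional ℝ E]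
    [AddCommGroup M0] [Module ℝ M0] [Fintype K] [DecidableEq K] (k1 : K)
    (H : E →ₗ[ℝ] E →ₗ[ℝ] ℝ) (hs : ∀ x y, H x y = H y x) (hn : ∀ x, (∀ y, H x y = 0) → x = 0)
    (L : E →ₗ[ℝ] (K → M0)) (hL : Function.Injective L)
    (h τ : K → E →ₗ[ℝ] E)
    (hh : ∀ k x j, L (h k x) j = if j = k then - L x j else L x j)
    (hτ : ∀ k x j, L (τ k x) j = L x (Equiv.swap k k1 j))
    (hhH : ∀ k x, H (h k x) (h k x) = H x x) (hτH : ∀ k x, H (τ k x) (τ k x) = H x x) :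
    ∃ (r : ℕ) (w : Fin r → ℝ) (J : E ≃ₗ[ℝ] (Fin r → EuclideanSpace ℝ K)),
      (∀ i, w i = -1 ∨ w i = 1) ∧ ∀ x, H x x = ∑ i, w i * ‖J x i‖ ^ 2 := by
  have hpol : ∀ k x y, H (h k x) (h k y) = H x y := by
    intro k x y
    have e := hhH k (x + y)
    simp only [map_add, LinearMap.add_apply] at e
    have e1 := hs (h k x) (h k y)
    have e2 := hs x y
    have e3 := hhH k x
    have e4 := hhH k y
    linarith
  let p : K → E →ₗ[ℝ] E := fun k => (1 / 2 : ℝ) • (LinearMap.id - h k)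
  have hp : ∀ k x j, L (p k x) j = if j = k then L x j else 0 := by
    intro k x j
    simp only [p, LinearMap.smul_apply, LinearMap.sub_apply, LinearMap.id_apply, map_smul, map_sub,
      Pi.smul_apply, Pi.sub_apply, hh]
    split_ifs
    · rw [sub_neg_eq_add, ← two_smul ℝ, smul_smul]; norm_num
    · simp
  have hsum : ∀ x, ∑ k, p k x = x := by
    intro x
    apply hL
    ext j
    simp [hp]
  have hhp : ∀ k x, h k (p k x) = - p k x := by
    intro k x
    apply hL
    ext j
    simp only [hh, map_neg, Pi.neg_apply, hp]
    split_ifs <;> simp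
  have hhp' : ∀ k l x, l ≠ k → h k (p l x) = p l x := by
    intro k l x hkl
    apply hL
    ext j
    simp only [hh, hp]
    split_ifs with h1 h2
    · exact absurd (h2.symm.trans h1) hkl
    all_goals simp
  have hcross : ∀ k l x y, k ≠ l → H (p k x) (p l y) = 0 := by
    intro k l x y hkl
    have := hpol k (p k x) (p l y)
    rw [hhp, hhp' k l y hkl.symm] at this
    simp at this
    linarith
  let M : Submodule ℝ E :=
    { carrier := {x | ∀ j, j ≠ k1 → L x j = 0}
      add_mem' := by
        intro a b ha hb j hj
        simp [ha j hj, hb j hj]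
      zero_mem' := by intro j _; simp
      smul_mem' := by
        intro c a ha j hj
        simp [ha j hj] }
  have hpM : ∀ y ∈ M, p k1 y = y := by
    intro y hy
    apply hL
    ext j
    rw [hp]
    split_ifs with hj
    · rfl
    · exact (hy j hj).symm
  have hMp : ∀ x, p k1 x ∈ M := by
    intro x j hj
    rw [hp, if_neg hj]
  obtain ⟨r, w, J0, hw, hJ0⟩ := aux_diag0 (M := M) ((H.domRestrict M).compl₂ M.subtype |>.comp LinearMap.id)
    (fun x y => by simpa using hs x y) (by
      intro x hx
      apply Subtype.ext
      apply hn
      intro y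
      rw [← hsum y, map_sum]
      apply Finset.sum_eq_zero
      intro k _
      by_cases hk : k = k1
      · subst hk
        simpa using hx ⟨p k y, hMp y⟩
      · rw [← hpM x x.2]
        exact hcross _ _ _ _ (Ne.symm hk))
  have hsw : ∀ k j : K, Equiv.swap k k1 j = k ↔ j = k1 := by
    intro k j
    rw [Equiv.swap_apply_eq_iff]; simp
  have hsw' : ∀ k j : K, Equiv.swap k k1 j = k1 ↔ k = j := by
    intro k j
    rw [Equiv.swap_apply_eq_iff]; simp [eq_comm]
  have hτp : ∀ k x, τ k (p k x) ∈ M := by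
    intro k x j hj
    rw [hτ, hp, if_neg]
    rwa [hsw]
  let Ψ : E →ₗ[ℝ] (K → M) := LinearMap.pi fun k => ((τ k).comp (p k)).codRestrict M (hτp k)
  have hΨ : ∀ x k, ((Ψ x k : M) : E) = τ k (p k x) := fun x k => rfl
  let Θ : (K → M) → E := fun c => ∑ k, τ k (c k)
  have hLΘ : ∀ c j, L (Θ c) j = L (c j) k1 := by
    intro c j
    simp only [Θ, map_sum, Finset.sum_apply, hτ]
    rw [Finset.sum_eq_single j]
    · simp
    · intro k _ hk
      apply (c k).2
      rwa [Ne, hsw']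
    · simp
  let Ψe : E ≃ₗ[ℝ] (K → M) := LinearEquiv.ofBijective Ψ (by
    constructor
    · intro x y hxy
      apply hL
      ext j
      have := congrArg (fun z : K → M => L (z j : E) k1) hxy
      simpa [hΨ, hτ, hp] using this
    · intro c
      refine ⟨Θ c, ?_⟩
      ext k
      apply hL
      ext j
      rw [hΨ, hτ, hp]
      split_ifs with hj
      · rw [hj, hLΘ, (hsw k j).1 hj]
      · rw [hsw] at hj
        exact ((c k).2 j hj).symm)
  let J : E ≃ₗ[ℝ] (Fin r → EuclideanSpace ℝ K) :=
    { toFun := fun x i => WithLp.toLp 2 fun k => J0 (Ψe x k) i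
      invFun := fun z => Ψe.symm fun k => J0.symm fun i => z i k
      map_add' := by intro x y; ext i k; simp
      map_smul' := by intro x y; ext i k; simp
      left_inv := by intro x; simp
      right_inv := by intro z; ext i k; simp }
  refine ⟨r, w, J, hw, fun x => ?_⟩
  have e1 : H x x = ∑ k, H (p k x) (p k x) := by
    conv_lhs => rw [← hsum x]
    simp only [map_sum, LinearMap.sum_apply]
    refine Finset.sum_congr rfl fun k _ => ?_
    rw [Finset.sum_eq_single k]
    · intro l _ hl; exact hcross _ _ _ _ hl
    · simp
  have e2 : ∀ k, H (p k x) (p k x) = ∑ i, w i * (J0 (Ψe x k) i) ^ 2 := by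
    intro k
    rw [← hτH k, ← hJ0 (Ψe x k)]
    rfl
  rw [e1]
  simp_rw [e2]
  rw [Finset.sum_comm]
  refine Finset.sum_congr rfl fun i _ => ?_
  rw [EuclideanSpace.norm_sq_eq, Finset.mul_sum]
  simp [J]


theorem aux_smooth (d : ℕ) [NeZero d]
    (V : Type) [Fintype V] (E : Set (V × V)) (ℓ : V × V → ℝ) (xs xe : V) (N : ℕ)
    (g : EuclideanSpace ℝ (Fin N) → (V → EuclideanSpace ℝ (Fin d)))
    (hg : ContDiff ℝ 3 g) (hgC : ∀ x, g x ∈ reducedConf d V E ℓ xs xe) :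
    (fun x => ‖g x xe‖) = (fun x => g x xe 0) ∧ ContDiff ℝ 3 (fun x => ‖g x xe‖) := by
  have h1 : (fun x => ‖g x xe‖) = (fun x => g x xe 0) := by
    ext x
    obtain ⟨-, t, ht, e⟩ := hgC x
    rw [e]
    simp [firstBasis, norm_smul, abs_of_pos ht]
  refine ⟨h1, ?_⟩
  rw [h1]
  have h2 : ContDiff ℝ 3 (fun x => g x xe) := contDiff_pi.1 hg xe
  exact (EuclideanSpace.proj (𝕜 := ℝ) (0 : Fin d)).contDiff.comp h2

theorem aux_iso_conf (d : ℕ) [NeZero d]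
    (V : Type) (E : Set (V × V)) (ℓ : V × V → ℝ) (xs xe : V)
    (ρ : EuclideanSpace ℝ (Fin d) ≃ₗᵢ[ℝ] EuclideanSpace ℝ (Fin d))
    (hρ : ρ (firstBasis d) = firstBasis d) (q : V → EuclideanSpace ℝ (Fin d))
    (hq : q ∈ reducedConf d V E ℓ xs xe) : (fun v => ρ (q v)) ∈ reducedConf d V E ℓ xs xe := by
  obtain ⟨⟨h1, h2⟩, t, ht, h3⟩ := hq
  refine ⟨⟨fun e he => ?_, by simp [h2]⟩, t, ht, by simp [h3, hρ]⟩
  rw [← map_sub, ρ.norm_map, h1 e he]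

theorem aux_axis (d : ℕ) (hd : 3 ≤ d) [NeZero d]
    (V : Type) [Fintype V] (E : Set (V × V)) (ℓ : V × V → ℝ) (xs xe : V) (N : ℕ)
    (g : EuclideanSpace ℝ (Fin N) → (V → EuclideanSpace ℝ (Fin d)))
    (hg : ContDiff ℝ 3 g) (hgemb : Topology.IsEmbedding g)
    (O : Set (V → EuclideanSpace ℝ (Fin d))) (hO : IsOpen O)
    (hr : Set.range g = O ∩ reducedConf d V E ℓ xs xe)
    (hgderiv : Function.Injective (fderiv ℝ g 0))
    (hcrit : fderiv ℝ (fun x => ‖g x xe‖) 0 = 0)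
    (hhess : Function.Bijective (fderiv ℝ (fderiv ℝ (fun x => ‖g x xe‖)) 0))
    (v : V) (k : Fin d) (hk : k ≠ 0) : g 0 v k = 0 := by
  by_contra hvk
  have hgC : ∀ x, g x ∈ reducedConf d V E ℓ xs xe :=
    fun x => (hr ▸ Set.mem_range_self x : g x ∈ O ∩ _).2
  have hsm := (aux_smooth d V E ℓ xs xe N g hg hgC).2
  obtain ⟨l, hl0, hlk⟩ : ∃ l : Fin d, l ≠ 0 ∧ l ≠ k := by
    have : ∃ l ∉ ({0, k} : Finset (Fin d)), True := by
      by_contra hcon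
      push Not at hcon
      have h1 : ({0, k} : Finset (Fin d)) = Finset.univ := by
        ext j; simp only [Finset.mem_univ, iff_true]; by_contra hj; exact hcon j hj
      have h2 : Finset.card ({0, k} : Finset (Fin d)) = d := by rw [h1]; simp
      have h3 : Finset.card ({0, k} : Finset (Fin d)) ≤ 2 := Finset.card_le_two
      omega
    obtain ⟨l, hl, -⟩ := this
    simp at hl
    exact ⟨l, hl.1, hl.2⟩
  set p := g 0 v with hp
  let ek : EuclideanSpace ℝ (Fin d) := EuclideanSpace.single k 1
  let b : EuclideanSpace ℝ (Fin d) := p k • EuclideanSpace.single l 1 - p l • EuclideanSpace.single k 1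
  let w : ℝ → EuclideanSpace ℝ (Fin d) := fun t => b + t • ek
  have hb1 : inner ℝ b (firstBasis d) = 0 := by
    simp [b, firstBasis, inner_sub_left, inner_smul_left, EuclideanSpace.inner_single_left, hk.symm, hl0.symm, hk, hl0]
  have hbp : inner ℝ b p = 0 := by
    simp [b, inner_sub_left, inner_smul_left, EuclideanSpace.inner_single_left]
    ring
  have hw1 : ∀ t, inner ℝ (w t) (firstBasis d) = 0 := by
    intro t
    rw [inner_add_left, hb1]
    simp [inner_smul_left, ek, firstBasis, EuclideanSpace.inner_single_left, hk]
  have hwp : ∀ t, inner ℝ (w t) p = t * p k := by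
    intro t
    simp [w, inner_add_left, hbp, inner_smul_left, ek, EuclideanSpace.inner_single_left]
  have hwl : ∀ t, w t l = p k := by
    intro t
    simp [w, b, ek, hlk]
  have hw0 : ∀ t, w t ≠ 0 := by
    intro t h
    have := hwl t
    rw [h] at this
    exact hvk (by simpa using this.symm)
  have hwc : Continuous w := by fun_prop
  let ρ : ℝ → EuclideanSpace ℝ (Fin d) ≃ₗᵢ[ℝ] EuclideanSpace ℝ (Fin d) := fun t =>
    (Submodule.reflection (ℝ ∙ b)).trans (Submodule.reflection (ℝ ∙ w t))
  have hρa : ∀ t x, ρ t x = Submodule.reflection (ℝ ∙ w t) (Submodule.reflection (ℝ ∙ b) x) :=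
    fun t x => rfl
  have hρ0 : ∀ x, ρ 0 x = x := by
    intro x
    have : w 0 = b := by simp [w]
    rw [hρa, this, Submodule.reflection_reflection]
  have hρ1 : ∀ t, ρ t (firstBasis d) = firstBasis d := by
    intro t
    simp [hρa, Submodule.reflection_singleton_apply, hb1, hw1]
  have hρs : ∀ t, (ρ t).symm (firstBasis d) = firstBasis d := by
    intro t
    rw [LinearIsometryEquiv.symm_apply_eq, hρ1]
  have hρc : ∀ x, Continuous fun t => ρ t x := by
    intro x
    simp only [hρa]
    set y := Submodule.reflection (ℝ ∙ b) x
    simp only [Submodule.reflection_singleton_apply]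
    have : ∀ t, ((‖w t‖ : ℝ) : ℝ) ^ 2 ≠ 0 := fun t => by simpa using hw0 t
    have h1 : Continuous fun t => inner ℝ (w t) y / ((‖w t‖ : ℝ) : ℝ) ^ 2 := by
      apply Continuous.div _ _ this
      · fun_prop
      · fun_prop
    exact ((h1.smul hwc).const_smul 2).sub continuous_const
  have hrig := aux_rigid g hg hgemb (reducedConf d V E ℓ xs xe) O hO hr hgderiv
    (fun q => ‖q xe‖) hsm hcrit hhess (fun t q v => ρ t (q v)) (fun t q v => (ρ t).symm (q v))
    (by
      intro t
      rw [differentiable_pi]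
      intro i
      exact ((ρ t).symm.toContinuousLinearEquiv.differentiable).comp (differentiable_apply i))
    (fun t q hq => aux_iso_conf d V E ℓ xs xe (ρ t).symm (hρs t) q hq)
    (fun t q hq => by simp)
    (fun t => aux_iso_conf d V E ℓ xs xe (ρ t) (hρ1 t) _ (hgC 0))
    (fun t => by simp)
    (by
      rw [tendsto_pi_nhds]
      intro i
      have := (hρc (g 0 i)).tendsto 0
      rwa [hρ0] at this)
  have : ∃ t : ℝ, t ≠ 0 ∧ (fun v => ρ t (g 0 v)) = g 0 := by
    have h2 : ∀ᶠ t in 𝓝[≠] (0 : ℝ), t ≠ 0 ∧ (fun v => ρ t (g 0 v)) = g 0 := by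
      filter_upwards [hrig.filter_mono nhdsWithin_le_nhds, self_mem_nhdsWithin] with t h1 h2
      exact ⟨h2, h1⟩
    exact h2.exists
  obtain ⟨t, ht, h⟩ := this
  have h3 := congrFun h v
  simp only [← hp] at h3
  rw [hρa, Submodule.reflection_singleton_apply b, hbp] at h3
  simp only [zero_div, zero_smul, smul_zero, zero_sub, map_neg] at h3
  rw [Submodule.reflection_singleton_apply, hwp] at h3
  have h4 : (2 : ℕ) • (t * p k / ((‖w t‖ : ℝ) : ℝ) ^ 2) • w t = 0 := by
    have := h3
    rw [neg_sub] at this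
    exact sub_eq_self.1 this
  have h5 := congrArg (fun z : EuclideanSpace ℝ (Fin d) => z l) h4
  have h6 : ‖w t‖ ≠ 0 := by simpa using hw0 t
  simp [hwl] at h5
  rcases h5 with (h5 | h5) | h5
  · tauto
  · exact hw0 t h5
  · exact hvk h5


theorem aux_noaxis (d : ℕ) (hd : 3 ≤ d) [NeZero d]
    (V : Type) [Fintype V] (E : Set (V × V)) (ℓ : V × V → ℝ)
    (hℓ : ∀ e ∈ E, 0 < ℓ e) (xs xe : V) (N : ℕ)
    (g : EuclideanSpace ℝ (Fin N) → (V → EuclideanSpace ℝ (Fin d)))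
    (hg : ContDiff ℝ 3 g) (hgemb : Topology.IsEmbedding g)
    (O : Set (V → EuclideanSpace ℝ (Fin d))) (hO : IsOpen O)
    (hr : Set.range g = O ∩ reducedConf d V E ℓ xs xe)
    (hgderiv : Function.Injective (fderiv ℝ g 0))
    (hcrit : fderiv ℝ (fun x => ‖g x xe‖) 0 = 0)
    (hhess : Function.Bijective (fderiv ℝ (fderiv ℝ (fun x => ‖g x xe‖)) 0))
    (x : EuclideanSpace ℝ (Fin N)) (hx : ∀ v, ∀ k : Fin d, k ≠ 0 → fderiv ℝ g 0 x v k = 0) :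
    x = 0 := by
  have hgC : ∀ x, g x ∈ reducedConf d V E ℓ xs xe :=
    fun x => (hr ▸ Set.mem_range_self x : g x ∈ O ∩ _).2
  have hsm := aux_smooth d V E ℓ xs xe N g hg hgC
  have hax := aux_axis d hd V E ℓ xs xe N g hg hgemb O hO hr hgderiv hcrit hhess
  set L := fderiv ℝ g 0 with hL
  have hgd : HasFDerivAt g L 0 := (hg.differentiable (by norm_num) 0).hasFDerivAt
  have hgi : ∀ v, HasFDerivAt (fun y => g y v) ((ContinuousLinearMap.proj v).comp L) 0 :=
    fun v => (hasFDerivAt_pi'.1 hgd) v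
  have hxs : L x xs = 0 := by
    have h1 : (fun y => g y xs) = fun _ => 0 := by ext1 y; exact (hgC y).1.2
    have h2 := hgi xs
    rw [h1] at h2
    have := h2.unique (hasFDerivAt_const _ _)
    simpa using congrArg (fun T => T x) this
  have hxe0 : L x xe 0 = 0 := by
    have h1 := (EuclideanSpace.proj (𝕜 := ℝ) (0 : Fin d)).hasFDerivAt.comp 0 (hgi xe)
    have h2 : HasFDerivAt (fun x => ‖g x xe‖) ((EuclideanSpace.proj (𝕜 := ℝ) (0 : Fin d)).comp
      ((ContinuousLinearMap.proj xe).comp L)) 0 := by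
      rw [hsm.1]; exact h1
    have h3 := h2.fderiv
    rw [hcrit] at h3
    simpa using (congrArg (fun T => T x) h3).symm
  have hxe : L x xe = 0 := by
    ext k
    by_cases hk : k = 0
    · subst hk; simpa using hxe0
    · simpa using hx xe k hk
  have hedge : ∀ e ∈ E, L x e.1 = L x e.2 := by
    intro e he
    have h1 := ((hgi e.1).sub (hgi e.2)).norm_sq
    have h2 : (fun y => ‖g y e.1 - g y e.2‖ ^ 2) = fun _ => ℓ e ^ 2 := by
      ext y; rw [(hgC y).1.1 e he]
    simp only [Pi.sub_apply] at h1
    rw [h2] at h1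
    have h3 := h1.unique (hasFDerivAt_const _ _)
    have h4 : inner ℝ (g 0 e.1 - g 0 e.2) (L x e.1 - L x e.2) = 0 := by
      have h4 := congrArg (fun T => T x) h3
      simp [inner_sub_left, inner_sub_right] at h4 ⊢
      linarith
    rw [PiLp.inner_apply, Finset.sum_eq_single (0 : Fin d)] at h4
    · have h5 : (g 0 e.1 - g 0 e.2) 0 ≠ 0 := by
        intro h
        have h6 : g 0 e.1 - g 0 e.2 = 0 := by
          ext k
          by_cases hk : k = 0
          · subst hk; exact h
          · simp [hax e.1 k hk, hax e.2 k hk]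
        have h7 := (hgC 0).1.1 e he
        rw [h6] at h7
        have := hℓ e he
        simp at h7
        linarith
      ext k
      by_cases hk : k = 0
      · subst hk
        simp at h4 h5
        rcases h4 with h4 | h4
        · linarith
        · exact absurd h4 h5
      · rw [hx e.1 k hk, hx e.2 k hk]
    · intro k _ hk
      simp [hax e.1 k hk, hax e.2 k hk]
    · simp
  have hshift : ∀ t : ℝ, ∀ q ∈ reducedConf d V E ℓ xs xe,
      q + t • L x ∈ reducedConf d V E ℓ xs xe := by
    rintro t q ⟨⟨h1, h2⟩, s, hs, h3⟩
    refine ⟨⟨fun e he => ?_, ?_⟩, s, hs, ?_⟩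
    · simp [hedge e he, h1 e he]
    · simp [hxs, h2]
    · simp [hxe, h3]
  have hrig := aux_rigid g hg hgemb (reducedConf d V E ℓ xs xe) O hO hr hgderiv
    (fun q => ‖q xe‖) hsm.2 hcrit hhess (fun t q => q + t • L x) (fun t q => q + (-t) • L x)
    (fun t => by fun_prop) (fun t => hshift _) (fun t q _ => by simp [hxe])
    (fun t => hshift _ _ (hgC 0)) (fun t => by simp)
    (by
      have : Continuous fun t : ℝ => g 0 + t • L x := by fun_prop
      simpa using this.tendsto 0)
  have h2 : ∀ᶠ t in 𝓝[≠] (0 : ℝ), t ≠ 0 ∧ g 0 + t • L x = g 0 := by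
    filter_upwards [hrig.filter_mono nhdsWithin_le_nhds, self_mem_nhdsWithin] with t h1 h2
    exact ⟨h2, h1⟩
  obtain ⟨t, ht, h⟩ := h2.exists
  apply hgderiv
  rw [map_zero]
  simpa [ht] using h

theorem aux_concrete (d : ℕ) (hd : 2 ≤ d) [NeZero d]
    (V : Type) [Fintype V] (E : Set (V × V)) (ℓ : V × V → ℝ)
    (hℓ : ∀ e ∈ E, 0 < ℓ e) (xs xe : V) (N : ℕ)
    (g : EuclideanSpace ℝ (Fin N) → (V → EuclideanSpace ℝ (Fin d)))
    (hg : ContDiff ℝ 3 g) (hgemb : Topology.IsEmbedding g)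
    (O : Set (V → EuclideanSpace ℝ (Fin d))) (hO : IsOpen O)
    (hr : Set.range g = O ∩ reducedConf d V E ℓ xs xe)
    (hgderiv : Function.Injective (fderiv ℝ g 0))
    (hcrit : fderiv ℝ (fun x => ‖g x xe‖) 0 = 0)
    (hhess : Function.Bijective (fderiv ℝ (fderiv ℝ (fun x => ‖g x xe‖)) 0))
    (B : EuclideanSpace ℝ (Fin N) → EuclideanSpace ℝ (Fin N) →L[ℝ] EuclideanSpace ℝ (Fin N) →L[ℝ] ℝ)
    (hB0 : B 0 = fderiv ℝ (fderiv ℝ (fun x => ‖g x xe‖)) 0) (hBc : ContinuousAt B 0)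
    (hBs : ∀ x y z, B x y z = B x z y)
    (hBF : ∀ x, ‖g x xe‖ = ‖g 0 xe‖ + (1 / 2) * B x x x) :
    ∃ (r : ℕ) (w : Fin r → ℝ)
      (J : EuclideanSpace ℝ (Fin N) ≃ₗ[ℝ] (Fin r → EuclideanSpace ℝ {k : Fin d // k ≠ 0})),
      (∀ i, w i = -1 ∨ w i = 1) ∧ ∀ x, B 0 x x = ∑ i, w i * ‖J x i‖ ^ 2 := by
  have hgC : ∀ x, g x ∈ reducedConf d V E ℓ xs xe :=
    fun x => (hr ▸ Set.mem_range_self x : g x ∈ O ∩ _).2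
  have hn : ∀ x, (∀ y, B 0 x y = 0) → x = 0 := by
    intro x hx
    apply hhess.1
    rw [map_zero, ← hB0]
    ext y
    simpa using hx y
  let H : EuclideanSpace ℝ (Fin N) →ₗ[ℝ] EuclideanSpace ℝ (Fin N) →ₗ[ℝ] ℝ :=
    LinearMap.mk₂ ℝ (fun x y => B 0 x y) (by simp) (by simp) (by simp) (by simp)
  have hH : ∀ x y, H x y = B 0 x y := fun x y => rfl
  let k1 : {k : Fin d // k ≠ 0} := ⟨⟨1, by omega⟩, by
    intro h; have := congrArg Fin.val h; simp at this⟩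
  rcases Nat.eq_or_lt_of_le hd with h2 | h3
  · have hu : ∀ k : {k : Fin d // k ≠ 0}, k = k1 := by
      rintro ⟨k, hk⟩
      apply Subtype.ext
      apply Fin.ext
      have : k.val ≠ 0 := fun h => hk (Fin.ext (by simpa using h))
      have := k.2
      simp only [k1]
      omega
    exact aux_split k1 H (fun x y => hBs 0 x y) hn
      (LinearMap.pi fun _ => LinearMap.id) (fun x y hxy => congrFun hxy k1)
      (fun _ => -LinearMap.id) (fun _ => LinearMap.id)
      (fun k x j => by simp [hu k, hu j]) (fun k x j => by simp) (fun k x => by simp)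
      (fun k x => by simp)
  · have hax := aux_axis d h3 V E ℓ xs xe N g hg hgemb O hO hr hgderiv hcrit hhess
    have hno := aux_noaxis d h3 V E ℓ hℓ xs xe N g hg hgemb O hO hr hgderiv hcrit hhess
    have hgd : HasFDerivAt g (fderiv ℝ g 0) 0 := (hg.differentiable (by norm_num) 0).hasFDerivAt
    have h0ax : ∀ v, g 0 v = (g 0 v 0) • firstBasis d := by
      intro v
      ext k
      by_cases hk : k = 0
      · subst hk; simp [firstBasis]
      · simp [firstBasis, hax v k hk, hk]
    have key : ∀ ρ : EuclideanSpace ℝ (Fin d) ≃ₗᵢ[ℝ] EuclideanSpace ℝ (Fin d),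
        ρ (firstBasis d) = firstBasis d → ∃ h : EuclideanSpace ℝ (Fin N) →ₗ[ℝ] EuclideanSpace ℝ (Fin N),
        (∀ x v, fderiv ℝ g 0 (h x) v = ρ (fderiv ℝ g 0 x v)) ∧ ∀ x, H (h x) (h x) = H x x := by
      intro ρ hρ
      let A : (V → EuclideanSpace ℝ (Fin d)) →L[ℝ] (V → EuclideanSpace ℝ (Fin d)) :=
        ContinuousLinearMap.pi fun v =>
          (ρ.toContinuousLinearEquiv : EuclideanSpace ℝ (Fin d) →L[ℝ] EuclideanSpace ℝ (Fin d)).comp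
            (ContinuousLinearMap.proj v)
      have hAv : ∀ q v, A q v = ρ (q v) := fun q v => rfl
      obtain ⟨h, hh0, hhd, hhe⟩ := aux_trans g hg hgemb (reducedConf d V E ℓ xs xe) O hO hr A
        A.differentiable (fun q hq => aux_iso_conf d V E ℓ xs xe ρ hρ q hq) 0 0
        (by
          ext1 v
          rw [hAv, h0ax v, map_smul, hρ]) hgderiv
      refine ⟨(fderiv ℝ h 0 : _ →ₗ[ℝ] _), ?_, ?_⟩
      · intro x v
        have e1 : HasFDerivAt (fun x => g (h x)) ((fderiv ℝ g 0).comp (fderiv ℝ h 0)) 0 := by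
          have : HasFDerivAt g (fderiv ℝ g 0) (h 0) := by rw [hh0]; exact hgd
          exact this.comp 0 hhd.hasFDerivAt
        have e2 : HasFDerivAt (fun x => A (g x)) (A.comp (fderiv ℝ g 0)) 0 :=
          A.hasFDerivAt.comp 0 hgd
        have e3 := e1.unique (e2.congr_of_eventuallyEq hhe)
        have e4 := congrFun (congrArg (fun T => T x) e3) v
        exact e4
      · intro x
        refine aux_hess (fun x => ‖g x xe‖) B hBc hBF h hh0 hhd ?_ x
        filter_upwards [hhe] with y hy
        rw [hy, hAv, ρ.norm_map]
    have hsign : ∀ k : {k : Fin d // k ≠ 0}, ∃ h : EuclideanSpace ℝ (Fin N) →ₗ[ℝ] EuclideanSpace ℝ (Fin N),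
        (∀ x v j, fderiv ℝ g 0 (h x) v j = if j = k.1 then - fderiv ℝ g 0 x v j else fderiv ℝ g 0 x v j)
        ∧ ∀ x, H (h x) (h x) = H x x := by
      intro k
      let ρ : EuclideanSpace ℝ (Fin d) ≃ₗᵢ[ℝ] EuclideanSpace ℝ (Fin d) :=
        LinearIsometryEquiv.piLpCongrRight 2 (fun j : Fin d =>
          if j = k.1 then LinearIsometryEquiv.neg ℝ else LinearIsometryEquiv.refl ℝ ℝ)
      have hρ : ∀ z j, ρ z j = if j = k.1 then - z j else z j := by
        intro z j
        simp only [ρ, LinearIsometryEquiv.piLpCongrRight_apply]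
        split_ifs <;> simp
      obtain ⟨h, h1, h2⟩ := key ρ (by
        ext j
        rw [hρ]
        split_ifs with hj
        · rw [hj]; simp [firstBasis, k.2]
        · rfl)
      exact ⟨h, fun x v j => by rw [h1, hρ], h2⟩
    have hswap : ∀ k : {k : Fin d // k ≠ 0}, ∃ h : EuclideanSpace ℝ (Fin N) →ₗ[ℝ] EuclideanSpace ℝ (Fin N),
        (∀ x v j, fderiv ℝ g 0 (h x) v j = fderiv ℝ g 0 x v (Equiv.swap k.1 k1.1 j))
        ∧ ∀ x, H (h x) (h x) = H x x := by
      intro k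
      let ρ : EuclideanSpace ℝ (Fin d) ≃ₗᵢ[ℝ] EuclideanSpace ℝ (Fin d) :=
        LinearIsometryEquiv.piLpCongrLeft 2 ℝ ℝ (Equiv.swap k.1 k1.1)
      have hρ : ∀ z j, ρ z j = z (Equiv.swap k.1 k1.1 j) := by
        intro z j
        simp [ρ, LinearIsometryEquiv.piLpCongrLeft_apply]
      obtain ⟨h, h1, h2⟩ := key ρ (by
        ext j
        rw [hρ]
        have : Equiv.swap k.1 k1.1 j = 0 ↔ j = 0 := by
          rw [Equiv.swap_apply_eq_iff, Equiv.swap_apply_of_ne_of_ne k.2.symm k1.2.symm]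
        simp [firstBasis, PiLp.single_apply, this])
      exact ⟨h, fun x v j => by rw [h1, hρ], h2⟩
    choose hs hs1 hs2 using hsign
    choose τ hτ1 hτ2 using hswap
    let L : EuclideanSpace ℝ (Fin N) →ₗ[ℝ] ({k : Fin d // k ≠ 0} → V → ℝ) :=
      { toFun := fun x k v => fderiv ℝ g 0 x v k.1
        map_add' := by intro x y; ext k v; simp
        map_smul' := by intro x y; ext k v; simp }
    have hLa : ∀ x k v, L x k v = fderiv ℝ g 0 x v k.1 := fun _ _ _ => rfl
    refine aux_split k1 H (fun x y => hBs 0 x y) hn L ?_ hs τ ?_ ?_ hs2 hτ2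
    · rw [injective_iff_map_eq_zero]
      intro x hx
      apply hno
      intro v k hk
      rw [← hLa x ⟨k, hk⟩ v, hx]; rfl
    · intro k x j
      ext v
      rw [hLa, hs1]
      simp only [Subtype.ext_iff]
      split_ifs <;> rfl
    · intro k x j
      ext v
      rw [hLa, hτ1, hLa]
      have e : ((Equiv.swap k k1 j : {k : Fin d // k ≠ 0}) : Fin d) = Equiv.swap k.1 k1.1 j.1 := by
        simp only [Equiv.swap_apply_def, Subtype.ext_iff]
        split_ifs <;> rfl
      rw [e]


set_option maxSynthPendingDepth 5 in
theorem aux_chainB {E P : Type*} [NormedAddCommGroup E] [NormedSpace ℝ E]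
    [NormedAddCommGroup P] [InnerProductSpace ℝ P]
    (r : ℕ) (J : E →L[ℝ] (Fin r → P)) (w : Fin r → ℝ) (a₀ c l0 : ℝ) (hl0 : 0 < l0)
    (hl : l0 = a₀ + c * ∑ i, w i) :
    ∃ B : E → E →L[ℝ] E →L[ℝ] ℝ,
      (∃ B' : E →L[ℝ] (E →L[ℝ] E →L[ℝ] ℝ), HasStrictFDerivAt B B' 0) ∧
      (∀ x y z, B x y z = B x z y) ∧
      (∀ v, (∀ i, ‖J v i‖ ≤ 1) → (c * ‖∑ i, J v i‖) ^ 2 ≤ l0 ^ 2 →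
        (∑ i, -(w i * c * √(1 - ‖J v i‖ ^ 2))) + √(l0 ^ 2 - (c * ‖∑ i, J v i‖) ^ 2) =
          a₀ + (1 / 2) * B v v v) ∧
      ∀ v, B 0 v v = c * (∑ i, w i * ‖J v i‖ ^ 2) - c ^ 2 * ‖∑ i, J v i‖ ^ 2 / l0 := by
  let R : Fin r → E →L[ℝ] P := fun i => (ContinuousLinearMap.proj i).comp J
  have hR : ∀ i v, J v i = R i v := fun i v => rfl
  simp only [hR]
  let T : Fin r → E →L[ℝ] E →L[ℝ] ℝ := fun i =>
    (innerSL ℝ).bilinearComp (R i) (R i)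
  let S : E →L[ℝ] P := ∑ i, R i
  have hS : ∀ v, S v = ∑ i, R i v := by intro v; simp [S]
  let T' : E →L[ℝ] E →L[ℝ] ℝ := (innerSL ℝ).bilinearComp S S
  have hT : ∀ i y z, T i y z = inner ℝ (R i y) (R i z) := fun i y z => rfl
  have hT' : ∀ y z, T' y z = inner ℝ (S y) (S z) := fun y z => rfl
  let B : E → E →L[ℝ] E →L[ℝ] ℝ := fun v =>
    (∑ i, (2 * (w i * c) / (1 + √(1 - ‖R i v‖ ^ 2))) • T i) -
      (2 * c ^ 2 / (l0 + √(l0 ^ 2 - c ^ 2 * ‖S v‖ ^ 2))) • T'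
  have hB : ∀ v y z, B v y z = (∑ i, (2 * (w i * c) / (1 + √(1 - ‖R i v‖ ^ 2))) * inner ℝ (R i y) (R i z)) -
      (2 * c ^ 2 / (l0 + √(l0 ^ 2 - c ^ 2 * ‖S v‖ ^ 2))) * inner ℝ (S y) (S z) := by
    intro v y z
    simp [B, hT, hT']
  refine ⟨B, ?_, ?_, ?_, ?_⟩
  · have : ContDiffAt ℝ 1 B 0 := by
      refine ContDiffAt.sub (ContDiffAt.sum fun i _ => ContDiffAt.smul (ContDiffAt.div contDiffAt_const
        (contDiffAt_const.add (ContDiffAt.sqrt (contDiffAt_const.sub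
          (ContDiffAt.norm_sq ℝ (R i).contDiff.contDiffAt)) ?_)) ?_) contDiffAt_const)
        (ContDiffAt.smul (ContDiffAt.div contDiffAt_const
        (contDiffAt_const.add (ContDiffAt.sqrt (contDiffAt_const.sub
          (contDiffAt_const.mul (ContDiffAt.norm_sq ℝ S.contDiff.contDiffAt))) ?_)) ?_) contDiffAt_const)
      · simp
      · simp
      · simp [hl0.ne']
      · have := Real.sqrt_nonneg (l0 ^ 2 - c ^ 2 * ‖S 0‖ ^ 2)
        positivity
    exact ⟨_, this.hasStrictFDerivAt (by norm_num)⟩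
  · intro x y z
    rw [hB, hB, real_inner_comm]
    congr 1
    exact Finset.sum_congr rfl fun i _ => by rw [real_inner_comm]
  · intro v hv hs
    rw [hB, hS]
    have e1 : ∀ i, -(w i * c * √(1 - ‖R i v‖ ^ 2)) = -(w i * c) +
        1 / 2 * ((2 * (w i * c) / (1 + √(1 - ‖R i v‖ ^ 2))) * inner ℝ (R i v) (R i v)) := by
      intro i
      rw [real_inner_self_eq_norm_sq]
      have h1 : 0 ≤ 1 - ‖R i v‖ ^ 2 := by nlinarith [hv i, norm_nonneg (R i v)]
      have h2 := Real.sq_sqrt h1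
      have h3 := Real.sqrt_nonneg (1 - ‖R i v‖ ^ 2)
      set q := √(1 - ‖R i v‖ ^ 2)
      have h4 : ‖R i v‖ ^ 2 = (1 - q) * (1 + q) := by linarith
      rw [h4]
      field_simp
      ring
    have e2 : √(l0 ^ 2 - (c * ‖∑ i, R i v‖) ^ 2) = l0 - 1 / 2 *
        ((2 * c ^ 2 / (l0 + √(l0 ^ 2 - c ^ 2 * ‖∑ i, R i v‖ ^ 2))) * inner ℝ (∑ i, R i v) (∑ i, R i v)) := by
      rw [real_inner_self_eq_norm_sq, ← mul_pow]
      have h2 := Real.sq_sqrt (sub_nonneg.2 hs)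
      have h3 := Real.sqrt_nonneg (l0 ^ 2 - (c * ‖∑ i, R i v‖) ^ 2)
      set q := √(l0 ^ 2 - (c * ‖∑ i, R i v‖) ^ 2)
      have h4 : c ^ 2 * ‖∑ i, R i v‖ ^ 2 = (l0 - q) * (l0 + q) := by rw [← mul_pow]; linarith
      have h5 : l0 + q ≠ 0 := by positivity
      have : 1 / 2 * (2 * c ^ 2 / (l0 + q) * ‖∑ i, R i v‖ ^ 2) = (c ^ 2 * ‖∑ i, R i v‖ ^ 2) / (l0 + q) := by
        ring
      rw [this, h4]
      field_simp
      ring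
    rw [Finset.sum_congr rfl fun i _ => e1 i, e2, Finset.sum_add_distrib, ← Finset.mul_sum,
      Finset.sum_neg_distrib, ← Finset.sum_mul, hl]
    ring
  · intro v
    rw [hB, Finset.mul_sum]
    congr 1
    · refine Finset.sum_congr rfl fun i _ => ?_
      simp
      ring
    · rw [real_inner_self_eq_norm_sq, ← hS]
      simp [Real.sqrt_sq hl0.le]
      field_simp
      ring

theorem aux_rank1 {P : Type*} [NormedAddCommGroup P] [InnerProductSpace ℝ P]
    (r : ℕ) (w : Fin r → ℝ) (hw : ∀ i, w i = -1 ∨ w i = 1) (a₀ c l0 : ℝ) (ha : 0 < a₀) (hl0 : 0 < l0)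
    (hl : l0 = a₀ + c * ∑ i, w i) :
    ∃ K : (Fin r → P) ≃ₗ[ℝ] (Fin r → P), ∀ v,
      c * (∑ i, w i * ‖K v i‖ ^ 2) = c * (∑ i, w i * ‖v i‖ ^ 2) - c ^ 2 * ‖∑ i, v i‖ ^ 2 / l0 := by
  set σ := ∑ i, w i with hσ
  obtain ⟨q, hq, hq2⟩ : ∃ q : ℝ, 0 < q ∧ q ^ 2 = a₀ / l0 :=
    ⟨√(a₀ / l0), by positivity, Real.sq_sqrt (by positivity)⟩
  set t := -(c / l0) / (1 + q) with ht
  have ht1 : t * (1 + q) = -(c / l0) := by rw [ht]; field_simp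
  have hq3 : q ^ 2 = 1 - c / l0 * σ := by
    rw [hq2, hl]; rw [hl] at hl0; field_simp; ring
  have hts : 1 + t * σ = q := by
    have : (1 + t * σ) * (1 + q) = q * (1 + q) := by
      linear_combination σ * ht1 - hq3
    exact mul_right_cancel₀ (by positivity) this
  have hw2 : ∀ i, w i * w i = 1 := fun i => by rcases hw i with h | h <;> rw [h] <;> norm_num
  have hsum : ∀ (s : ℝ) (v : Fin r → P) (z : P), ∑ i, (v i + (s * w i) • z) = (∑ i, v i) + (s * σ) • z := by
    intro s v z
    rw [Finset.sum_add_distrib, ← Finset.sum_smul, ← Finset.mul_sum]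
  let K : (Fin r → P) →ₗ[ℝ] (Fin r → P) :=
    { toFun := fun v i => v i + (t * w i) • ∑ j, v j
      map_add' := by intro x y; ext i; simp [Finset.sum_add_distrib]; abel
      map_smul' := by intro x y; ext i; simp [← Finset.smul_sum, smul_smul, mul_comm] }
  let Ki : (Fin r → P) →ₗ[ℝ] (Fin r → P) :=
    { toFun := fun v i => v i + ((-t * q⁻¹) * w i) • ∑ j, v j
      map_add' := by intro x y; ext i; simp [Finset.sum_add_distrib]; abel
      map_smul' := by intro x y; ext i; simp [← Finset.smul_sum, smul_smul, mul_comm] }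
  have hK : ∀ v i, K v i = v i + (t * w i) • ∑ j, v j := fun _ _ => rfl
  have hKi : ∀ v i, Ki v i = v i + ((-t * q⁻¹) * w i) • ∑ j, v j := fun _ _ => rfl
  have hKs : ∀ v, ∑ i, K v i = q • ∑ i, v i := by
    intro v
    simp only [hK]
    rw [hsum, ← hts, add_smul, one_smul]
  have hKis : ∀ v, ∑ i, Ki v i = q⁻¹ • ∑ i, v i := by
    intro v
    simp only [hKi]
    rw [hsum]
    have : q⁻¹ = 1 + -t * q⁻¹ * σ := by
      field_simp; linarith
    nth_rewrite 2 [this]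
    rw [add_smul, one_smul]
  refine ⟨LinearEquiv.ofLinearMap K Ki ?_ ?_, ?_⟩
  · refine LinearMap.ext fun v => funext fun i => ?_
    rw [LinearMap.comp_apply, hK, hKis, hKi, LinearMap.id_apply, smul_smul, add_assoc, ← add_smul]
    have : -t * q⁻¹ * w i + t * w i * q⁻¹ = 0 := by ring
    rw [this, zero_smul, add_zero]
  · refine LinearMap.ext fun v => funext fun i => ?_
    rw [LinearMap.comp_apply, hKi, hKs, hK, LinearMap.id_apply, smul_smul, add_assoc, ← add_smul]
    have : t * w i + -t * q⁻¹ * w i * q = 0 := by field_simp; ring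
    rw [this, zero_smul, add_zero]
  · intro v
    simp only [LinearEquiv.coe_ofLinearMap, hK]
    have e : ∀ i, w i * ‖v i + (t * w i) • ∑ j, v j‖ ^ 2 = w i * ‖v i‖ ^ 2 +
        2 * t * inner ℝ (v i) (∑ j, v j) + w i * (t ^ 2 * ‖∑ j, v j‖ ^ 2) := by
      intro i
      rw [norm_add_sq_real, inner_smul_right, norm_smul, mul_pow, Real.norm_eq_abs, sq_abs]
      have := hw2 i
      linear_combination (2 * t * inner ℝ (v i) (∑ j, v j) + w i * t ^ 2 * ‖∑ j, v j‖ ^ 2) * this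
    rw [Finset.sum_congr rfl fun i _ => e i, Finset.sum_add_distrib, Finset.sum_add_distrib,
      ← Finset.mul_sum, ← Finset.sum_mul, ← sum_inner, real_inner_self_eq_norm_sq, ← hσ]
    have h5 : σ * t ^ 2 + 2 * t = -(c / l0) := by
      rw [← ht1, ← hts]; ring
    linear_combination c * ‖∑ j, v j‖ ^ 2 * h5


theorem aux_model {E P : Type*} [NormedAddCommGroup E] [NormedSpace ℝ E] [FiniteDimensional ℝ E]
    [NormedAddCommGroup P] [InnerProductSpace ℝ P] [FiniteDimensional ℝ P]
    (r : ℕ) (J : E ≃ₗ[ℝ] (Fin r → P)) (w : Fin r → ℝ) (hw : ∀ i, w i = -1 ∨ w i = 1)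
    (a₀ c l0 : ℝ) (ha : 0 < a₀) (hc : 0 < c) (hl0 : 0 < l0)
    (hl : l0 = a₀ + c * ∑ i, w i) :
    ∃ (Jt : E ≃L[ℝ] (Fin r → P)) (B : E → E →L[ℝ] E →L[ℝ] ℝ),
      (∃ B' : E →L[ℝ] (E →L[ℝ] E →L[ℝ] ℝ), HasStrictFDerivAt B B' 0) ∧
      (∀ x y z, B x y z = B x z y) ∧
      (∀ v, (∀ i, ‖Jt v i‖ ≤ 1) → (c * ‖∑ i, Jt v i‖) ^ 2 ≤ l0 ^ 2 →
        (∑ i, -(w i * c * √(1 - ‖Jt v i‖ ^ 2))) + √(l0 ^ 2 - (c * ‖∑ i, Jt v i‖) ^ 2) =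
          a₀ + (1 / 2) * B v v v) ∧
      ∀ v, B 0 v v = ∑ i, w i * ‖J v i‖ ^ 2 := by
  obtain ⟨K, hK⟩ := aux_rank1 (P := P) r w hw a₀ c l0 ha hl0 hl
  have hsc : 0 < √c := Real.sqrt_pos.2 hc
  let M : E ≃ₗ[ℝ] (Fin r → P) :=
    (J.trans (LinearEquiv.smulOfNeZero ℝ (Fin r → P) (√c)⁻¹ (inv_ne_zero hsc.ne'))).trans K.symm
  have hM : ∀ x, K (M x) = (√c)⁻¹ • J x := by intro x; simp [M]
  let Jt : E ≃L[ℝ] (Fin r → P) := M.toContinuousLinearEquiv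
  have hJt : ∀ x, Jt x = M x := fun _ => rfl
  obtain ⟨B, h1, h2, h3, h4⟩ := aux_chainB r (Jt : E →L[ℝ] (Fin r → P)) w a₀ c l0 hl0 hl
  refine ⟨Jt, B, h1, h2, h3, ?_⟩
  intro v
  rw [h4]
  simp only [ContinuousLinearEquiv.coe_coe, hJt]
  rw [← hK, hM, Finset.mul_sum]
  refine Finset.sum_congr rfl fun i _ => ?_
  rw [Pi.smul_apply, norm_smul, mul_pow, norm_inv, inv_pow, Real.norm_eq_abs, sq_abs, Real.sq_sqrt hc.le]
  field_simp

theorem aux_coord (d : ℕ) [NeZero d] :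
    ∃ (inc : EuclideanSpace ℝ {k : Fin d // k ≠ 0} →L[ℝ] EuclideanSpace ℝ (Fin d))
      (pr : EuclideanSpace ℝ (Fin d) →L[ℝ] EuclideanSpace ℝ {k : Fin d // k ≠ 0}),
      (∀ z, inc z 0 = 0) ∧ (∀ z, pr (inc z) = z) ∧ pr (firstBasis d) = 0 ∧
      (∀ u, u = u 0 • firstBasis d + inc (pr u)) ∧
      ∀ (t : ℝ) z, ‖t • firstBasis d + inc z‖ ^ 2 = t ^ 2 + ‖z‖ ^ 2 := by
  let inc : EuclideanSpace ℝ {k : Fin d // k ≠ 0} →ₗ[ℝ] EuclideanSpace ℝ (Fin d) :=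
    { toFun := fun z => WithLp.toLp 2 (fun k => if h : k ≠ 0 then z ⟨k, h⟩ else 0)
      map_add' := by intro x y; ext k; by_cases h : k = 0 <;> simp [h]
      map_smul' := by intro x y; ext k; by_cases h : k = 0 <;> simp [h] }
  let pr : EuclideanSpace ℝ (Fin d) →ₗ[ℝ] EuclideanSpace ℝ {k : Fin d // k ≠ 0} :=
    { toFun := fun z => WithLp.toLp 2 (fun k => z k.1)
      map_add' := by intro x y; ext k; simp
      map_smul' := by intro x y; ext k; simp }
  have hi : ∀ z k, inc z k = if h : k ≠ 0 then z ⟨k, h⟩ else 0 := fun _ _ => rfl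
  have hp : ∀ z k, pr z k = z k.1 := fun _ _ => rfl
  refine ⟨LinearMap.toContinuousLinearMap inc, LinearMap.toContinuousLinearMap pr, ?_, ?_, ?_, ?_, ?_⟩
  · intro z; simp [hi]
  · intro z; ext k; simp [hi, hp, k.2]
  · ext k; simp [hp, firstBasis, k.2]
  · intro u
    ext k
    by_cases h : k = 0
    · subst h; simp [firstBasis, hi]
    · simp [firstBasis, hi, hp, h]
  · intro t z
    rw [EuclideanSpace.norm_sq_eq, EuclideanSpace.norm_sq_eq,
      ← Finset.add_sum_erase Finset.univ _ (Finset.mem_univ (0 : Fin d))]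
    congr 1
    · simp [firstBasis, hi]
    · symm
      refine Finset.sum_bij' (fun k _ => k.1) (fun k hk => ⟨k, by simpa using hk⟩) ?_ ?_ ?_ ?_ ?_
      · intro k _; simp [k.2]
      · simp
      · simp
      · simp
      · intro k _; simp [firstBasis, hi, k.2]

theorem aux_chart (d : ℕ) [NeZero d] (P : Type) [NormedAddCommGroup P] [NormedSpace ℝ P]
    (inc : P →L[ℝ] EuclideanSpace ℝ (Fin d)) (pr : EuclideanSpace ℝ (Fin d) →L[ℝ] P)
    (hi0 : ∀ z, inc z 0 = 0) (hpi : ∀ z, pr (inc z) = z) (hp1 : pr (firstBasis d) = 0)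
    (hdec : ∀ u, u = u 0 • firstBasis d + inc (pr u))
    (hnorm : ∀ (t : ℝ) z, ‖t • firstBasis d + inc z‖ ^ 2 = t ^ 2 + ‖z‖ ^ 2)
    (r : ℕ) (w : Fin r → ℝ) (hw : ∀ i, w i = -1 ∨ w i = 1) (c l0 : ℝ) (hc : 0 < c) (hl0 : 0 < l0)
    (D : Set (Fin r → P)) (hD : IsOpen D)
    (hD1 : ∀ v ∈ D, ∀ i, ‖v i‖ < 1) (hD2 : ∀ v ∈ D, c * ‖∑ i, v i‖ < l0)
    (hD3 : ∀ v ∈ D,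
      0 < (∑ i, -(w i * c * √(1 - ‖v i‖ ^ 2))) + √(l0 ^ 2 - (c * ‖∑ i, v i‖) ^ 2)) :
    ∃ W' : Set (Fin (r + 1) → EuclideanSpace ℝ (Fin d)),
      (∃ O', IsOpen O' ∧ W' = O' ∩ chainReducedConf d (r + 1) (Fin.cons l0 fun _ => c)) ∧
      ∃ χ : D ≃ₜ W',
        (∀ v, ‖∑ i, (Fin.cons l0 (fun _ => c) : Fin (r + 1) → ℝ) i • (χ v).1 i‖ =
          (∑ i, -(w i * c * √(1 - ‖v.1 i‖ ^ 2))) + √(l0 ^ 2 - (c * ‖∑ i, v.1 i‖) ^ 2)) ∧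
        ∀ h0 : 0 ∈ D, (χ ⟨0, h0⟩).1 = Fin.cons (firstBasis d) (fun i => -(w i) • firstBasis d) := by
  have he0 : firstBasis d 0 = 1 := by simp [firstBasis]
  have hnf : ‖firstBasis d‖ = 1 := by simp [firstBasis]
  have hw2 : ∀ i, w i * w i = 1 := fun i => by rcases hw i with h | h <;> rw [h] <;> norm_num
  let τ : (Fin (r + 1) → EuclideanSpace ℝ (Fin d)) → (Fin r → P) := fun u i => pr (u i.succ)
  have hτ : Continuous τ := by fun_prop
  let X : (Fin r → P) → (Fin (r + 1) → EuclideanSpace ℝ (Fin d)) := fun v =>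
    Fin.cons (√(1 - (c / l0 * ‖∑ i, v i‖) ^ 2) • firstBasis d + inc (-(c / l0) • ∑ i, v i))
      (fun i => (-(w i * √(1 - ‖v i‖ ^ 2))) • firstBasis d + inc (v i))
  have hX0 : ∀ v, X v 0 = √(1 - (c / l0 * ‖∑ i, v i‖) ^ 2) • firstBasis d + inc (-(c / l0) • ∑ i, v i) :=
    fun _ => rfl
  have hXs : ∀ v i, X v (Fin.succ i) = (-(w i * √(1 - ‖v i‖ ^ 2))) • firstBasis d + inc (v i) :=
    fun _ _ => rfl
  have hX : Continuous X := by
    refine continuous_pi fun j => ?_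
    refine Fin.cases ?_ (fun i => ?_) j
    · simp only [hX0]; fun_prop
    · simp only [hXs]; fun_prop
  let O' : Set (Fin (r + 1) → EuclideanSpace ℝ (Fin d)) :=
    {u | 0 < u 0 0 ∧ (∀ i : Fin r, 0 < -(w i) * u i.succ 0) ∧ τ u ∈ D}
  have hO' : IsOpen O' := by
    have o1 : IsOpen {u : Fin (r + 1) → EuclideanSpace ℝ (Fin d) | 0 < u 0 0} :=
      isOpen_lt (by fun_prop) (by fun_prop)
    have o2 : IsOpen {u : Fin (r + 1) → EuclideanSpace ℝ (Fin d) |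
        ∀ i : Fin r, 0 < -(w i) * u i.succ 0} := by
      simp only [Set.ofPred_forall]
      exact isOpen_iInter_of_finite fun i => isOpen_lt (by fun_prop) (by fun_prop)
    exact o1.inter (o2.inter (hD.preimage hτ))
  let W' := O' ∩ chainReducedConf d (r + 1) (Fin.cons l0 fun _ => c)
  have hsum : ∀ v ∈ D, ∑ i, (Fin.cons l0 (fun _ => c) : Fin (r + 1) → ℝ) i • X v i =
      ((∑ i, -(w i * c * √(1 - ‖v i‖ ^ 2))) + √(l0 ^ 2 - (c * ‖∑ i, v i‖) ^ 2)) • firstBasis d := by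
    intro v hv
    have e1 : √(l0 ^ 2 - (c * ‖∑ i, v i‖) ^ 2) = l0 * √(1 - (c / l0 * ‖∑ i, v i‖) ^ 2) := by
      have : l0 ^ 2 - (c * ‖∑ i, v i‖) ^ 2 = l0 ^ 2 * (1 - (c / l0 * ‖∑ i, v i‖) ^ 2) := by
        field_simp
      rw [this, Real.sqrt_mul (by positivity), Real.sqrt_sq hl0.le]
    rw [Fin.sum_univ_succ, e1]
    simp only [Fin.cons_zero, Fin.cons_succ, hX0, hXs, smul_add, Finset.sum_add_distrib, smul_smul,
      ← Finset.sum_smul, ← Finset.smul_sum, ← map_sum, ← map_smul]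
    have e2 : (l0 * -(c / l0)) • ∑ i, v i = -(c • ∑ i, v i) := by
      rw [← neg_smul]; congr 1; field_simp
    have e3 : ∑ i, c * -(w i * √(1 - ‖v i‖ ^ 2)) = ∑ i, -(w i * c * √(1 - ‖v i‖ ^ 2)) :=
      Finset.sum_congr rfl fun i _ => by ring
    rw [e2, e3, map_neg, add_smul]
    abel
  have hsq : ∀ v ∈ D, ∀ i, 0 < 1 - ‖v i‖ ^ 2 := by
    intro v hv i
    nlinarith [hD1 v hv i, norm_nonneg (v i)]
  have hsq0 : ∀ v ∈ D, 0 < 1 - (c / l0 * ‖∑ i, v i‖) ^ 2 := by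
    intro v hv
    have h1 : c / l0 * ‖∑ i, v i‖ < 1 := by
      rw [div_mul_eq_mul_div, div_lt_one hl0]; exact hD2 v hv
    have h2 : 0 ≤ c / l0 * ‖∑ i, v i‖ := by positivity
    nlinarith
  have hτX : ∀ v, τ (X v) = v := by
    intro v; ext1 i; simp [τ, hXs, hp1, hpi]
  have hXm : ∀ v ∈ D, X v ∈ W' := by
    intro v hv
    refine ⟨⟨?_, fun i => ?_, ?_⟩, ?_, _, hD3 v hv, hsum v hv⟩
    · rw [hX0]
      simp only [PiLp.add_apply, PiLp.smul_apply, hi0, he0]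
      simpa using hsq0 v hv
    · rw [hXs]
      simp only [PiLp.add_apply, PiLp.smul_apply, hi0, he0]
      have := Real.sqrt_pos.2 (hsq v hv i)
      have h2 := hw2 i
      calc (0 : ℝ) < (w i * w i) * √(1 - ‖v i‖ ^ 2) := by rw [h2]; simpa using this
        _ = _ := by simp; ring
    · rw [hτX]; exact hv
    · intro j
      have : ‖X v j‖ ^ 2 = 1 := by
        refine Fin.cases ?_ (fun i => ?_) j
        · rw [hX0, hnorm, Real.sq_sqrt (hsq0 v hv).le, norm_smul, norm_neg, Real.norm_eq_abs,
            abs_of_pos (by positivity)]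
          ring
        · rw [hXs, hnorm, neg_sq, mul_pow, Real.sq_sqrt (hsq v hv i).le]
          linear_combination (1 - ‖v i‖ ^ 2) * hw2 i
      nlinarith [norm_nonneg (X v j)]
  have hXτ : ∀ u ∈ W', X (τ u) = u := by
    rintro u ⟨⟨h1, h2, h3⟩, h4, t, ht, h5⟩
    have hu : ∀ j, u j 0 ^ 2 + ‖pr (u j)‖ ^ 2 = 1 := by
      intro j
      rw [← hnorm, ← hdec, h4]; norm_num
    have hpr0 : -(c / l0) • ∑ i, τ u i = pr (u 0) := by
      have := congrArg pr h5
      rw [Fin.sum_univ_succ] at this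
      simp only [Fin.cons_zero, Fin.cons_succ, map_add, map_smul, map_sum, hp1, smul_zero,
        ← Finset.smul_sum] at this
      have h6 : pr (u 0) = l0⁻¹ • (l0 • pr (u 0)) := by rw [smul_smul, inv_mul_cancel₀ hl0.ne', one_smul]
      rw [h6, eq_neg_of_add_eq_zero_left this, smul_neg, smul_smul, neg_smul]
      congr 2
      field_simp
    ext1 j
    refine Fin.cases ?_ (fun i => ?_) j
    · have e : √(1 - (c / l0 * ‖∑ i, τ u i‖) ^ 2) = u 0 0 := by
        have : c / l0 * ‖∑ i, τ u i‖ = ‖pr (u 0)‖ := by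
          rw [← hpr0, norm_smul, norm_neg, Real.norm_eq_abs, abs_of_pos (by positivity)]
        rw [this, Real.sqrt_eq_iff_eq_sq (by nlinarith [hu 0, sq_nonneg (u 0 0)]) h1.le]
        linarith [hu 0]
      rw [hX0, e, hpr0, ← hdec]
    · have e : √(1 - ‖τ u i‖ ^ 2) = -(w i) * u i.succ 0 := by
        have := hu i.succ
        rw [Real.sqrt_eq_iff_eq_sq (by simp only [τ]; nlinarith [sq_nonneg (u i.succ 0)]) (h2 i).le]
        simp only [τ]
        linear_combination -this - (u i.succ 0) ^ 2 * hw2 i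
      have e2 : -(w i * (-(w i) * u i.succ 0)) = u i.succ 0 := by
        linear_combination (u i.succ 0) * hw2 i
      rw [hXs, e, e2]
      exact (hdec _).symm
  let χ : D ≃ₜ W' :=
    { toFun := fun v => ⟨X v.1, hXm v.1 v.2⟩
      invFun := fun u => ⟨τ u.1, u.2.1.2.2⟩
      left_inv := fun v => Subtype.ext (hτX v.1)
      right_inv := fun u => Subtype.ext (hXτ u.1 u.2)
      continuous_toFun := (hX.comp continuous_subtype_val).subtype_mk _
      continuous_invFun := (hτ.comp continuous_subtype_val).subtype_mk _ }
  refine ⟨W', ⟨O', hO', rfl⟩, χ, ?_, ?_⟩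
  · intro v
    have := hsum v.1 v.2
    change ‖∑ i, (Fin.cons l0 (fun _ => c) : Fin (r + 1) → ℝ) i • X v.1 i‖ = _
    rw [this, norm_smul, hnf, mul_one, Real.norm_eq_abs, abs_of_pos (hD3 v.1 v.2)]
  · intro h0
    change X 0 = _
    ext1 j
    refine Fin.cases ?_ (fun i => ?_) j
    · rw [hX0]; simp
    · rw [hXs]; simp

end

noncomputable def aux_pu (X : Type) [TopologicalSpace X] : X ≃ₜ X × EuclideanSpace ℝ (Fin 0) where
  toFun x := (x, 0)
  invFun y := y.1
  left_inv _ := rfl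
  right_inv y := Prod.ext rfl (Subsingleton.elim _ _)
  continuous_toFun := by fun_prop
  continuous_invFun := by fun_prop

theorem stmt_9 (d : ℕ) (hd : 2 ≤ d) [NeZero d]
    (V : Type) [Fintype V] (E : Set (V × V)) (ℓ : V × V → ℝ)
    (hℓ : ∀ e ∈ E, 0 < ℓ e) (xs xe : V) (hne : xe ≠ xs)
    (Vc : V → EuclideanSpace ℝ (Fin d))
    (hVc : Vc ∈ reducedConf d V E ℓ xs xe)
    (a₀ : ℝ) (ha₀ : 0 < a₀) (ha : ‖Vc xe‖ = a₀)
    (N : ℕ) (hN : 1 ≤ N)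
    (g : EuclideanSpace ℝ (Fin N) → (V → EuclideanSpace ℝ (Fin d)))
    (hg0 : g 0 = Vc)
    (hgsmooth : ContDiff ℝ (⊤ : ℕ∞) g)
    (hgemb : Topology.IsEmbedding g)
    (hgrange : ∃ O : Set (V → EuclideanSpace ℝ (Fin d)), IsOpen O ∧
      Set.range g = O ∩ reducedConf d V E ℓ xs xe)
    (hgderiv : ∀ x, Function.Injective (fderiv ℝ g x))
    (hcrit : fderiv ℝ (fun x => ‖g x xe‖) 0 = 0)
    (hhess : Function.Bijective (fderiv ℝ (fderiv ℝ (fun x => ‖g x xe‖)) 0)) :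
    ∃ (n : ℕ), 1 ≤ n ∧
    ∃ (lam : Fin n → ℝ), (∀ i, 0 < lam i) ∧
    ∃ (u0 : Fin n → EuclideanSpace ℝ (Fin d)),
      (∀ i, ‖u0 i‖ = 1) ∧
      (∃ w : EuclideanSpace ℝ (Fin d), ‖w‖ = 1 ∧ ∀ i, u0 i = w ∨ u0 i = -w) ∧
      (∑ i, lam i • u0 i) = a₀ • firstBasis d ∧
    ∃ (s s' : ℕ)
      (W : Set (V → EuclideanSpace ℝ (Fin d)))
      (W' : Set (Fin n → EuclideanSpace ℝ (Fin d))),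
      W ⊆ reducedConf d V E ℓ xs xe ∧
      (∃ O, IsOpen O ∧ W = O ∩ reducedConf d V E ℓ xs xe) ∧
      W' ⊆ chainReducedConf d n lam ∧
      (∃ O', IsOpen O' ∧ W' = O' ∩ chainReducedConf d n lam) ∧
    ∃ (hVcW : Vc ∈ W) (hu0W' : u0 ∈ W')
      (U U' : Type) (_tU : TopologicalSpace U) (_tU' : TopologicalSpace U')
      (α : ↥W ≃ₜ U × EuclideanSpace ℝ (Fin s))
      (β : ↥W' ≃ₜ U' × EuclideanSpace ℝ (Fin s'))
      (f : U ≃ₜ U')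
      (ψU : U → ℝ) (ηU : U' → ℝ),
      (∀ w : ↥W, ‖(w : V → EuclideanSpace ℝ (Fin d)) xe‖ = ψU (α w).1) ∧
      (∀ w' : ↥W', ‖∑ i, lam i • (w' : Fin n → EuclideanSpace ℝ (Fin d)) i‖ =
        ηU (β w').1) ∧
      (∀ uu : U, ηU (f uu) = ψU uu) ∧
      (α ⟨Vc, hVcW⟩).2 = 0 ∧ (β ⟨u0, hu0W'⟩).2 = 0 ∧
      f (α ⟨Vc, hVcW⟩).1 = (β ⟨u0, hu0W'⟩).1 ∧
      (∀ w : ↥W, ‖(w : V → EuclideanSpace ℝ (Fin d)) xe‖ =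
        ‖∑ i, lam i •
          ((β.symm (f (α w).1, 0) : ↥W') : Fin n → EuclideanSpace ℝ (Fin d)) i‖) := by
  obtain ⟨O, hO, hr⟩ := hgrange
  have hg3 : ContDiff ℝ 3 g := hgsmooth.of_le (WithTop.coe_le_coe.2 (le_top : (3 : ℕ∞) ≤ ⊤))
  have hgC : ∀ x, g x ∈ reducedConf d V E ℓ xs xe :=
    fun x => (hr ▸ Set.mem_range_self x : g x ∈ O ∩ _).2
  have hsm := (aux_smooth d V E ℓ xs xe N g hg3 hgC).2
  obtain ⟨B, hB0, hBs, hBsym, hBF⟩ := aux_taylor (fun x => ‖g x xe‖) hsm hcrit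
  have hBc : ContinuousAt B 0 := by
    obtain ⟨B', h⟩ := hBs
    exact h.hasFDerivAt.continuousAt
  obtain ⟨r, w, J, hw, hJ⟩ := aux_concrete d hd V E ℓ hℓ xs xe N g hg3 hgemb O hO hr (hgderiv 0)
    hcrit hhess B hB0 hBc hBsym hBF
  have hF0 : ‖g 0 xe‖ = a₀ := by rw [hg0, ha]
  obtain ⟨c, hc, hcr⟩ : ∃ c : ℝ, 0 < c ∧ a₀ = c * (r + 1) :=
    ⟨a₀ / (r + 1), by positivity, by field_simp⟩
  obtain ⟨l0, hl⟩ : ∃ l0, l0 = a₀ + c * ∑ i, w i := ⟨_, rfl⟩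
  have hl0 : 0 < l0 := by
    have h1 : ∑ i : Fin r, (-1 : ℝ) ≤ ∑ i, w i :=
      Finset.sum_le_sum fun i _ => by rcases hw i with h | h <;> rw [h] <;> norm_num
    simp at h1
    rw [hl, hcr]
    nlinarith
  obtain ⟨Jt, B2, hB2s, hB2sym, hB2F, hB20⟩ := aux_model r J w hw a₀ c l0 ha₀ hc hl0 hl
  have hpol : ∀ x y, B2 0 x y = B 0 x y := by
    intro x y
    have hq : ∀ z, B2 0 z z = B 0 z z := fun z => by rw [hB20, hJ]
    have h1 := hq (x + y)
    have h2 := hq x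
    have h3 := hq y
    have h4 := hB2sym 0 x y
    have h5 := hBsym 0 x y
    simp only [map_add, add_apply] at h1
    linarith
  let B0 : EuclideanSpace ℝ (Fin N) ≃L[ℝ] (EuclideanSpace ℝ (Fin N) →L[ℝ] ℝ) :=
    ContinuousLinearEquiv.ofBijective (B 0) (by
      rw [hB0]; exact LinearMap.ker_eq_bot.2 hhess.1) (by
      rw [hB0]; exact LinearMap.range_eq_top.2 hhess.2)
  have hB0a : ∀ x y, B 0 x y = B0 x y := fun x y => rfl
  obtain ⟨φ1, h10, h1z, h1⟩ := aux_morse B hBs hBsym B0 hB0a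
  obtain ⟨φ2, h20, h2z, h2⟩ := aux_morse B2 hB2s hB2sym B0 (fun x y => (hpol x y).trans (hB0a x y))
  obtain ⟨inc, pr, hi0, hpi, hp1, hdec, hnorm⟩ := aux_coord d
  let G : (Fin r → EuclideanSpace ℝ {k : Fin d // k ≠ 0}) → ℝ := fun v =>
    (∑ i, -(w i * c * √(1 - ‖v i‖ ^ 2))) + √(l0 ^ 2 - (c * ‖∑ i, v i‖) ^ 2)
  let D0 : Set (Fin r → EuclideanSpace ℝ {k : Fin d // k ≠ 0}) :=
    {v | (∀ i, ‖v i‖ < 1) ∧ c * ‖∑ i, v i‖ < l0 ∧ 0 < G v}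
  have hD0 : IsOpen D0 := by
    have o1 : IsOpen {v : Fin r → EuclideanSpace ℝ {k : Fin d // k ≠ 0} | ∀ i, ‖v i‖ < 1} := by
      simp only [Set.ofPred_forall]
      exact isOpen_iInter_of_finite fun i => isOpen_lt (by fun_prop) (by fun_prop)
    have o2 : IsOpen {v : Fin r → EuclideanSpace ℝ {k : Fin d // k ≠ 0} | c * ‖∑ i, v i‖ < l0} :=
      isOpen_lt (by fun_prop) (by fun_prop)
    have o3 : IsOpen {v : Fin r → EuclideanSpace ℝ {k : Fin d // k ≠ 0} | 0 < G v} :=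
      isOpen_lt (by fun_prop) (by fun_prop)
    exact o1.inter (o2.inter o3)
  have h0D0 : (0 : Fin r → EuclideanSpace ℝ {k : Fin d // k ≠ 0}) ∈ D0 := by
    refine ⟨by simp, by simpa using hl0, ?_⟩
    have : G 0 = a₀ := by
      simp [G, Real.sqrt_sq hl0.le, ← Finset.sum_mul]
      rw [hl]; ring
    rw [this]; exact ha₀
  let Ψ : OpenPartialHomeomorph (EuclideanSpace ℝ (Fin N)) (Fin r → EuclideanSpace ℝ {k : Fin d // k ≠ 0}) :=
    ((φ1.trans φ2.symm).trans Jt.toHomeomorph.toOpenPartialHomeomorph).trans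
      (OpenPartialHomeomorph.ofSet D0 hD0)
  have hΨ : ∀ x, Ψ x = Jt (φ2.symm (φ1 x)) := fun x => rfl
  have hΨs : ∀ x, x ∈ Ψ.source ↔ x ∈ φ1.source ∧ φ1 x ∈ φ2.target ∧ Jt (φ2.symm (φ1 x)) ∈ D0 := by
    intro x
    simp [Ψ, and_assoc]
  have hφ20 : φ2.symm 0 = 0 := by
    have := φ2.left_inv h20
    rwa [h2z] at this
  have hΨ0 : Ψ 0 = 0 := by rw [hΨ, h1z, hφ20, map_zero]
  have h0s : (0 : EuclideanSpace ℝ (Fin N)) ∈ Ψ.source := by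
    rw [hΨs]
    refine ⟨h10, ?_, ?_⟩
    · rw [h1z, ← h2z]; exact φ2.map_source h20
    · rw [h1z, hφ20, map_zero]; exact h0D0
  have hΨG : ∀ x ∈ Ψ.source, G (Ψ x) = ‖g x xe‖ := by
    intro x hx
    obtain ⟨s1, s2, s3⟩ := (hΨs x).1 hx
    have e1 := hB2F (φ2.symm (φ1 x)) (fun i => (s3.1 i).le)
      (by
        have := s3.2.1
        have h0 : 0 ≤ c * ‖∑ i, Jt (φ2.symm (φ1 x)) i‖ := by positivity
        exact pow_le_pow_left₀ h0 this.le 2)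
    have e2 := h2 _ (φ2.map_target s2)
    rw [φ2.right_inv s2, ← h1 x s1] at e2
    have e3 := hBF x
    rw [e3, hF0, ← e2]
    exact e1
  have htD : ∀ v ∈ Ψ.target, v ∈ D0 := by
    intro v hv
    have := ((hΨs _).1 (Ψ.map_target hv)).2.2
    rw [← hΨ, Ψ.right_inv hv] at this
    exact this
  obtain ⟨W', ⟨O', hO', hW'⟩, χ, hχ, hχ0⟩ := aux_chart d (EuclideanSpace ℝ {k : Fin d // k ≠ 0})
    inc pr hi0 hpi hp1 hdec hnorm r w hw c l0 hc hl0 Ψ.target Ψ.open_target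
    (fun v hv => (htD v hv).1) (fun v hv => (htD v hv).2.1) (fun v hv => (htD v hv).2.2)
  obtain ⟨O2, hO2, hO2s⟩ := hgemb.isInducing.isOpen_iff.1 Ψ.open_source
  have hW : g '' Ψ.source = (O2 ∩ O) ∩ reducedConf d V E ℓ xs xe := by
    rw [← hO2s, Set.image_preimage_eq_inter_range, hr, Set.inter_assoc]
  have h0t : (0 : Fin r → EuclideanSpace ℝ {k : Fin d // k ≠ 0}) ∈ Ψ.target := by
    rw [← hΨ0]; exact Ψ.map_source h0s
  let γ : Ψ.source ≃ₜ (g '' Ψ.source : Set _) := hgemb.homeomorphImage Ψ.source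
  have hγ : ∀ x, (γ x).1 = g x.1 := fun x => rfl
  let f : (g '' Ψ.source : Set _) ≃ₜ W' := (γ.symm.trans Ψ.toHomeomorphSourceTarget).trans χ
  have hVcW : Vc ∈ g '' Ψ.source := ⟨0, h0s, hg0⟩
  have hfV : (f ⟨Vc, hVcW⟩).1 = Fin.cons (firstBasis d) (fun i => -(w i) • firstBasis d) := by
    have e1 : γ.symm ⟨Vc, hVcW⟩ = ⟨0, h0s⟩ := by
      rw [Homeomorph.symm_apply_eq]
      exact Subtype.ext hg0.symm
    rw [← hχ0 h0t]
    change (χ (Ψ.toHomeomorphSourceTarget (γ.symm ⟨Vc, hVcW⟩))).1 = _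
    rw [e1]
    congr 2
    exact Subtype.ext hΨ0
  have hfG : ∀ q, ‖∑ i, (Fin.cons l0 (fun _ => c) : Fin (r + 1) → ℝ) i • (f q).1 i‖ = ‖q.1 xe‖ := by
    intro q
    have e1 : f q = χ (Ψ.toHomeomorphSourceTarget (γ.symm q)) := rfl
    rw [e1, hχ]
    have e2 := hΨG _ (γ.symm q).2
    have e3 : g (γ.symm q).1 = q.1 := by
      rw [← hγ, γ.apply_symm_apply]
    rw [e3] at e2
    exact e2
  have hu0 : (Fin.cons (firstBasis d) (fun i => -(w i) • firstBasis d) :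
      Fin (r + 1) → EuclideanSpace ℝ (Fin d)) ∈ W' := by
    rw [← hfV]; exact (f _).2
  have hnf : ‖firstBasis d‖ = 1 := by simp [firstBasis]
  refine ⟨r + 1, by omega, Fin.cons l0 (fun _ => c), ?_,
    Fin.cons (firstBasis d) (fun i => -(w i) • firstBasis d), ?_,
    ⟨firstBasis d, hnf, ?_⟩, ?_, 0, 0, g '' Ψ.source, W', ?_, ⟨O2 ∩ O, hO2.inter hO, hW⟩, ?_,
    ⟨O', hO', hW'⟩, hVcW, hu0, (g '' Ψ.source : Set _), W', inferInstance, inferInstance,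
    (aux_pu _), (aux_pu _), f,
    fun q => ‖q.1 xe‖, fun u => ‖∑ i, (Fin.cons l0 (fun _ => c) : Fin (r + 1) → ℝ) i • u.1 i‖,
    fun _ => rfl, fun _ => rfl, hfG, Subsingleton.elim _ _, Subsingleton.elim _ _,
    Subtype.ext hfV, fun q => (hfG q).symm⟩
  · intro j
    refine Fin.cases ?_ (fun i => ?_) j
    · simpa using hl0
    · simpa using hc
  · intro j
    refine Fin.cases ?_ (fun i => ?_) j
    · simpa using hnf
    · rw [Fin.cons_succ, norm_smul, hnf]
      rcases hw i with h | h <;> rw [h] <;> norm_num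
  · intro j
    refine Fin.cases ?_ (fun i => ?_) j
    · left; simp
    · rw [Fin.cons_succ]
      rcases hw i with h | h <;> rw [h] <;> simp
  · rw [Fin.sum_univ_succ]
    simp only [Fin.cons_zero, Fin.cons_succ, smul_smul, ← Finset.sum_smul, ← add_smul]
    congr 1
    rw [hl, Finset.mul_sum]
    simp
  · rw [hW]; exact Set.inter_subset_right
  · rw [hW']; exact Set.inter_subset_right
end

section
/- Let d ≥ 2, let X be a topological space, a ∈ X, and Ψ : X → EuclideanSpace ℝ (Fin d) a continuous map. Let φ be the work map of an open k-chain with lengths λ i > 0, and let u⁰ ∈ (S^{d-1})^k be a non-aligned tuple with φ(u⁰) = Ψ(a). Then in the fiber product Z = {(x, u) ∈ X × (S^{d-1})^k : Ψ(x) = φ(u)} the point (a, u⁰) has an open neighborhood homeomorphic to A × ℝ^{k(d−1)−d} for some open neighborhood A of a in X, by a homeomorphism sending (a, u⁰) to (a, 0). -/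
open scoped BigOperators

open Submodule in
theorem sumsurj {E : Type*} [NormedAddCommGroup E] [InnerProductSpace ℝ E] [FiniteDimensional ℝ E]
   (p q : E) (hp : ‖p‖ = 1) (hq : ‖q‖ = 1) (h1 : q ≠ p) (h2 : q ≠ -p) (e : E) :
   ∃ s t : E, inner ℝ p s = 0 ∧ inner ℝ q t = 0 ∧ s + t = e := by
  have hpp : inner ℝ p p = (1:ℝ) := by rw [real_inner_self_eq_norm_sq, hp]; norm_num
  have hqq : inner ℝ q q = (1:ℝ) := by rw [real_inner_self_eq_norm_sq, hq]; norm_num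
  set c : ℝ := inner ℝ p q with hc
  have hqp : inner ℝ q p = c := real_inner_comm _ _
  have hc1 : 1 - c^2 ≠ 0 := by
    intro h
    have : (c - 1) * (c + 1) = 0 := by linarith
    rcases mul_eq_zero.1 this with h | h
    · apply h1
      have : inner ℝ (q - p) (q - p) = (0:ℝ) := by
        simp only [inner_sub_left, inner_sub_right, hpp, hqq, hqp, ← hc]; linarith
      exact sub_eq_zero.1 (inner_self_eq_zero.1 this)
    · apply h2
      have : inner ℝ (q + p) (q + p) = (0:ℝ) := by
        simp only [inner_add_left, inner_add_right, hpp, hqq, hqp, ← hc]; linarith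
      exact eq_neg_of_add_eq_zero_left (inner_self_eq_zero.1 this)
  -- t = r (p - c q), inner p t = r (1 - c^2)
  refine ⟨e - (inner ℝ p e / (1 - c^2)) • (p - c • q), (inner ℝ p e / (1 - c^2)) • (p - c • q), ?_, ?_, by abel⟩
  · simp only [inner_sub_right, inner_smul_right, hpp, ← hc]
    field_simp; ring
  · simp only [inner_sub_right, inner_smul_right, hqq, hqp]; ring

theorem chart_exists {V W : Type*} [NormedAddCommGroup V] [NormedSpace ℝ V]
    [FiniteDimensional ℝ V] [NormedAddCommGroup W] [NormedSpace ℝ W] [FiniteDimensional ℝ W]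
    (n : ℕ) (f : V → W) (f' : V →L[ℝ] W) (a : V) (hf : HasStrictFDerivAt f f' a)
    (hs : Function.Surjective f')
    (hn : Module.finrank ℝ V = Module.finrank ℝ W + n) :
    ∃ G : OpenPartialHomeomorph V (W × EuclideanSpace ℝ (Fin n)), a ∈ G.source ∧
      (∀ x, (G x).1 = f x) ∧ (G a).2 = 0 := by
  have := FiniteDimensional.complete ℝ V
  have hr : f'.range = ⊤ := LinearMap.range_eq_top.2 hs
  have hk : Module.finrank ℝ f'.ker = Module.finrank ℝ (EuclideanSpace ℝ (Fin n)) := by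
    have h := (f' : V →ₗ[ℝ] W).finrank_range_add_finrank_ker
    have h2 : Module.finrank ℝ (LinearMap.range (f' : V →ₗ[ℝ] W)) = Module.finrank ℝ W := by
      rw [LinearMap.range_eq_top.2 hs, finrank_top]
    rw [h2, hn] at h
    rw [finrank_euclideanSpace_fin]
    exact Nat.add_left_cancel h
  let e : f'.ker ≃L[ℝ] EuclideanSpace ℝ (Fin n) := ContinuousLinearEquiv.ofFinrankEq hk
  let H := (hf.implicitToOpenPartialHomeomorph f f' hr).transHomeomorph
    ((Homeomorph.refl W).prodCongr e.toHomeomorph)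
  refine ⟨H, hf.mem_implicitToOpenPartialHomeomorph_source hr, fun x => ?_, ?_⟩
  · simp [H]
  · simp [H]

theorem final_homeo {U W N X : Type*} [TopologicalSpace U] [TopologicalSpace W]
    [NormedAddCommGroup N] [NormedSpace ℝ N] [TopologicalSpace X]
    (G : OpenPartialHomeomorph U (W × N)) (f : U → W) (u0 : U) (hu0 : u0 ∈ G.source)
    (hG : ∀ x, (G x).1 = f x) (hG0 : (G u0).2 = 0) (P : X → W) (hP : Continuous P) (a : X)
    (ha : P a = f u0) (Z : Set (X × U)) (hZ : Z = {p | P p.1 = f p.2}) :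
    ∃ A : Set X, IsOpen A ∧
    ∃ (hA : a ∈ A) (Nb : Set (X × U)),
      Nb ⊆ Z ∧ (∃ O, IsOpen O ∧ Nb = O ∩ Z) ∧
    ∃ (hmem : (a, u0) ∈ Nb) (h : ↥Nb ≃ₜ ↥A × N),
      h ⟨(a, u0), hmem⟩ = (⟨a, hA⟩, 0) := by
  have hGu : G u0 = (P a, 0) := Prod.ext (by rw [hG, ha]) hG0
  have ht : G.target ∈ nhds (P a, (0 : N)) := by
    rw [← hGu]; exact G.open_target.mem_nhds (G.map_source hu0)
  obtain ⟨V, B, hVo, haV, hBo, h0B, hVB⟩ := mem_nhds_prod_iff'.1 ht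
  obtain ⟨r, hr, hrB⟩ := Metric.isOpen_iff.1 hBo 0 h0B
  let b := OpenPartialHomeomorph.univBall (0 : N) r
  have hbs : b.source = Set.univ := OpenPartialHomeomorph.univBall_source _ _
  have hbt : b.target = Metric.ball 0 r := OpenPartialHomeomorph.univBall_target _ hr
  have hbc : Continuous b := OpenPartialHomeomorph.continuous_univBall _ _
  have hbm : ∀ n, b n ∈ Metric.ball (0 : N) r := fun n => by
    rw [← hbt]; exact b.map_source (by rw [hbs]; trivial)
  let O : Set (X × U) := {p | P p.1 ∈ V} ∩
    (Prod.snd ⁻¹' (G.source ∩ G ⁻¹' (Prod.snd ⁻¹' Metric.ball (0 : N) r)))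
  have hO : IsOpen O := (hVo.preimage (hP.comp continuous_fst)).inter
    ((G.isOpen_inter_preimage (Metric.isOpen_ball.preimage continuous_snd)).preimage
      continuous_snd)
  have htar : ∀ x : X, P x ∈ V → ∀ n, (P x, b n) ∈ G.target := fun x hx n =>
    hVB ⟨hx, hrB (hbm n)⟩
  have hinv : ∀ x : X, P x ∈ V → ∀ n, (x, G.symm (P x, b n)) ∈ O ∩ Z := by
    intro x hx n
    have h1 := G.right_inv (htar x hx n)
    refine ⟨⟨hx, G.map_target (htar x hx n), ?_⟩, ?_⟩
    · change (G (G.symm (P x, b n))).2 ∈ Metric.ball (0 : N) r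
      rw [h1]; exact hbm n
    · rw [hZ]
      change P x = f (G.symm (P x, b n))
      rw [← hG, h1]
  have hmem : (a, u0) ∈ O ∩ Z := by
    refine ⟨⟨haV, hu0, ?_⟩, ?_⟩
    · change (G u0).2 ∈ Metric.ball (0 : N) r
      rw [hG0]; exact Metric.mem_ball_self hr
    · rw [hZ]; exact ha
  refine ⟨P ⁻¹' V, hVo.preimage hP, haV, O ∩ Z, Set.inter_subset_right, ⟨O, hO, rfl⟩, hmem,
    { toFun := fun p => (⟨p.1.1, p.2.1.1⟩, b.symm (G p.1.2).2)
      invFun := fun q => ⟨(q.1.1, G.symm (P q.1.1, b q.2)), hinv q.1.1 q.1.2 q.2⟩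
      left_inv := ?_
      right_inv := ?_
      continuous_toFun := ?_
      continuous_invFun := ?_ }, ?_⟩
  · rintro ⟨⟨x, u⟩, hp⟩
    apply Subtype.ext
    refine Prod.ext rfl ?_
    change G.symm (P x, b (b.symm (G u).2)) = u
    have h1 : P x = f u := by have := hp.2; rw [hZ] at this; exact this
    rw [b.right_inv (by rw [hbt]; exact hp.1.2.2), h1, ← hG]
    exact G.left_inv hp.1.2.1
  · rintro ⟨⟨x, hx⟩, n⟩
    refine Prod.ext rfl ?_
    change b.symm (G (G.symm (P x, b n))).2 = n
    rw [G.right_inv (htar x hx n)]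
    exact b.left_inv (by rw [hbs]; trivial)
  · refine Continuous.prodMk (by fun_prop) ?_
    have hg : Continuous fun p : ↥(O ∩ Z) => G p.1.2 :=
      G.continuousOn.comp_continuous (by fun_prop) fun p => p.2.1.2.1
    refine b.symm.continuousOn.comp_continuous (continuous_snd.comp hg) fun p => ?_
    change (G p.1.2).2 ∈ b.target
    rw [hbt]; exact p.2.1.2.2
  · refine Continuous.subtype_mk (Continuous.prodMk (by fun_prop) ?_) _
    refine G.symm.continuousOn.comp_continuous (by fun_prop) fun q => htar _ q.1.2 _
  · refine Prod.ext rfl ?_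
    change b.symm (G u0).2 = 0
    rw [hG0]
    exact OpenPartialHomeomorph.univBall_symm_apply_center _ _

theorem stmt_11 (d k : ℕ) (hd : 2 ≤ d) (hk : 1 ≤ k)
    (lam : Fin k → ℝ) (hlam : ∀ i, 0 < lam i)
    (X : Type) [TopologicalSpace X] (a : X)
    (Ψ : X → EuclideanSpace ℝ (Fin d)) (hΨ : Continuous Ψ)
    (u0 : Fin k → EuclideanSpace ℝ (Fin d)) (hu0 : ∀ i, ‖u0 i‖ = 1)
    (hna : ¬ ∃ w : EuclideanSpace ℝ (Fin d), ‖w‖ = 1 ∧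
      ∀ i, u0 i = w ∨ u0 i = -w)
    (hmatch : ∑ i, lam i • u0 i = Ψ a)
    (Z : Set (X × (Fin k → EuclideanSpace ℝ (Fin d))))
    (hZ : Z = {p | (∀ i, ‖p.2 i‖ = 1) ∧ Ψ p.1 = ∑ i, lam i • p.2 i}) :
    ∃ A : Set X, IsOpen A ∧
    ∃ (hA : a ∈ A)
      (Nb : Set (X × (Fin k → EuclideanSpace ℝ (Fin d)))),
      Nb ⊆ Z ∧ (∃ O, IsOpen O ∧ Nb = O ∩ Z) ∧
    ∃ (hmem : (a, u0) ∈ Nb)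
      (h : ↥Nb ≃ₜ ↥A × EuclideanSpace ℝ (Fin (k * (d - 1) - d))),
      h ⟨(a, u0), hmem⟩ = (⟨a, hA⟩, 0) := by
  obtain ⟨i, j, hij, h1, h2⟩ : ∃ i j, i ≠ j ∧ u0 j ≠ u0 i ∧ u0 j ≠ - u0 i := by
    by_contra hcon
    push Not at hcon
    refine hna ⟨u0 ⟨0, hk⟩, hu0 _, fun j => ?_⟩
    by_cases hj : (⟨0, hk⟩ : Fin k) = j
    · left; rw [hj]
    · by_cases h : u0 j = u0 ⟨0, hk⟩
      · exact Or.inl h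
      · exact Or.inr (hcon _ _ hj h)
  have hk2 : 2 ≤ k := by
    have := i.2; have := j.2
    have : i.1 ≠ j.1 := fun h => hij (Fin.ext h)
    omega
  let f : (Fin k → EuclideanSpace ℝ (Fin d)) → (Fin k → ℝ) × EuclideanSpace ℝ (Fin d) :=
    fun u => (fun i => ‖u i‖ ^ 2, ∑ i, lam i • u i)
  let f' : (Fin k → EuclideanSpace ℝ (Fin d)) →L[ℝ] (Fin k → ℝ) × EuclideanSpace ℝ (Fin d) :=
    (ContinuousLinearMap.pi fun i => (2 • innerSL ℝ (u0 i)).comp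
      (ContinuousLinearMap.proj (R := ℝ) (φ := fun _ : Fin k => EuclideanSpace ℝ (Fin d)) i)).prod
    (∑ i, lam i • ContinuousLinearMap.proj (R := ℝ)
      (φ := fun _ : Fin k => EuclideanSpace ℝ (Fin d)) i)
  have hf : HasStrictFDerivAt f f' u0 := by
    refine HasStrictFDerivAt.prodMk ?_ ?_
    · refine hasStrictFDerivAt_pi.2 fun i => ?_
      exact (hasStrictFDerivAt_norm_sq (u0 i)).comp u0
        (ContinuousLinearMap.hasStrictFDerivAt (ContinuousLinearMap.proj (R := ℝ)
          (φ := fun _ : Fin k => EuclideanSpace ℝ (Fin d)) i))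
    · convert! (ContinuousLinearMap.hasStrictFDerivAt (∑ i, lam i • ContinuousLinearMap.proj (R := ℝ)
        (φ := fun _ : Fin k => EuclideanSpace ℝ (Fin d)) i)) using 1
      ext u
      simp
  have hf'1 : ∀ v l, (f' v).1 l = 2 * inner ℝ (u0 l) (v l) := by
    intro v l; simp [f']
  have hf'2 : ∀ v, (f' v).2 = ∑ l, lam l • v l := by
    intro v; simp [f']
  have hs : Function.Surjective f' := by
    rintro ⟨c, e⟩
    obtain ⟨s, t, hs, ht, hst⟩ := sumsurj (u0 i) (u0 j) (hu0 i) (hu0 j) h1 h2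
      (e - ∑ l, lam l • (c l / 2) • u0 l)
    refine ⟨(fun l => (c l / 2) • u0 l) + (Pi.single i ((lam i)⁻¹ • s) +
      Pi.single j ((lam j)⁻¹ • t)), ?_⟩
    have key : ∀ m (s : EuclideanSpace ℝ (Fin d)), inner ℝ (u0 m) s = 0 →
        f' (Pi.single m ((lam m)⁻¹ • s)) = (0, s) := by
      intro m s hs
      refine Prod.ext ?_ ?_
      · funext l
        rw [hf'1]
        by_cases h : l = m
        · subst h; simp [inner_smul_right, hs]
        · simp [h]
      · rw [hf'2, Finset.sum_eq_single m]
        · simp [smul_smul, (hlam m).ne']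
        · intro l _ h; simp [h]
        · simp
    rw [map_add, map_add, key i s hs, key j t ht]
    refine Prod.ext ?_ ?_
    · funext l
      have := hf'1 (fun l => (c l / 2) • u0 l) l
      simp only [Prod.fst_add, Pi.add_apply, this, inner_smul_right, real_inner_self_eq_norm_sq,
        hu0]
      simp
      ring
    · simp only [Prod.snd_add, hf'2, hst]
      abel
  have hn : Module.finrank ℝ (Fin k → EuclideanSpace ℝ (Fin d)) =
      Module.finrank ℝ ((Fin k → ℝ) × EuclideanSpace ℝ (Fin d)) + (k * (d - 1) - d) := by
    rw [Module.finrank_pi_fintype, Module.finrank_prod]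
    simp only [finrank_euclideanSpace_fin, Finset.sum_const, Finset.card_univ, Fintype.card_fin,
      Module.finrank_fin_fun, smul_eq_mul]
    obtain ⟨m, rfl⟩ : ∃ m, d = m + 1 := ⟨d - 1, by omega⟩
    have : 2 * m ≤ k * m := Nat.mul_le_mul_right _ hk2
    simp only [Nat.add_sub_cancel, Nat.mul_add, Nat.mul_one]
    omega
  obtain ⟨G, hG1, hG2, hG3⟩ := chart_exists _ f f' u0 hf hs hn
  refine final_homeo G f u0 hG1 hG2 hG3 (fun x => (fun _ => 1, Ψ x)) (by fun_prop) a ?_ Z ?_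
  · simp [f, hu0, hmatch]
  · rw [hZ]
    ext p
    simp only [Set.mem_setOf_eq, f, Prod.mk.injEq, funext_iff]
    refine and_congr_left fun _ => forall_congr' fun l => ?_
    have h0 := norm_nonneg (p.2 l)
    constructor
    · intro h; rw [h]; norm_num
    · intro h; nlinarith
end

section
/- Let d ≥ 2 and let X₀ be a topological space with a point z₀ having an open neighborhood homeomorphic to O × ℝ^{e₀}, where O is an open neighborhood of the origin in the quadratic cone Q_{p,q} = {(x, y) ∈ ℝ^p × ℝ^q : ‖x‖² = ‖y‖²} (p, q ≥ 1), the homeomorphism taking z₀ to (0, 0). Inductively, for n = 0, …, M − 1, let Ψ_n : X_n → EuclideanSpace ℝ (Fin d) be continuous, let φ_n be the work map of an open k_n-chain with positive lengths, let u^n ∈ (S^{d-1})^{k_n} be non-aligned with φ_n(u^n) = Ψ_n(z_n), and set X_{n+1} = {(x, u) ∈ X_n × (S^{d-1})^{k_n} : Ψ_n(x) = φ_n(u)} and z_{n+1} = (z_n, u^n). Then z_M has an open neighborhood in X_M homeomorphic to O' × ℝ^E, where O' is an open neighborhood of the origin in the same quadratic cone Q_{p,q} and E = e₀ + ∑_{n=0}^{M−1}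 (k_n(d−1) − d), the homeomorphism taking z_M to (0, 0). -/
open scoped BigOperators

/-- The quadratic cone `Q_{p,q} = {(x, y) : ‖x‖² = ‖y‖²}`. -/
def quadCone (p q : ℕ) :
    Set (EuclideanSpace ℝ (Fin p) × EuclideanSpace ℝ (Fin q)) :=
  {z | ‖z.1‖ ^ 2 = ‖z.2‖ ^ 2}

open Topology

def LocCone (p q e : ℕ) (X : Type) [TopologicalSpace X] (z : X) : Prop :=
  ∃ f : OpenPartialHomeomorph X (↥(quadCone p q) × EuclideanSpace ℝ (Fin e)),
    z ∈ f.source ∧ ((f z).1 : EuclideanSpace ℝ (Fin p) × EuclideanSpace ℝ (Fin q)) = 0 ∧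
      (f z).2 = 0

theorem LocCone.of_base {p q e : ℕ} {X : Type} [TopologicalSpace X] {z : X}
    (O : Set (EuclideanSpace ℝ (Fin p) × EuclideanSpace ℝ (Fin q)))
    (hOQ : O ⊆ quadCone p q) (hOrel : ∃ O₁, IsOpen O₁ ∧ O = O₁ ∩ quadCone p q)
    (hO0 : (0 : EuclideanSpace ℝ (Fin p) × EuclideanSpace ℝ (Fin q)) ∈ O)
    (base : ∃ Nb0 : Set X, IsOpen Nb0 ∧
      ∃ (hz0 : z ∈ Nb0) (h0 : ↥Nb0 ≃ₜ ↥O × EuclideanSpace ℝ (Fin e)),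
        h0 ⟨z, hz0⟩ = (⟨0, hO0⟩, 0)) : LocCone p q e X z := by
  obtain ⟨N, hN, hz, h0, h⟩ := base
  obtain ⟨O₁, hO₁, hO⟩ := hOrel
  have hinc : IsOpenEmbedding (Set.inclusion hOQ) := by
    apply Topology.IsOpenEmbedding.inclusion
    have : (Subtype.val ⁻¹' O : Set (quadCone p q)) = Subtype.val ⁻¹' O₁ := by
      ext x; simp [hO]
    rw [this]
    exact hO₁.preimage continuous_subtype_val
  have h2 : IsOpenEmbedding (fun x : N => Prod.map (Set.inclusion hOQ) (id : EuclideanSpace ℝ (Fin e) → _) (h0 x)) :=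
    (hinc.prodMap IsOpenEmbedding.id).comp h0.isOpenEmbedding
  have : Nonempty N := ⟨⟨z, hz⟩⟩
  have h1 : IsOpenEmbedding (Subtype.val : N → X) := hN.isOpenEmbedding_subtypeVal
  have hs : (h1.toOpenPartialHomeomorph).symm z = ⟨z, hz⟩ :=
    (h1.toOpenPartialHomeomorph).left_inv (x := ⟨z, hz⟩) (by simp)
  refine ⟨(h1.toOpenPartialHomeomorph).symm.trans (h2.toOpenPartialHomeomorph), ?_, ?_, ?_⟩
  · simp [hz]
  · simp [hs, h]
  · simp [hs, h]

theorem LocCone.to_concl {p q e : ℕ} {X : Type} [TopologicalSpace X] {z : X}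
    (H : LocCone p q e X z) :
    ∃ Nb : Set X, IsOpen Nb ∧
    ∃ O' : Set (EuclideanSpace ℝ (Fin p) × EuclideanSpace ℝ (Fin q)),
      O' ⊆ quadCone p q ∧ (∃ O₁, IsOpen O₁ ∧ O' = O₁ ∩ quadCone p q) ∧
    ∃ (hO'0 : (0 : EuclideanSpace ℝ (Fin p) × EuclideanSpace ℝ (Fin q)) ∈ O')
      (hzM : z ∈ Nb)
      (h : ↥Nb ≃ₜ ↥O' × EuclideanSpace ℝ (Fin e)),
      h ⟨z, hzM⟩ = (⟨0, hO'0⟩, 0) := by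
  obtain ⟨f, hz, h1, h2⟩ := H
  have hn : f.target ∈ 𝓝 ((f z).1, (f z).2) := f.open_target.mem_nhds (f.map_source hz)
  rw [h2, mem_nhds_prod_iff] at hn
  obtain ⟨V', hV', W, hW, hsub⟩ := hn
  obtain ⟨V, hVV', hV, hzV⟩ := mem_nhds_iff.1 hV'
  obtain ⟨r, hr, hball⟩ := Metric.mem_nhds_iff.1 hW
  let b := OpenPartialHomeomorph.univBall (0 : EuclideanSpace ℝ (Fin e)) r
  let g := (OpenPartialHomeomorph.ofSet V hV).prod b.symm
  let F := f.trans g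
  have hbt : b.target = Metric.ball 0 r := OpenPartialHomeomorph.univBall_target _ hr
  have hbs : b.source = Set.univ := OpenPartialHomeomorph.univBall_source _ _
  have hFt : F.target = V ×ˢ Set.univ := by
    ext ⟨x, y⟩
    simp only [F, g, OpenPartialHomeomorph.trans_target, OpenPartialHomeomorph.prod_target,
      OpenPartialHomeomorph.ofSet_target, OpenPartialHomeomorph.symm_target, hbs]
    constructor
    · exact fun h => h.1
    · intro h
      refine ⟨h, hsub ⟨hVV' h.1, hball ?_⟩⟩
      rw [← hbt]
      exact b.map_source (by simp [hbs])
  have hFz : z ∈ F.source := by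
    simp only [F, g, OpenPartialHomeomorph.trans_source, OpenPartialHomeomorph.prod_source,
      OpenPartialHomeomorph.ofSet_source, OpenPartialHomeomorph.symm_source, hbt]
    exact ⟨hz, hzV, by simp [h2, hr]⟩
  have hFz1 : (F z).1 = (f z).1 := rfl
  have hFz2 : (F z).2 = 0 := by
    change b.symm (f z).2 = 0
    rw [h2]
    exact OpenPartialHomeomorph.univBall_symm_apply_center _ _
  let emb : IsEmbedding (Subtype.val : quadCone p q → _) := IsEmbedding.subtypeVal
  obtain ⟨V₁, hV₁, hVeq⟩ := isOpen_induced_iff.1 hV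
  refine ⟨F.source, F.open_source, Subtype.val '' V, ?_, ⟨V₁, hV₁, ?_⟩, ⟨_, hzV, h1⟩, hFz,
    F.toHomeomorphSourceTarget.trans ((Homeomorph.setCongr hFt).trans
      ((Homeomorph.Set.prod V Set.univ).trans
        ((emb.homeomorphImage V).prodCongr (Homeomorph.Set.univ _)))), ?_⟩
  · rintro _ ⟨x, -, rfl⟩; exact x.2
  · rw [← hVeq]; rw [Subtype.image_preimage_coe, Set.inter_comm]
  · refine Prod.ext (Subtype.ext ?_) ?_
    · exact h1
    · exact hFz2

theorem LocCone.prod {p q e m e' : ℕ} {X Y K : Type} [TopologicalSpace X] [TopologicalSpace Y]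
    [NormedAddCommGroup K] [NormedSpace ℝ K] [FiniteDimensional ℝ K]
    (hK : Module.finrank ℝ K = m) (he : e + m = e')
    {z : X} {y : Y}
    (H : LocCone p q e X z) (G : OpenPartialHomeomorph Y (X × K)) (hy : y ∈ G.source)
    (hG : G y = (z, 0)) : LocCone p q e' Y y := by
  obtain ⟨f, hz, h1, h2⟩ := H
  let L : (EuclideanSpace ℝ (Fin e) × K) ≃L[ℝ] EuclideanSpace ℝ (Fin e') :=
    ContinuousLinearEquiv.ofFinrankEq (by simp [hK, he])
  let A := (f.prod (OpenPartialHomeomorph.refl K)).trans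
    (((Homeomorph.prodAssoc (quadCone p q) (EuclideanSpace ℝ (Fin e)) K).trans
      ((Homeomorph.refl _).prodCongr L.toHomeomorph)).toOpenPartialHomeomorph)
  have hA1 : (A (z, 0)).1 = (f z).1 := rfl
  have hA2 : (A (z, 0)).2 = L ((f z).2, 0) := rfl
  refine ⟨G.trans A, ?_, ?_, ?_⟩
  · simp [A, hy, hG, hz]
  · rw [OpenPartialHomeomorph.coe_trans, Function.comp, hG, hA1, h1]
  · rw [OpenPartialHomeomorph.coe_trans, Function.comp, hG, hA2, h2]
    exact map_zero L

section chain
variable {d k : ℕ}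

noncomputable def chainF (lam : Fin k → ℝ) (v : Fin k → EuclideanSpace ℝ (Fin d)) :
    EuclideanSpace ℝ (Fin d) × (Fin k → ℝ) :=
  (∑ i, lam i • v i, fun i => ‖v i‖ ^ 2)

noncomputable def chainF' (lam : Fin k → ℝ) (u : Fin k → EuclideanSpace ℝ (Fin d)) :
    (Fin k → EuclideanSpace ℝ (Fin d)) →L[ℝ] EuclideanSpace ℝ (Fin d) × (Fin k → ℝ) :=
  (∑ i, lam i • ContinuousLinearMap.proj (R := ℝ) (φ := fun _ : Fin k => EuclideanSpace ℝ (Fin d)) i).prod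
    (ContinuousLinearMap.pi fun i => 2 • (innerSL ℝ (u i)).comp
      (ContinuousLinearMap.proj (R := ℝ) (φ := fun _ : Fin k => EuclideanSpace ℝ (Fin d)) i))

theorem chainF_strict (lam : Fin k → ℝ) (u : Fin k → EuclideanSpace ℝ (Fin d)) :
    HasStrictFDerivAt (chainF lam) (chainF' lam u) u := by
  unfold chainF chainF'
  refine HasStrictFDerivAt.prodMk ?_ ?_
  · refine HasStrictFDerivAt.fun_sum fun i _ => ?_
    exact ((ContinuousLinearMap.proj (R := ℝ) (φ := fun _ : Fin k => EuclideanSpace ℝ (Fin d)) i).hasStrictFDerivAt).const_smul (lam i)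
  · refine hasStrictFDerivAt_pi.2 fun i => ?_
    exact (hasStrictFDerivAt_norm_sq (u i)).comp u (ContinuousLinearMap.proj (R := ℝ) (φ := fun _ : Fin k => EuclideanSpace ℝ (Fin d)) i).hasStrictFDerivAt

theorem chainF'_range (hk : 1 ≤ k) (lam : Fin k → ℝ) (hlam : ∀ i, 0 < lam i)
    (u : Fin k → EuclideanSpace ℝ (Fin d)) (hu : ∀ i, ‖u i‖ = 1)
    (hna : ¬ ∃ w : EuclideanSpace ℝ (Fin d), ‖w‖ = 1 ∧ ∀ i, u i = w ∨ u i = -w) :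
    (chainF' lam u).range = ⊤ := by
  by_contra hne
  obtain ⟨f, hf0, hf⟩ := Submodule.exists_le_ker_of_lt_top _ (lt_top_iff_ne_top.2 hne)
  let fa : EuclideanSpace ℝ (Fin d) →ₗ[ℝ] ℝ := f.comp (LinearMap.inl ℝ _ _)
  let a := (InnerProductSpace.toDual ℝ (EuclideanSpace ℝ (Fin d))).symm fa.toContinuousLinearMap
  have ha : ∀ x, f (x, 0) = inner ℝ a x := by
    intro x
    simp [a, fa]
  let b : Fin k → ℝ := fun i => f (0, Pi.single i 1)
  have hb : ∀ i (c : ℝ), f (0, Pi.single i c) = c * b i := by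
    intro i c
    rw [← smul_eq_mul, ← map_smul]
    congr 1
    ext j
    · simp
    · by_cases h : j = i
      · subst h; simp
      · simp [h]
  have key : ∀ i, lam i • a + (2 * b i) • u i = 0 := by
    intro i
    refine ext_inner_right ℝ fun x => ?_
    have h1 : f (chainF' lam u (Pi.single i x)) = 0 := hf ⟨_, rfl⟩
    have h2 : chainF' lam u (Pi.single i x) =
        (lam i • x, 0) + (0, Pi.single i (2 * inner ℝ (u i) x)) := by
      refine Prod.ext ?_ ?_
      · simp only [chainF', ContinuousLinearMap.prod_apply, sum_apply,
          smul_apply, ContinuousLinearMap.proj_apply, Prod.fst_add, add_zero]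
        rw [Finset.sum_eq_single i]
        · simp
        · intro j _ hj; simp [hj]
        · simp
      · funext j
        by_cases h : j = i
        · subst h; simp [chainF']
        · simp [chainF', h]
    rw [h2, map_add, ha, hb, inner_smul_right] at h1
    rw [inner_add_left, inner_smul_left, inner_smul_left, inner_zero_left]
    simp only [conj_trivial]
    linarith
  by_cases ha0 : a = 0
  · have hb0 : ∀ i, b i = 0 := by
      intro i
      have := key i
      rw [ha0, smul_zero, zero_add, smul_eq_zero] at this
      rcases this with h | h
      · linarith
      · have := hu i; rw [h] at this; simp at this
    apply hf0
    refine LinearMap.ext fun ⟨x, y⟩ => ?_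
    have h3 : ((x, y) : EuclideanSpace ℝ (Fin d) × (Fin k → ℝ)) =
        (x, 0) + ∑ i, (0, Pi.single i (y i)) := by
      refine Prod.ext ?_ ?_
      · simp [Prod.fst_sum]
      · simp [Prod.snd_sum, Finset.univ_sum_single]
    rw [h3, map_add, map_sum, ha, ha0]
    simp [hb, hb0]
  · apply hna
    have hna' : ‖a‖ ≠ 0 := norm_ne_zero_iff.2 ha0
    refine ⟨‖a‖⁻¹ • a, by rw [norm_smul, norm_inv, norm_norm, inv_mul_cancel₀ hna'], fun i => ?_⟩
    have hl := hlam i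
    have h := key i
    have hbi : b i ≠ 0 := by
      intro hb0
      rw [hb0] at h
      simp [ha0, hl.ne'] at h
    have hui : u i = (-(lam i / (2 * b i)) * ‖a‖) • (‖a‖⁻¹ • a) := by
      rw [smul_smul, mul_assoc, mul_inv_cancel₀ hna', mul_one, neg_smul]
      rw [eq_neg_iff_add_eq_zero]
      have := congrArg (fun t => (2 * b i)⁻¹ • t) h
      simp only [smul_add, smul_smul, smul_zero] at this
      rw [inv_mul_cancel₀ (by simpa using hbi), one_smul] at this
      rw [← this, add_comm, div_eq_inv_mul]
    have hc := hu i
    rw [hui, norm_smul, norm_smul, norm_inv, norm_norm, inv_mul_cancel₀ hna', mul_one,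
      Real.norm_eq_abs] at hc
    rcases (abs_eq zero_le_one).1 hc with h | h
    · left; rw [hui, h, one_smul]
    · right; rw [hui, h, neg_one_smul]

theorem chain_step {p q e : ℕ} {X : Type} [TopologicalSpace X] {z : X} (hd : 2 ≤ d)
    (hk : 1 ≤ k) (lam : Fin k → ℝ) (hlam : ∀ i, 0 < lam i)
    (Ψ : X → EuclideanSpace ℝ (Fin d)) (hΨ : Continuous Ψ)
    (u : Fin k → EuclideanSpace ℝ (Fin d)) (hu : ∀ i, ‖u i‖ = 1)
    (hna : ¬ ∃ w : EuclideanSpace ℝ (Fin d), ‖w‖ = 1 ∧ ∀ i, u i = w ∨ u i = -w)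
    (y : {p : X × (Fin k → EuclideanSpace ℝ (Fin d)) //
        (∀ i, ‖p.2 i‖ = 1) ∧ Ψ p.1 = ∑ i, lam i • p.2 i}) (hy : y.val = (z, u))
    (H : LocCone p q e X z) :
    LocCone p q (e + (k * (d - 1) - d)) _ y := by
  have hs := chainF_strict lam u
  have hr := chainF'_range hk lam hlam u hu hna
  have hdim : Module.finrank ℝ (chainF' lam u).ker = k * (d - 1) - d := by
    have h1 := LinearMap.finrank_range_add_finrank_ker (chainF' lam u).toLinearMap
    have h2 : Module.finrank ℝ (chainF' lam u).range = d + k := by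
      rw [hr]; simp
    have h3 : Module.finrank ℝ (Fin k → EuclideanSpace ℝ (Fin d)) = k * d := by
      simp [Module.finrank_pi_fintype]
    rw [h3] at h1
    have h4 : k * d = k * (d - 1) + k := by
      obtain ⟨t, rfl⟩ : ∃ t, d = t + 1 := ⟨d - 1, by omega⟩
      simp [mul_add]
    have h1' : Module.finrank ℝ (chainF' lam u).range + Module.finrank ℝ (chainF' lam u).ker = k * d := h1
    omega
  let G := hs.implicitToOpenPartialHomeomorph _ _ hr
  have hG1 : ∀ v, (G v).1 = chainF lam v := fun v => rfl
  have hGu : G u = (chainF lam u, 0) := hs.implicitToOpenPartialHomeomorph_self hr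
  have huG : u ∈ G.source := hs.mem_implicitToOpenPartialHomeomorph_source hr
  have hmem : ∀ (x : X) (v : Fin k → EuclideanSpace ℝ (Fin d)),
      ((∀ i, ‖v i‖ = 1) ∧ Ψ x = ∑ i, lam i • v i) ↔ chainF lam v = (Ψ x, fun _ => 1) := by
    intro x v
    constructor
    · rintro ⟨h1, h2⟩
      simp [chainF, h1, h2]
    · intro h
      have h1 := congrArg Prod.fst h
      have h2 := congrArg Prod.snd h
      refine ⟨fun i => ?_, h1.symm⟩
      have := congrFun h2 i
      simp only [chainF] at this
      exact (pow_eq_one_iff_of_nonneg (norm_nonneg _) two_ne_zero).1 this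
  let j : X × (chainF' lam u).ker → (EuclideanSpace ℝ (Fin d) × (Fin k → ℝ)) × (chainF' lam u).ker :=
    fun a => ((Ψ a.1, fun _ => 1), a.2)
  have hj : Continuous j := by fun_prop
  have hval : ∀ a, j a ∈ G.target → chainF lam (G.symm (j a)) = (Ψ a.1, fun _ => 1) := by
    intro a ha
    rw [← hG1, G.right_inv ha]
  have hjG : ∀ w : {p : X × (Fin k → EuclideanSpace ℝ (Fin d)) //
        (∀ i, ‖p.2 i‖ = 1) ∧ Ψ p.1 = ∑ i, lam i • p.2 i},
        j (w.val.1, (G w.val.2).2) = G w.val.2 := by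
    intro w
    refine Prod.ext ?_ rfl
    rw [hG1, (hmem _ _).1 w.2]
  classical
  let P : OpenPartialHomeomorph {p : X × (Fin k → EuclideanSpace ℝ (Fin d)) //
        (∀ i, ‖p.2 i‖ = 1) ∧ Ψ p.1 = ∑ i, lam i • p.2 i} (X × (chainF' lam u).ker) :=
    { toFun := fun w => (w.val.1, (G w.val.2).2)
      invFun := fun a => if h : j a ∈ G.target then
        ⟨(a.1, G.symm (j a)), (hmem _ _).2 (hval a h)⟩ else y
      source := {w | w.val.2 ∈ G.source}
      target := j ⁻¹' G.target
      map_source' := by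
        intro w hw
        change j (w.val.1, (G w.val.2).2) ∈ G.target
        rw [hjG]
        exact G.map_source hw
      map_target' := by
        intro a ha
        have ha' : j a ∈ G.target := ha
        simp only [dif_pos ha']
        exact G.map_target ha'
      left_inv' := by
        intro w hw
        have h : j (w.val.1, (G w.val.2).2) ∈ G.target := by
          rw [hjG]; exact G.map_source hw
        simp only [dif_pos h]
        apply Subtype.ext
        refine Prod.ext rfl ?_
        simp only [hjG]
        exact G.left_inv hw
      right_inv' := by
        intro a ha
        have ha' : j a ∈ G.target := ha
        simp only [dif_pos ha']
        refine Prod.ext rfl ?_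
        simp only [G.right_inv ha']
        rfl
      open_source := G.open_source.preimage (continuous_snd.comp continuous_subtype_val)
      open_target := G.open_target.preimage hj
      continuousOn_toFun := by
        refine ContinuousOn.prodMk (by fun_prop) ?_
        exact continuous_snd.comp_continuousOn (G.continuousOn.comp
          (continuous_snd.comp continuous_subtype_val).continuousOn (fun w hw => hw))
      continuousOn_invFun := by
        refine (Topology.IsInducing.subtypeVal).continuousOn_iff.2 ?_
        have : ContinuousOn (fun a : X × (chainF' lam u).ker => (a.1, G.symm (j a)))
            (j ⁻¹' G.target) :=
          continuous_fst.continuousOn.prodMk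
            (G.continuousOn_symm.comp hj.continuousOn (fun a ha => ha))
        refine this.congr fun a ha => ?_
        have ha' : j a ∈ G.target := ha
        simp only [Function.comp, dif_pos ha'] }
  refine LocCone.prod hdim rfl H P ?_ ?_
  · change y.val.2 ∈ G.source
    rw [hy]; exact huG
  · change (y.val.1, (G y.val.2).2) = (z, 0)
    rw [hy, hGu]

end chain

theorem stmt_12 (d : ℕ) (hd : 2 ≤ d) (M : ℕ)
    -- the tower of spaces and base points
    (X : ℕ → Type) (tX : ∀ n, TopologicalSpace (X n)) (z : ∀ n, X n)
    -- the open chains attached at each stage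
    (k : ℕ → ℕ) (hk : ∀ n, n < M → 1 ≤ k n)
    (lam : ∀ n, Fin (k n) → ℝ) (hlam : ∀ n, n < M → ∀ i, 0 < lam n i)
    (Ψ : ∀ n, X n → EuclideanSpace ℝ (Fin d))
    (hΨ : ∀ n, n < M → Continuous (Ψ n))
    (u : ∀ n, Fin (k n) → EuclideanSpace ℝ (Fin d))
    (hu : ∀ n, n < M → ∀ i, ‖u n i‖ = 1)
    (hna : ∀ n, n < M → ¬ ∃ w : EuclideanSpace ℝ (Fin d), ‖w‖ = 1 ∧
      ∀ i, u n i = w ∨ u n i = -w)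
    (hmatch : ∀ n, n < M → ∑ i, lam n i • u n i = Ψ n (z n))
    -- `X (n+1)` is the fiber product of `X n` with the `n`-th open chain
    (step : ∀ n, n < M →
      (X (n + 1) ≃ₜ {p : X n × (Fin (k n) → EuclideanSpace ℝ (Fin d)) //
        (∀ i, ‖p.2 i‖ = 1) ∧ Ψ n p.1 = ∑ i, lam n i • p.2 i}))
    (hstep : ∀ n (hn : n < M), ((step n hn) (z (n + 1))).val = (z n, u n))
    -- the base point of `X 0` is locally a quadratic cone times a Euclidean space
    (p q e₀ : ℕ) (hp : 1 ≤ p) (hq : 1 ≤ q)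
    (O : Set (EuclideanSpace ℝ (Fin p) × EuclideanSpace ℝ (Fin q)))
    (hOQ : O ⊆ quadCone p q) (hOrel : ∃ O₁, IsOpen O₁ ∧ O = O₁ ∩ quadCone p q)
    (hO0 : (0 : EuclideanSpace ℝ (Fin p) × EuclideanSpace ℝ (Fin q)) ∈ O)
    (base : ∃ Nb0 : Set (X 0), IsOpen Nb0 ∧
      ∃ (hz0 : z 0 ∈ Nb0) (h0 : ↥Nb0 ≃ₜ ↥O × EuclideanSpace ℝ (Fin e₀)),
        h0 ⟨z 0, hz0⟩ = (⟨0, hO0⟩, 0)) :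
    ∃ Nb : Set (X M), IsOpen Nb ∧
    ∃ O' : Set (EuclideanSpace ℝ (Fin p) × EuclideanSpace ℝ (Fin q)),
      O' ⊆ quadCone p q ∧ (∃ O₁, IsOpen O₁ ∧ O' = O₁ ∩ quadCone p q) ∧
    ∃ (hO'0 : (0 : EuclideanSpace ℝ (Fin p) × EuclideanSpace ℝ (Fin q)) ∈ O')
      (hzM : z M ∈ Nb)
      (h : ↥Nb ≃ₜ ↥O' × EuclideanSpace ℝ
        (Fin (e₀ + ∑ n ∈ Finset.range M, (k n * (d - 1) - d)))),
      h ⟨z M, hzM⟩ = (⟨0, hO'0⟩, 0) := by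
  have main : ∀ n, n ≤ M →
      LocCone p q (e₀ + ∑ i ∈ Finset.range n, (k i * (d - 1) - d)) (X n) (z n) := by
    intro n
    induction n with
    | zero =>
      intro _
      simpa using LocCone.of_base O hOQ hOrel hO0 base
    | succ n ih =>
      intro hn
      have hn' : n < M := hn
      have h1 := chain_step hd (hk n hn') (lam n) (hlam n hn') (Ψ n) (hΨ n hn') (u n) (hu n hn')
        (hna n hn') (step n hn' (z (n + 1))) (hstep n hn') (ih hn'.le)
      rw [Finset.sum_range_succ, ← add_assoc]
      obtain ⟨f, a, b, c⟩ := h1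
      refine ⟨(step n hn').toOpenPartialHomeomorph.trans f, ?_, ?_, ?_⟩
      · simpa using a
      · simpa using b
      · simpa using c
  exact (main M le_rfl).to_concl
end
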